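/- arXiv:2601.16676 — 7 statements merged into one kernel-verified Lean document; each statement's English description precedes it below -/
import Mathlib

section
/- Let P be an m×m skew-symmetric matrix polynomial over ℂ. Then there exist a natural number r with 2r ≤ m, a unimodular m×m matrix polynomial F (i.e., det F is a nonzero constant), and monic polynomials g₁, …, g_r ∈ ℂ[λ] with gⱼ dividing gⱼ₊₁ for j = 1, …, r−1, such that Fᵀ P F equals the block-diagonal matrix polynomial whose first r diagonal blocks are the 2×2 blocks [[0, gⱼ], [−gⱼ, 0]] (j = 1, …, r) and whose last diagonal block is the (m−2r)×(m−2r) zero matrix. -/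
open Polynomial Matrix

/-- The skew-symmetric Smith canonical form: block diagonal matrix with `r` diagonal
2×2 blocks `[[0, gⱼ], [−gⱼ, 0]]` followed by an `(m − 2r) × (m − 2r)` zero block. -/
noncomputable def skewSmithForm (m r : ℕ) (g : Fin r → Polynomial ℂ) :
    Matrix (Fin m) (Fin m) (Polynomial ℂ) := fun i j =>
  let ge : ℕ → Polynomial ℂ := fun k => if h : k < r then g ⟨k, h⟩ else 0
  if (i : ℕ) % 2 = 0 ∧ (j : ℕ) = (i : ℕ) + 1 then ge ((i : ℕ) / 2)
  else if (j : ℕ) % 2 = 0 ∧ (i : ℕ) = (j : ℕ) + 1 then -ge ((j : ℕ) / 2)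
  else 0

/-- Extending a basis of the orthogonal complement of a hyperbolic-like pair. -/
theorem skewAux_extend {M : Type} [AddCommGroup M] [Module ℂ[X] M]
    (B : M →ₗ[ℂ[X]] M →ₗ[ℂ[X]] ℂ[X]) (hB : ∀ x y, B x y = - B y x)
    (x y : M) (hd : B x y ≠ 0) (hx : ∀ z, B x y ∣ B x z) (hy : ∀ z, B x y ∣ B y z)
    (N : Submodule ℂ[X] M) (hN : ∀ z, z ∈ N ↔ B x z = 0 ∧ B y z = 0)
    (k : ℕ) (c : Module.Basis (Fin k) ℂ[X] N) :
    ∃ b : Module.Basis (Fin (k + 2)) ℂ[X] M, b 0 = x ∧ b 1 = y ∧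
      ∀ i : Fin k, b i.succ.succ = (c i : M) := by
  have hself : ∀ x, B x x = 0 := fun x => self_eq_neg.mp (hB x x)
  have hyx : B y x = - B x y := hB y x
  let w : Fin k → M := fun i => (c i : M)
  have hspan : Submodule.span ℂ[X] (Set.range w) = N := by
    have h1 : Set.range w = N.subtype '' Set.range c := by
      rw [← Set.range_comp]; rfl
    rw [h1, Submodule.span_image, c.span_eq, Submodule.map_top, Submodule.range_subtype]
  have hw : LinearIndependent ℂ[X] w :=
    c.linearIndependent.map' N.subtype (Submodule.ker_subtype N)
  have h1 : LinearIndependent ℂ[X] (Fin.cons y w : Fin (k+1) → M) := by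
    refine LinearIndependent.finCons' y w hw ?_
    rintro a z hz h
    have hzN := (hN _).1 (hspan ▸ hz)
    have := congrArg (B x) h
    simpa [hzN.1, hd] using this
  have h2 : LinearIndependent ℂ[X] (Fin.cons x (Fin.cons y w) : Fin (k+2) → M) := by
    refine LinearIndependent.finCons' x _ h1 ?_
    rintro a z hz h
    rw [Fin.range_cons, Submodule.mem_span_insert] at hz
    obtain ⟨e, z', hz', rfl⟩ := hz
    have hzN := (hN _).1 (hspan ▸ hz')
    have := congrArg (B y) h
    simpa [hzN.2, hself, hyx, hd] using this
  have h3 : ⊤ ≤ Submodule.span ℂ[X] (Set.range (Fin.cons x (Fin.cons y w) : Fin (k+2) → M)) := by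
    intro z _
    rw [Fin.range_cons, Fin.range_cons, Submodule.mem_span_insert]
    obtain ⟨p, hp⟩ := hx z
    obtain ⟨q, hq⟩ := hy z
    refine ⟨-q, z + q • x, ?_, by simp⟩
    rw [Submodule.mem_span_insert]
    refine ⟨p, z + q • x - p • y, ?_, by simp⟩
    rw [hspan, hN]
    constructor
    · simp [hself, hp, mul_comm]
    · simp [hself, hq, hyx, mul_comm]
  refine ⟨Module.Basis.mk h2 h3, ?_, ?_, ?_⟩
  · simp
  · rw [Module.Basis.mk_apply]; rfl
  · intro i; rw [Module.Basis.mk_apply]; rfl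

/-- Existence of a pair with minimal monic value dividing all values. -/
theorem skewAux_pair {M : Type} [AddCommGroup M] [Module ℂ[X] M]
    (B : M →ₗ[ℂ[X]] M →ₗ[ℂ[X]] ℂ[X]) (hB : ∀ x y, B x y = - B y x)
    (hne : ∃ x y, B x y ≠ 0) :
    ∃ x y, (B x y).Monic ∧ ∀ z w, B x y ∣ B z w := by
  classical
  have hself : ∀ x, B x x = 0 := fun x => self_eq_neg.mp (hB x x)
  have hex : ∃ n : ℕ, ∃ x y, B x y ≠ 0 ∧ (B x y).natDegree = n := by
    obtain ⟨x, y, h⟩ := hne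
    exact ⟨_, x, y, h, rfl⟩
  obtain ⟨x, y0, h0, hdeg0⟩ := Nat.find_spec hex
  have hmin0 : ∀ z w, B z w ≠ 0 → (B x y0).natDegree ≤ (B z w).natDegree := by
    intro z w h
    rw [hdeg0]
    exact Nat.find_min' hex ⟨z, w, h, rfl⟩
  obtain ⟨y, hmon, hdeg⟩ : ∃ y, (B x y).Monic ∧ (B x y).natDegree = (B x y0).natDegree := by
    have hlc : (B x y0).leadingCoeff⁻¹ ≠ 0 := inv_ne_zero (leadingCoeff_ne_zero.2 h0)
    refine ⟨C ((B x y0).leadingCoeff⁻¹) • y0, ?_, ?_⟩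
    · rw [map_smul, smul_eq_mul, mul_comm]
      exact monic_mul_leadingCoeff_inv h0
    · rw [map_smul, smul_eq_mul, natDegree_C_mul hlc]
  have key : ∀ z w q, (B z w - B x y * q = 0) ∨
      (B x y).natDegree ≤ (B z w - B x y * q).natDegree ∨
      ∀ u v, B u v ≠ B z w - B x y * q := by
    intro z w q
    by_cases h : B z w - B x y * q = 0
    · exact Or.inl h
    · right
      by_cases h' : ∃ u v, B u v = B z w - B x y * q
      · obtain ⟨u, v, e⟩ := h'
        left
        rw [hdeg, ← e]
        exact hmin0 u v (e ▸ h)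
      · right; push Not at h'; exact h'
  have div : ∀ z w, (∀ q, ∃ u v, B u v = B z w - B x y * q) → B x y ∣ B z w := by
    intro z w h
    rw [← modByMonic_eq_zero_iff_dvd hmon]
    have e : B z w %ₘ B x y = B z w - B x y * (B z w /ₘ B x y) :=
      modByMonic_eq_sub_mul_div _ _
    by_contra hc
    have h1 : B x y ≠ 1 := by
      intro h1; rw [h1, modByMonic_one] at hc; exact hc rfl
    have hlt := natDegree_modByMonic_lt (B z w) hmon h1
    obtain ⟨u, v, huv⟩ := h (B z w /ₘ B x y)
    rw [← e] at huv
    have := hmin0 u v (huv ▸ hc)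
    rw [huv] at this
    omega
  have hx : ∀ z, B x y ∣ B x z := fun z =>
    div x z fun q => ⟨x, z - q • y, by simp [mul_comm]⟩
  have hy' : ∀ z, B x y ∣ B z y := fun z =>
    div z y fun q => ⟨z - q • x, y, by simp [mul_comm]⟩
  have hyx : B y x = - B x y := hB y x
  have hdec : ∀ z, ∃ p q : ℂ[X], ∃ z', z = p • x + q • y + z' ∧ B x z' = 0 ∧ B y z' = 0 := by
    intro z
    obtain ⟨p, hp⟩ := hx z
    obtain ⟨q, hq⟩ := hy' z
    have hq' : B y z = -(B x y * q) := by rw [hB, hq]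
    refine ⟨q, p, z - q • x - p • y, by abel, ?_, ?_⟩
    · simp [hself, hp, mul_comm]
    · simp [hself, hq', hyx, mul_comm]
  refine ⟨x, y, hmon, ?_⟩
  intro z w
  obtain ⟨p, q, z', rfl, hz1, hz2⟩ := hdec z
  obtain ⟨p', q', w', rfl, hw1, hw2⟩ := hdec w
  have hz1' : B z' x = 0 := by rw [hB, hz1, neg_zero]
  have hz2' : B z' y = 0 := by rw [hB, hz2, neg_zero]
  have h := div z' w' fun s => ⟨x + z', w' - s • y, by simp [hw1, hz2', mul_comm]; ring⟩
  have e : B (p • x + q • y + z') (p' • x + q' • y + w')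
      = B x y * (p * q' - q * p') + B z' w' := by
    simp [hself, hyx, hw1, hw2, hz1', hz2']; ring
  rw [e]
  exact dvd_add (dvd_mul_right _ _) h

theorem skewAux_main (n : ℕ) : ∀ (M : Type) [AddCommGroup M] [Module ℂ[X] M]
    [Module.Free ℂ[X] M] [Module.Finite ℂ[X] M]
    (B : M →ₗ[ℂ[X]] M →ₗ[ℂ[X]] ℂ[X]) (_ : ∀ x y, B x y = - B y x)
    (_ : Module.finrank ℂ[X] M = n),
    ∃ (b : Module.Basis (Fin n) ℂ[X] M) (r : ℕ) (_ : 2 * r ≤ n) (g : Fin r → ℂ[X]),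
      (∀ j, (g j).Monic) ∧
      (∀ (j : Fin r) (h : (j : ℕ) + 1 < r), g j ∣ g ⟨(j : ℕ) + 1, h⟩) ∧
      ∀ i j, B (b i) (b j) = skewSmithForm n r g i j := by
  induction n using Nat.strong_induction_on with
  | _ n ih =>
  intro M _ _ _ _ B hB hn
  have hself : ∀ x, B x x = 0 := fun x => self_eq_neg.mp (hB x x)
  by_cases hne : ∃ x y, B x y ≠ 0
  swap
  · push Not at hne
    refine ⟨Module.finBasisOfFinrankEq ℂ[X] M hn, 0, by omega, Fin.elim0, fun j => j.elim0,
      fun j => j.elim0, ?_⟩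
    intro i j
    simp [hne, skewSmithForm]
  obtain ⟨x, y, hmon, hdvd⟩ := skewAux_pair B hB hne
  let N : Submodule ℂ[X] M := LinearMap.ker (B x) ⊓ LinearMap.ker (B y)
  have hN : ∀ z, z ∈ N ↔ B x z = 0 ∧ B y z = 0 := by
    intro z; simp [N]
  have ext := skewAux_extend B hB x y hmon.ne_zero (fun z => hdvd x z) (fun z => hdvd y z) N hN
  obtain ⟨b0, -⟩ := ext _ (Module.finBasis ℂ[X] N)
  have hk : n = Module.finrank ℂ[X] N + 2 := by
    rw [← hn, Module.finrank_eq_card_basis b0, Fintype.card_fin]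
  generalize hk' : Module.finrank ℂ[X] N = k at hk
  subst hk
  obtain ⟨c, r, hr, g, hg, hgd, hform⟩ := ih k (by omega) N (B.domRestrict₁₂ N N)
    (fun u v => hB u v) hk'
  obtain ⟨b, hb0, hb1, hb⟩ := ext k c
  have hgdvd : ∀ j, B x y ∣ g j := by
    intro j
    have h := hform ⟨2 * j, by omega⟩ ⟨2 * j + 1, by omega⟩
    have e : skewSmithForm k r g ⟨2 * j, by omega⟩ ⟨2 * j + 1, by omega⟩ = g j := by
      simp [skewSmithForm]
    rw [← e, ← h]
    exact hdvd _ _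
  have hxc : ∀ i, B x (c i) = 0 := fun i => ((hN _).1 (c i).2).1
  have hyc : ∀ i, B y (c i) = 0 := fun i => ((hN _).1 (c i).2).2
  have hcx : ∀ i, B (c i) x = 0 := fun i => by rw [hB, hxc, neg_zero]
  have hcy : ∀ i, B (c i) y = 0 := fun i => by rw [hB, hyc, neg_zero]
  refine ⟨b, r + 1, by omega, Fin.cons (B x y) g, ?_, ?_, ?_⟩
  · intro j
    refine Fin.cases ?_ (fun j => ?_) j
    · simpa using hmon
    · simpa using hg j
  · intro j
    refine Fin.cases ?_ (fun j => ?_) j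
    · intro h
      have e : (⟨((0 : Fin (r+1)) : ℕ) + 1, h⟩ : Fin (r + 1))
        = Fin.succ ⟨0, by simpa using h⟩ := rfl
      rw [e, Fin.cons_zero, Fin.cons_succ]
      exact hgdvd _
    · intro h
      have h' : (j : ℕ) + 1 < r := by simpa using h
      have e : (⟨(j.succ : ℕ) + 1, h⟩ : Fin (r + 1)) = Fin.succ ⟨(j : ℕ) + 1, h'⟩ := rfl
      rw [e, Fin.cons_succ, Fin.cons_succ]
      exact hgd j h'
  · have cases3 : ∀ i : Fin (k + 2), i = 0 ∨ i = 1 ∨ ∃ l : Fin k, i = l.succ.succ := by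
      intro i
      refine Fin.cases (Or.inl rfl) (fun i => ?_) i
      refine Fin.cases (Or.inr (Or.inl rfl)) (fun i => ?_) i
      exact Or.inr (Or.inr ⟨i, rfl⟩)
    have ge : ∀ q : ℕ, (if h : q + 1 < r + 1 then (Fin.cons (B x y) g : Fin (r+1) → ℂ[X]) ⟨q + 1, h⟩
        else 0) = if h : q < r then g ⟨q, h⟩ else 0 := by
      intro q
      by_cases h : q < r
      · rw [dif_pos h, dif_pos (by omega)]; rfl
      · rw [dif_neg h, dif_neg (by omega)]
    intro i j
    rcases cases3 i with rfl | rfl | ⟨i, rfl⟩ <;> rcases cases3 j with rfl | rfl | ⟨j, rfl⟩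
    · simp [skewSmithForm, hself]
    · rw [hb0, hb1]; simp [skewSmithForm]
    · rw [hb0, hb, hxc]; simp [skewSmithForm]
    · rw [hb0, hb1, hB]; simp [skewSmithForm]
    · simp [skewSmithForm, hself]
    · rw [hb1, hb, hyc]; simp [skewSmithForm]
    · rw [hb0, hb, hcx]; simp [skewSmithForm]
    · rw [hb1, hb, hcy]; simp [skewSmithForm]
    · rw [hb, hb]
      have h := hform i j
      simp only [LinearMap.domRestrict₁₂_apply] at h
      rw [h]
      have e1 : ∀ a : ℕ, (a + 1 + 1) / 2 = a / 2 + 1 := by intro a; omega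
      have e2 : ∀ a : ℕ, (a + 1 + 1) % 2 = a % 2 := by intro a; omega
      simp only [skewSmithForm, Fin.val_succ, e1, e2, ge, Nat.add_right_cancel_iff]

/-- Every skew-symmetric matrix polynomial over ℂ is unimodularly congruent to its
skew-symmetric Smith form. -/
theorem skew_symmetric_smith_form_exists (m : ℕ)
    (P : Matrix (Fin m) (Fin m) (Polynomial ℂ)) (hP : Pᵀ = -P) :
    ∃ (r : ℕ) (_ : 2 * r ≤ m) (F : Matrix (Fin m) (Fin m) (Polynomial ℂ))
      (g : Fin r → Polynomial ℂ),
      (∃ c : ℂ, c ≠ 0 ∧ F.det = Polynomial.C c) ∧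
      (∀ j, (g j).Monic) ∧
      (∀ (j : Fin r) (h : (j : ℕ) + 1 < r), g j ∣ g ⟨(j : ℕ) + 1, h⟩) ∧
      Fᵀ * P * F = skewSmithForm m r g := by
  obtain ⟨b, r, hr, g, hg, hgd, hform⟩ := skewAux_main m (Fin m → ℂ[X])
    (Matrix.toLinearMap₂' ℂ[X] P) (fun x y => by
      rw [Matrix.toLinearMap₂'_apply', Matrix.toLinearMap₂'_apply', Matrix.dotProduct_mulVec,
        ← Matrix.mulVec_transpose, hP, Matrix.neg_mulVec, neg_dotProduct, dotProduct_comm])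
    (by simp)
  let F : Matrix (Fin m) (Fin m) ℂ[X] := (Pi.basisFun ℂ[X] (Fin m)).toMatrix b
  have hF : ∀ i j, F i j = b j i := fun i j => by simp [F, Module.Basis.toMatrix_apply]
  refine ⟨r, hr, F, g, ?_, hg, hgd, ?_⟩
  · have hu : IsUnit F.det := by
      rw [← Matrix.isUnit_iff_isUnit_det]
      exact IsUnit.of_mul_eq_one _ (Module.Basis.toMatrix_mul_toMatrix_flip _ b)
    obtain ⟨c, hc, h⟩ := Polynomial.isUnit_iff.1 hu
    exact ⟨c, hc.ne_zero, h.symm⟩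
  · ext1 i j
    rw [← hform, Matrix.toLinearMap₂'_apply', Matrix.dotProduct_mulVec]
    simp only [Matrix.mul_apply, dotProduct, Matrix.vecMul, Matrix.transpose_apply, hF]
end

section
/- Let P be an m×m skew-symmetric matrix polynomial over ℂ. Suppose F and F' are unimodular m×m matrix polynomials, r and r' are natural numbers with 2r ≤ m and 2r' ≤ m, and g₁ | g₂ | ⋯ | g_r and g'₁ | g'₂ | ⋯ | g'_{r'} are monic polynomials in ℂ[λ], such that Fᵀ P F and F'ᵀ P F' are, respectively, the block-diagonal matrix polynomials with 2×2 diagonal blocks [[0, gⱼ], [−gⱼ, 0]] (resp. [[0, g'ⱼ], [−g'ⱼ, 0]]) followed by a zero block of size m−2r (resp. m−2r'). Then r = r' and gⱼ = g'ⱼ for all j = 1, …, r; that is, the skew-symmetric Smith canonical form of P is unique. -/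
open Polynomial Matrix

lemma ssf_minor_left {R : Type*} [CommRing R] {m n : ℕ} (A S : Matrix (Fin m) (Fin m) R) (d : R)
    (h : ∀ f g : Fin n → Fin m, d ∣ (S.submatrix f g).det) (f g : Fin n → Fin m) :
    d ∣ ((A * S).submatrix f g).det := by
  have e : (A * S).submatrix f g
      = fun i => ∑ j, (A (f i) j) • (fun k => S j (g k)) := by
    ext i k
    simp [Matrix.mul_apply]
  have h2 : ((A * S).submatrix f g).det = Matrix.detRowAlternating ((A * S).submatrix f g) := rfl
  rw [h2, e]
  have h3 := (Matrix.detRowAlternating (n := Fin n) (R := R)).toMultilinearMap.map_sum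
    (fun i j => (A (f i) j) • (fun k => S j (g k)))
  simp only [AlternatingMap.coe_multilinearMap] at h3
  rw [h3]
  refine Finset.dvd_sum fun φ _ => ?_
  have h4 := (Matrix.detRowAlternating (n := Fin n) (R := R)).toMultilinearMap.map_smul_univ
    (fun i => A (f i) (φ i)) (fun i k => S (φ i) (g k))
  simp only [AlternatingMap.coe_multilinearMap] at h4
  rw [h4]
  exact Dvd.dvd.mul_left (h φ g) _

lemma ssf_minor_right {R : Type*} [CommRing R] {m n : ℕ} (A S : Matrix (Fin m) (Fin m) R) (d : R)
    (h : ∀ f g : Fin n → Fin m, d ∣ (S.submatrix f g).det) (f g : Fin n → Fin m) :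
    d ∣ ((S * A).submatrix f g).det := by
  rw [← Matrix.det_transpose, Matrix.transpose_submatrix, Matrix.transpose_mul]
  apply ssf_minor_left
  intro f g
  rw [← Matrix.det_transpose, Matrix.transpose_submatrix, Matrix.transpose_transpose]
  exact h g f

lemma ssf_prod_dvd {R : Type*} [CommRing R] {m n : ℕ} (e : ℕ → R) (he : ∀ i, e i ∣ e (i+1))
    (f : Fin n → Fin m) (hf : Function.Injective f) :
    (∏ i : Fin n, e i) ∣ ∏ i : Fin n, e (f i) := by
  have hmono : ∀ a b, a ≤ b → e a ∣ e b := by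
    intro a b hab
    induction b, hab using Nat.le_induction with
    | base => exact dvd_rfl
    | succ b _ ih => exact ih.trans (he b)
  have hc : (Finset.univ.image f).card = n := by
    rw [Finset.card_image_of_injective _ hf]; simp
  have h1 : ∏ i : Fin n, e (f i) = ∏ x ∈ Finset.univ.image f, e x := by
    rw [Finset.prod_image (fun a _ b _ h => hf h)]
  have h2 : ∏ x ∈ Finset.univ.image f, e x
      = ∏ i : Fin n, e ((Finset.univ.image f).orderEmbOfFin hc i) := by
    conv_lhs => rw [← Finset.image_orderEmbOfFin_univ _ hc]
    rw [Finset.prod_image]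
    intro a _ b _ h
    exact (RelEmbedding.injective _) h
  rw [h1, h2]
  refine Finset.prod_dvd_prod_of_dvd _ _ fun i _ => hmono _ _ ?_
  have key : ∀ k (hk : k < n), k ≤ ((Finset.univ.image f).orderEmbOfFin hc ⟨k, hk⟩ : ℕ) := by
    intro k
    induction k with
    | zero => intro _; exact Nat.zero_le _
    | succ k ih =>
      intro hk
      have h5 := ih (by omega)
      have h6 : (Finset.univ.image f).orderEmbOfFin hc ⟨k, by omega⟩
          < (Finset.univ.image f).orderEmbOfFin hc ⟨k+1, hk⟩ :=
        (OrderEmbedding.strictMono _) (by simp [Fin.lt_def])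
      have h7 := Fin.lt_def.1 h6
      omega
  exact key i i.2

lemma ssf_diag {R : Type*} [CommRing R] {m : ℕ} (e e' : ℕ → R) (he : ∀ i, e i ∣ e (i+1))
    (A C : Matrix (Fin m) (Fin m) R)
    (h : Matrix.diagonal (fun i : Fin m => e' i)
      = A * Matrix.diagonal (fun i : Fin m => e i) * C) (n : ℕ) (hn : n ≤ m) :
    (∏ i ∈ Finset.range n, e i) ∣ ∏ i ∈ Finset.range n, e' i := by
  have h1 : ∀ f g : Fin n → Fin m, (∏ i : Fin n, e i) ∣
      ((Matrix.diagonal (fun i : Fin m => e i)).submatrix f g).det := by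
    intro f g
    by_cases hf : Function.Injective f
    · have : (Matrix.diagonal (fun i : Fin m => e i)).submatrix f g
          = Matrix.diagonal (fun i => e (f i)) *
            (1 : Matrix (Fin m) (Fin m) R).submatrix f g := by
        ext i j
        simp [Matrix.diagonal_mul, Matrix.diagonal_apply, Matrix.one_apply]
      rw [this, Matrix.det_mul, Matrix.det_diagonal]
      exact (ssf_prod_dvd e he f hf).mul_right _
    · simp only [Function.Injective, not_forall] at hf
      obtain ⟨a, b, hab, hne⟩ := hf
      rw [Matrix.det_zero_of_row_eq hne (by ext k; simp [hab])]
      exact dvd_zero _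
  have h2 := ssf_minor_right C _ _ (ssf_minor_left A _ _ h1) (Fin.castLE hn) (Fin.castLE hn)
  rw [← h] at h2
  rw [Matrix.submatrix_diagonal _ _ (Fin.castLE_injective hn), Matrix.det_diagonal] at h2
  simpa [Finset.prod_range] using h2

noncomputable def ssfE (r : ℕ) (g : Fin r → Polynomial ℂ) (i : ℕ) : Polynomial ℂ :=
  if h : i / 2 < r then g ⟨i / 2, h⟩ else 0

lemma ssfE_dvd (r : ℕ) (g : Fin r → Polynomial ℂ)
    (hdiv : ∀ (j : Fin r) (h : (j : ℕ) + 1 < r), g j ∣ g ⟨(j : ℕ) + 1, h⟩) (i : ℕ) :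
    ssfE r g i ∣ ssfE r g (i+1) := by
  unfold ssfE
  by_cases h : (i+1)/2 < r
  · have h' : i / 2 < r := by omega
    rw [dif_pos h, dif_pos h']
    rcases (by omega : (i+1)/2 = i/2 ∨ (i+1)/2 = i/2+1) with h2 | h2
    · simp [h2]
    · have := hdiv ⟨i/2, h'⟩ (by simp; omega)
      simpa [h2] using this
  · rw [dif_neg h]; exact dvd_zero _

lemma ssf_eq1 (m r : ℕ) (g : Fin r → Polynomial ℂ) :
    skewSmithForm m r g = Matrix.diagonal (fun i : Fin m => ssfE r g i) *
      skewSmithForm m r (fun _ => 1) := by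
  ext1 i j
  rw [Matrix.diagonal_mul]
  simp only [skewSmithForm, ssfE]
  by_cases h1 : (i:ℕ) % 2 = 0 ∧ (j:ℕ) = i + 1
  · simp only [if_pos h1]; split_ifs <;> simp
  · simp only [if_neg h1]
    by_cases h2 : (j:ℕ) % 2 = 0 ∧ (i:ℕ) = j + 1
    · simp only [if_pos h2]
      have : (i:ℕ)/2 = j/2 := by omega
      simp only [this]
      split_ifs <;> simp
    · simp only [if_neg h2]; simp

lemma ssf_eq2 (m r : ℕ) (hr : 2 * r ≤ m) (g : Fin r → Polynomial ℂ) :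
    Matrix.diagonal (fun i : Fin m => ssfE r g i) =
      skewSmithForm m r g * (skewSmithForm m r (fun _ => 1))ᵀ := by
  ext1 i k
  rw [Matrix.mul_apply]
  by_cases hi : (i:ℕ)/2 < r
  · have hp : (if (i:ℕ) % 2 = 0 then (i:ℕ)+1 else i-1) < m := by split_ifs <;> omega
    rw [Finset.sum_eq_single (⟨_, hp⟩ : Fin m)]
    · by_cases hik : i = k
      · subst hik
        simp only [Matrix.diagonal_apply_eq, Matrix.transpose_apply, skewSmithForm, ssfE]
        rcases Nat.mod_two_eq_zero_or_one i with h | h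
        · simp [h, hi]
        · have h1 : ((i:ℕ)-1) % 2 = 0 := by omega
          have h2 : (i:ℕ) = i - 1 + 1 := by omega
          have h3 : ((i:ℕ)-1)/2 = i/2 := by omega
          simp [h, h1, ← h2, h3, hi]
      · rw [Matrix.diagonal_apply_ne _ hik]
        have hik' : (i:ℕ) ≠ k := fun h => hik (Fin.ext h)
        symm
        apply mul_eq_zero_of_right
        simp only [Matrix.transpose_apply, skewSmithForm]
        rw [if_neg, if_neg]
        · split_ifs <;> omega
        · split_ifs <;> omega
    · intro j _ hj
      have hj' : (j:ℕ) ≠ if (i:ℕ) % 2 = 0 then (i:ℕ)+1 else i-1 := fun h => hj (Fin.ext h)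
      apply mul_eq_zero_of_left
      simp only [skewSmithForm]
      rw [if_neg, if_neg]
      · split_ifs at hj' <;> omega
      · split_ifs at hj' <;> omega
    · simp
  · rw [Finset.sum_eq_zero]
    · by_cases hik : i = k
      · subst hik; simp [ssfE, hi]
      · rw [Matrix.diagonal_apply_ne _ hik]
    · intro j _
      apply mul_eq_zero_of_left
      rw [ssf_eq1, Matrix.diagonal_mul]
      simp [ssfE, hi]

lemma ssf_half (m : ℕ)
    (P : Matrix (Fin m) (Fin m) (Polynomial ℂ))
    (r r' : ℕ) (hr' : 2 * r' ≤ m)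
    (F F' : Matrix (Fin m) (Fin m) (Polynomial ℂ))
    (hF : ∃ c : ℂ, c ≠ 0 ∧ F.det = Polynomial.C c)
    (g : Fin r → Polynomial ℂ) (g' : Fin r' → Polynomial ℂ)
    (hdiv : ∀ (j : Fin r) (h : (j : ℕ) + 1 < r), g j ∣ g ⟨(j : ℕ) + 1, h⟩)
    (hPF : Fᵀ * P * F = skewSmithForm m r g)
    (hPF' : F'ᵀ * P * F' = skewSmithForm m r' g') (n : ℕ) (hn : n ≤ m) :
    (∏ i ∈ Finset.range n, ssfE r g i) ∣ ∏ i ∈ Finset.range n, ssfE r' g' i := by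
  have hu : IsUnit F.det := by
    obtain ⟨c, hc, h⟩ := hF
    rw [h]
    exact Polynomial.isUnit_C.2 hc.isUnit
  have hu' : IsUnit (Fᵀ).det := by rwa [Matrix.det_transpose]
  have hP : P = (Fᵀ)⁻¹ * skewSmithForm m r g * F⁻¹ := by
    rw [← hPF, ← Matrix.mul_assoc, ← Matrix.mul_assoc, Matrix.nonsing_inv_mul _ hu',
      Matrix.one_mul, Matrix.mul_assoc, Matrix.mul_nonsing_inv _ hu, Matrix.mul_one]
  refine ssf_diag _ _ (ssfE_dvd r g hdiv) (F'ᵀ * (Fᵀ)⁻¹)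
    (skewSmithForm m r (fun _ => 1) * F⁻¹ * F' * (skewSmithForm m r' (fun _ => 1))ᵀ) ?_ n hn
  rw [ssf_eq2 m r' hr', ← hPF']
  conv_lhs => rw [hP, ssf_eq1]
  simp only [Matrix.mul_assoc]

lemma ssfE_norm (r : ℕ) (g : Fin r → Polynomial ℂ) (hg : ∀ j, (g j).Monic) (i : ℕ) :
    normalize (ssfE r g i) = ssfE r g i := by
  unfold ssfE
  split_ifs with h
  · exact (hg _).normalize_eq_self
  · simp

lemma ssfE_ne (r : ℕ) (g : Fin r → Polynomial ℂ) (hg : ∀ j, (g j).Monic) (i : ℕ) :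
    ssfE r g i ≠ 0 ↔ i / 2 < r := by
  unfold ssfE
  split_ifs with h
  · simp [h, (hg _).ne_zero]
  · simp [h]

/-- Uniqueness of the skew-symmetric Smith canonical form of a skew-symmetric
matrix polynomial over ℂ. -/
theorem skew_symmetric_smith_form_unique (m : ℕ)
    (P : Matrix (Fin m) (Fin m) (Polynomial ℂ)) (hP : Pᵀ = -P)
    (r r' : ℕ) (hr : 2 * r ≤ m) (hr' : 2 * r' ≤ m)
    (F F' : Matrix (Fin m) (Fin m) (Polynomial ℂ))
    (hF : ∃ c : ℂ, c ≠ 0 ∧ F.det = Polynomial.C c)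
    (hF' : ∃ c : ℂ, c ≠ 0 ∧ F'.det = Polynomial.C c)
    (g : Fin r → Polynomial ℂ) (g' : Fin r' → Polynomial ℂ)
    (hg : ∀ j, (g j).Monic) (hg' : ∀ j, (g' j).Monic)
    (hdiv : ∀ (j : Fin r) (h : (j : ℕ) + 1 < r), g j ∣ g ⟨(j : ℕ) + 1, h⟩)
    (hdiv' : ∀ (j : Fin r') (h : (j : ℕ) + 1 < r'), g' j ∣ g' ⟨(j : ℕ) + 1, h⟩)
    (hPF : Fᵀ * P * F = skewSmithForm m r g)
    (hPF' : F'ᵀ * P * F' = skewSmithForm m r' g') :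
    r = r' ∧ ∀ (j : ℕ) (hj : j < r) (hj' : j < r'), g ⟨j, hj⟩ = g' ⟨j, hj'⟩ := by
  have hE : ∀ i, i < m → ssfE r g i = ssfE r' g' i := by
    have hp : ∀ n, n ≤ m → ∏ i ∈ Finset.range n, ssfE r g i
        = ∏ i ∈ Finset.range n, ssfE r' g' i := by
      intro n hn
      have h1 := ssf_half m P r r' hr' F F' hF g g' hdiv hPF hPF' n hn
      have h2 := ssf_half m P r' r hr F' F hF' g' g hdiv' hPF' hPF n hn
      have h3 := normalize_eq_normalize h1 h2
      have hq : ∀ (s : ℕ) (k : Fin s → Polynomial ℂ), (∀ j, (k j).Monic) → ∀ n : ℕ,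
          normalize (∏ i ∈ Finset.range n, ssfE s k i) = ∏ i ∈ Finset.range n, ssfE s k i := by
        intro s k hk n
        induction n with
        | zero => simp
        | succ n ih => rw [Finset.prod_range_succ, normalize_mul, ih, ssfE_norm s k hk]
      rwa [hq r g hg, hq r' g' hg'] at h3
    intro i hi
    have h1 := hp i hi.le
    have h2 := hp (i+1) hi
    rw [Finset.prod_range_succ, Finset.prod_range_succ, ← h1] at h2
    by_cases h0 : ∏ i ∈ Finset.range i, ssfE r g i = 0
    · have z : ∀ (s : ℕ) (k : Fin s → Polynomial ℂ), (∀ j, (k j).Monic) →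
          ∏ i ∈ Finset.range i, ssfE s k i = 0 → ssfE s k i = 0 := by
        intro s k hk h
        obtain ⟨j, hj, hj0⟩ := Finset.prod_eq_zero_iff.1 h
        by_contra hne
        rw [← Ne, ssfE_ne s k hk] at hne
        refine (ssfE_ne s k hk j).2 ?_ hj0
        have := Finset.mem_range.1 hj
        omega
      rw [z r g hg h0, z r' g' hg' (h1 ▸ h0)]
    · exact mul_left_cancel₀ h0 h2
  have hlt : ∀ j, j < r ↔ j < r' := by
    intro j
    by_cases hj : 2 * j < m
    · have h1 := ssfE_ne r g hg (2*j)
      have h2 := ssfE_ne r' g' hg' (2*j)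
      rw [hE _ hj, h2] at h1
      have h3 : 2 * j / 2 = j := by omega
      rw [h3] at h1
      exact h1.symm
    · omega
  refine ⟨?_, fun j hj hj' => ?_⟩
  · have h1 := hlt r
    have h2 := hlt r'
    omega
  · have h := hE (2*j) (by omega)
    have h3 : 2 * j / 2 = j := by omega
    simpa [ssfE, h3, hj, hj'] using h
end

section
/- Let m, r, d be integers with d ≥ 1 and 2 ≤ 2r ≤ m−1. Then the set { U Vᵀ − V Uᵀ : U an m×r matrix polynomial of grade ⌊d/2⌋, V an m×r matrix polynomial of grade ⌈d/2⌉ } coincides with the set { L J₂ᵣ Lᵀ : L an m×2r matrix polynomial whose columns 1, …, r have degree at most ⌈d/2⌉ and whose columns r+1, …, 2r have degree at most ⌊d/2⌋ }, where J₂ᵣ = [[0, Δᵣ], [−Δᵣ, 0]] and Δᵣ is the r×r anti-identity matrix. -/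
open Polynomial Matrix

/-- The 2r×2r matrix `J₂ᵣ = [[0, Δᵣ], [−Δᵣ, 0]]`, where `Δᵣ` is the r×r anti-identity. -/
noncomputable def Jmat (r : ℕ) : Matrix (Fin (2 * r)) (Fin (2 * r)) (Polynomial ℂ) :=
  Matrix.of fun i j =>
    if (i : ℕ) + (j : ℕ) + 1 = 2 * r ∧ (i : ℕ) < r then 1
    else if (i : ℕ) + (j : ℕ) + 1 = 2 * r ∧ (j : ℕ) < r then -1
    else 0

theorem sum_lo_hi (r : ℕ) (f : Fin (2 * r) → ℂ[X]) :
    ∑ k, f k = ∑ i : Fin r, f ⟨i, by omega⟩ + ∑ i : Fin r, f ⟨2 * r - 1 - i, by omega⟩ := by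
  rw [← Equiv.sum_comp (finCongr (two_mul r).symm) f, Fin.sum_univ_add]
  congr 1
  rw [← Equiv.sum_comp Fin.revPerm]
  refine Finset.sum_congr rfl fun i _ => ?_
  congr 1
  ext
  simp [Fin.val_rev]
  omega

theorem mul_J (m r : ℕ) (L : Matrix (Fin m) (Fin (2 * r)) ℂ[X]) (a : Fin m) (k : Fin (2 * r)) :
    (L * Jmat r) a k = if (k : ℕ) < r then - L a k.rev else L a k.rev := by
  rw [Matrix.mul_apply, Finset.sum_eq_single k.rev]
  · simp only [Jmat, Matrix.of_apply, Fin.val_rev]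
    have h1 : 2 * r - ((k : ℕ) + 1) + k + 1 = 2 * r := by omega
    by_cases hk : (k : ℕ) < r
    · have h2 : ¬ (2 * r - ((k : ℕ) + 1) < r) := by omega
      simp [h1, h2, hk]
    · have h2 : (2 * r - ((k : ℕ) + 1) < r) := by omega
      simp [h1, h2, hk]
  · intro b _ hb
    have h1 : ¬ ((b : ℕ) + k + 1 = 2 * r) := by
      intro h
      apply hb
      ext
      rw [Fin.val_rev]
      omega
    simp [Jmat, h1]
  · simp

theorem key (m r : ℕ) (L : Matrix (Fin m) (Fin (2 * r)) ℂ[X])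
    (U V : Matrix (Fin m) (Fin r) ℂ[X])
    (hV : ∀ a (i : Fin r), L a ⟨i, by omega⟩ = V a i)
    (hU : ∀ a (i : Fin r), L a ⟨2 * r - 1 - i, by omega⟩ = - U a i) :
    L * Jmat r * Lᵀ = U * Vᵀ - V * Uᵀ := by
  ext1 a b
  rw [Matrix.mul_apply, sum_lo_hi, Matrix.sub_apply, Matrix.mul_apply, Matrix.mul_apply,
    sub_eq_add_neg, ← Finset.sum_neg_distrib]
  congr 1
  · refine Finset.sum_congr rfl fun i _ => ?_
    have e : Fin.rev (⟨i, by omega⟩ : Fin (2 * r)) = ⟨2 * r - 1 - i, by omega⟩ := by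
      ext
      simp only [Fin.val_rev]
      omega
    rw [mul_J, e]
    simp [hU, hV]
  · refine Finset.sum_congr rfl fun i _ => ?_
    have e : Fin.rev (⟨2 * r - 1 - i, by omega⟩ : Fin (2 * r)) = ⟨i, by omega⟩ := by
      ext
      simp only [Fin.val_rev]
      omega
    have h : ¬ (2 * r - 1 - (i : ℕ) < r) := by omega
    rw [mul_J, e]
    simp [hU, hV, h]

/-- The set of matrix polynomials `U Vᵀ − V Uᵀ`, with `U` of grade ⌊d/2⌋ and `V` of
grade ⌈d/2⌉, coincides with the set of matrix polynomials `L J₂ᵣ Lᵀ` where the first `r`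
columns of `L` have degree at most ⌈d/2⌉ and the last `r` columns have degree at
most ⌊d/2⌋. -/
theorem factorization_sets_eq (m r d : ℕ)
    (hd : 1 ≤ d) (h2 : 2 ≤ 2 * r) (hrm : 2 * r ≤ m - 1) :
    {P : Matrix (Fin m) (Fin m) (Polynomial ℂ) |
      ∃ U V : Matrix (Fin m) (Fin r) (Polynomial ℂ),
        (∀ i j, (U i j).natDegree ≤ d / 2) ∧
        (∀ i j, (V i j).natDegree ≤ (d + 1) / 2) ∧
        P = U * Vᵀ - V * Uᵀ} =
    {P : Matrix (Fin m) (Fin m) (Polynomial ℂ) |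
      ∃ L : Matrix (Fin m) (Fin (2 * r)) (Polynomial ℂ),
        (∀ (i : Fin m) (j : Fin (2 * r)), (j : ℕ) < r → (L i j).natDegree ≤ (d + 1) / 2) ∧
        (∀ (i : Fin m) (j : Fin (2 * r)), r ≤ (j : ℕ) → (L i j).natDegree ≤ d / 2) ∧
        P = L * Jmat r * Lᵀ} := by
  ext P
  simp only [Set.mem_setOf_eq]
  constructor
  · rintro ⟨U, V, hU, hV, rfl⟩
    refine ⟨Matrix.of fun a k => if h : (k : ℕ) < r then V a ⟨k, h⟩ else
      - U a ⟨2 * r - 1 - k, by omega⟩, ?_, ?_, ?_⟩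
    · intro i j hj
      simp only [Matrix.of_apply, hj, dif_pos]
      exact hV _ _
    · intro i j hj
      simp only [Matrix.of_apply, not_lt.mpr hj, dif_neg, not_false_eq_true, natDegree_neg]
      exact hU _ _
    · symm
      apply key
      · intro a i
        simp
      · intro a i
        have h : ¬ (2 * r - 1 - (i : ℕ) < r) := by omega
        simp only [Matrix.of_apply, h, dif_neg, not_false_eq_true]
        congr 2
        ext
        simp only
        omega
  · rintro ⟨L, h1, h3, rfl⟩
    refine ⟨Matrix.of fun a i => - L a ⟨2 * r - 1 - i, by omega⟩,
      Matrix.of fun a i => L a ⟨i, by omega⟩, ?_, ?_, ?_⟩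
    · intro i j
      simp only [Matrix.of_apply, natDegree_neg]
      exact h3 _ _ (by simp only; omega)
    · intro i j
      exact h1 _ _ j.2
    · apply key
      · intro a i
        simp
      · intro a i
        simp
end

section
/- Let P be an m×m skew-symmetric matrix polynomial over ℂ with normal rank exactly 2r. Then there exist an m×2r matrix polynomial L and a 2r×2r matrix polynomial E such that: (a) P = L E Lᵀ; (b) E is skew-symmetric with normal rank 2r; (c) L is a minimal basis (Forney's criterion: L(λ₀) has rank 2r for every λ₀ ∈ ℂ and the high-order coefficient matrix of L has rank 2r); and (d) the ℂ(λ)-span of the columns of L equals the ℂ(λ)-span of the columns of P. -/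
open Polynomial Matrix

/-- The normal rank of a matrix polynomial: its rank as a matrix over the field of
rational functions ℂ(λ). -/
noncomputable def normalRank {m n : ℕ} (P : Matrix (Fin m) (Fin n) (Polynomial ℂ)) : ℕ :=
  (P.map (algebraMap (Polynomial ℂ) (RatFunc ℂ))).rank

/-- The degree of the `j`-th column of a matrix polynomial: the maximum of the degrees
of its entries. -/
noncomputable def colDegree {m k : ℕ} (L : Matrix (Fin m) (Fin k) (Polynomial ℂ))
    (j : Fin k) : ℕ :=
  Finset.univ.sup fun i => (L i j).natDegree

/-- The high-order coefficient matrix of a matrix polynomial: its `j`-th column consists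
of the coefficients of `λ ^ (colDegree L j)` in the `j`-th column of `L`. -/
noncomputable def highCoeff {m k : ℕ} (L : Matrix (Fin m) (Fin k) (Polynomial ℂ)) :
    Matrix (Fin m) (Fin k) ℂ :=
  Matrix.of fun i j => (L i j).coeff (colDegree L j)

/-- Forney's criterion: an m×k matrix polynomial is a minimal basis iff all its
evaluations have rank `k` and its high-order coefficient matrix has rank `k`. -/
def IsMinimalBasis {m k : ℕ} (L : Matrix (Fin m) (Fin k) (Polynomial ℂ)) : Prop :=
  (∀ α : ℂ, (L.map (Polynomial.eval α)).rank = k) ∧ (highCoeff L).rank = k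

/-- The ℂ(λ)-span of the columns of a matrix polynomial. -/
noncomputable def colSpace {m k : ℕ} (A : Matrix (Fin m) (Fin k) (Polynomial ℂ)) :
    Submodule (RatFunc ℂ) (Fin m → RatFunc ℂ) :=
  Submodule.span (RatFunc ℂ)
    (Set.range fun j i => algebraMap (Polynomial ℂ) (RatFunc ℂ) (A i j))

theorem rank_eq_of_inj {F : Type*} [Field F] {m k : ℕ} (M : Matrix (Fin m) (Fin k) F)
    (h : ∀ c, M *ᵥ c = 0 → c = 0) : M.rank = k := by
  have hi : Function.Injective M.mulVecLin := by
    rw [← LinearMap.ker_eq_bot, LinearMap.ker_eq_bot']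
    intro c hc; exact h c (by simpa using hc)
  have := LinearMap.finrank_range_of_inj hi
  rw [Matrix.rank, this]; simp

theorem finrank_colSpace {m k : ℕ} (A : Matrix (Fin m) (Fin k) ℂ[X]) :
    Module.finrank (RatFunc ℂ) (colSpace A) = normalRank A := by
  rw [normalRank, Matrix.rank_eq_finrank_span_cols]
  rfl

theorem inj_of_finrank {m k : ℕ} (L : Matrix (Fin m) (Fin k) ℂ[X])
    (h : normalRank L = k) (x : Fin k → RatFunc ℂ)
    (hx : (L.map (algebraMap ℂ[X] (RatFunc ℂ))) *ᵥ x = 0) : x = 0 := by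
  have h2 : LinearIndependent (RatFunc ℂ) (L.map (algebraMap ℂ[X] (RatFunc ℂ))).col := by
    rw [linearIndependent_iff_card_eq_finrank_span, Set.finrank,
      ← Matrix.rank_eq_finrank_span_cols]
    rw [Fintype.card_fin]; exact h.symm
  have := Matrix.mulVec_injective_iff.2 h2
  exact this (by simpa using hx)

theorem map_mulVec' {m k : ℕ} (L : Matrix (Fin m) (Fin k) ℂ[X]) (y : Fin k → ℂ[X]) (i : Fin m) :
    ((L.map (algebraMap ℂ[X] (RatFunc ℂ))) *ᵥ (fun l => algebraMap ℂ[X] (RatFunc ℂ) (y l))) i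
      = algebraMap ℂ[X] (RatFunc ℂ) ((L *ᵥ y) i) := by
  simp [Matrix.mulVec, dotProduct]

theorem inj_poly {m k : ℕ} (L : Matrix (Fin m) (Fin k) ℂ[X])
    (h : normalRank L = k) (y : Fin k → ℂ[X]) (hy : L *ᵥ y = 0) : y = 0 := by
  have := inj_of_finrank L h (fun l => algebraMap ℂ[X] (RatFunc ℂ) (y l)) (by
    funext i; rw [map_mulVec', hy]; simp)
  funext l
  have h1 := congrFun this l
  simpa using h1

theorem reduce_span {m k : ℕ} (L : Matrix (Fin m) (Fin k) ℂ[X]) (j : Fin k)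
    (w : Fin m → ℂ[X]) (u : Fin k → ℂ[X]) (q : ℂ[X]) (hq : q ≠ 0) (hj : u j ≠ 0)
    (h : ∀ i, q * w i = (L *ᵥ u) i) : colSpace (L.updateCol j w) = colSpace L := by
  set φ := algebraMap ℂ[X] (RatFunc ℂ) with hφ
  have hinj : ∀ p : ℂ[X], p ≠ 0 → φ p ≠ 0 := by
    intro p hp; simpa [hφ] using hp
  have key : φ q • (fun i => φ (w i)) = ∑ l, φ (u l) • (fun i => φ (L i l)) := by
    funext i
    have := congrArg φ (h i)
    simp only [Matrix.mulVec, dotProduct, map_mul, map_sum] at this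
    simp [this, mul_comm]
  apply le_antisymm
  · refine Submodule.span_le.2 ?_
    rintro _ ⟨l, rfl⟩
    by_cases hl : l = j
    · subst hl
      simp only [Matrix.updateCol_self]
      have : (fun i => φ (w i)) = (φ q)⁻¹ • ∑ l, φ (u l) • (fun i => φ (L i l)) := by
        rw [← key, inv_smul_smul₀ (hinj q hq)]
      change (fun i => φ (w i)) ∈ _
      rw [this]
      exact Submodule.smul_mem _ _ (Submodule.sum_mem _ fun l _ =>
        Submodule.smul_mem _ _ (Submodule.subset_span ⟨l, rfl⟩))
    · simp only [Matrix.updateCol_ne hl]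
      exact Submodule.subset_span ⟨l, rfl⟩
  · have hne : ∀ l, l ≠ j → (fun i => φ (L i l)) ∈ colSpace (L.updateCol j w) := by
      intro l hl
      refine Submodule.subset_span ⟨l, ?_⟩
      simp only [Matrix.updateCol_ne hl]; rfl
    have hw : (fun i => φ (w i)) ∈ colSpace (L.updateCol j w) := by
      refine Submodule.subset_span ⟨j, ?_⟩
      simp only [Matrix.updateCol_self]; rfl
    refine Submodule.span_le.2 ?_
    rintro _ ⟨l, rfl⟩
    by_cases hl : l = j
    · subst hl
      change (fun i => φ (L i l)) ∈ _
      rw [← Finset.add_sum_erase _ _ (Finset.mem_univ l)] at key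
      have : (fun i => φ (L i l)) = (φ (u l))⁻¹ • (φ q • (fun i => φ (w i)) -
          ∑ l ∈ Finset.univ.erase l, φ (u l) • (fun i => φ (L i l))) := by
        rw [key, add_sub_cancel_right, inv_smul_smul₀ (hinj _ hj)]
      rw [this]
      refine Submodule.smul_mem _ _ (Submodule.sub_mem _ (Submodule.smul_mem _ _ hw)
        (Submodule.sum_mem _ fun i hi => Submodule.smul_mem _ _ (hne i (Finset.ne_of_mem_erase hi))))
    · exact hne l hl

theorem exists_max_col {k : ℕ} (d : Fin k → ℕ) (c : Fin k → ℂ) (hc : c ≠ 0) :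
    ∃ j, c j ≠ 0 ∧ ∀ l, c l ≠ 0 → d l ≤ d j := by
  obtain ⟨l0, hl0⟩ := Function.ne_iff.1 hc
  obtain ⟨j, hj, hm⟩ := Finset.exists_max_image (Finset.univ.filter fun l => c l ≠ 0) d
    ⟨l0, by simpa using hl0⟩
  exact ⟨j, by simpa using hj, fun l hl => hm l (by simpa using hl)⟩

theorem natDegree_le_colDegree {m k : ℕ} (L : Matrix (Fin m) (Fin k) ℂ[X]) (i : Fin m) (j : Fin k) :
    (L i j).natDegree ≤ colDegree L j :=
  Finset.le_sup (f := fun i => (L i j).natDegree) (Finset.mem_univ i)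

theorem min_step {m k : ℕ} (L : Matrix (Fin m) (Fin k) ℂ[X]) (hL : normalRank L = k)
    (hmin : ∀ L' : Matrix (Fin m) (Fin k) ℂ[X], colSpace L' = colSpace L →
      ∑ j, colDegree L j ≤ ∑ j, colDegree L' j)
    (j : Fin k) (w : Fin m → ℂ[X]) (u : Fin k → ℂ[X]) (q : ℂ[X]) (hq : q ≠ 0) (hj : u j ≠ 0)
    (h : ∀ i, q * w i = (L *ᵥ u) i) (hd : ∀ i, (w i).degree < (colDegree L j : WithBot ℕ)) :
    False := by
  have h1 := hmin _ (reduce_span L j w u q hq hj h)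
  have hw : ∃ i, w i ≠ 0 := by
    by_contra! hw
    have : u = 0 := inj_poly L hL u (by funext i; rw [← h, hw]; simp)
    exact hj (by rw [this]; rfl)
  obtain ⟨i0, hi0⟩ := hw
  have hpos : 0 < colDegree L j := by
    have := hd i0
    rw [Polynomial.degree_eq_natDegree hi0] at this
    have : (w i0).natDegree < colDegree L j := by exact_mod_cast this
    omega
  have h2 : colDegree (L.updateCol j w) j < colDegree L j := by
    rw [colDegree, Finset.sup_lt_iff (by simpa using hpos)]
    intro i _
    simp only [Matrix.updateCol_self]
    by_cases hi : w i = 0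
    · simpa [hi] using hpos
    · exact (Polynomial.natDegree_lt_iff_degree_lt hi).2 (hd i)
  have h3 : ∀ l, l ≠ j → colDegree (L.updateCol j w) l = colDegree L l := by
    intro l hl
    simp only [colDegree, Matrix.updateCol_ne hl]
  have : ∑ l, colDegree (L.updateCol j w) l < ∑ l, colDegree L l := by
    refine Finset.sum_lt_sum (fun l _ => ?_) ⟨j, Finset.mem_univ _, h2⟩
    by_cases hl : l = j
    · subst hl; exact h2.le
    · exact (h3 l hl).le
  omega

theorem min_eval {m k : ℕ} (L : Matrix (Fin m) (Fin k) ℂ[X]) (hL : normalRank L = k)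
    (hmin : ∀ L' : Matrix (Fin m) (Fin k) ℂ[X], colSpace L' = colSpace L →
      ∑ j, colDegree L j ≤ ∑ j, colDegree L' j) (α : ℂ) (c : Fin k → ℂ)
    (hc : (L.map (Polynomial.eval α)) *ᵥ c = 0) : c = 0 := by
  by_contra hc0
  obtain ⟨j, hj, hm⟩ := exists_max_col (colDegree L) c hc0
  have hdvd : ∀ i, ∃ w, (L *ᵥ (fun l => C (c l))) i = (X - C α) * w := by
    intro i
    refine Polynomial.dvd_iff_isRoot.2 ?_
    have := congrFun hc i
    simpa [Polynomial.IsRoot, Matrix.mulVec, dotProduct, Polynomial.eval_finsetSum] using this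
  choose w hw using hdvd
  refine min_step L hL hmin j w (fun l => C (c l)) (X - C α) (X_sub_C_ne_zero α)
    (by simpa using hj) (fun i => (hw i).symm) ?_
  intro i
  have hle : ((L *ᵥ (fun l => C (c l))) i).degree ≤ (colDegree L j : WithBot ℕ) := by
    refine (Polynomial.degree_sum_le Finset.univ (fun l => L i l * C (c l))).trans
      (Finset.sup_le fun l _ => ?_)
    by_cases hl : c l = 0
    · simp only [hl, C_0, mul_zero, degree_zero]; exact bot_le
    · refine Polynomial.degree_le_of_natDegree_le ?_
      refine (Polynomial.natDegree_mul_C_le _ _).trans ?_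
      exact (natDegree_le_colDegree L i l).trans (hm l hl)
  by_cases hi : w i = 0
  · rw [hi, degree_zero]; exact WithBot.bot_lt_coe _
  · rw [hw, degree_mul, degree_X_sub_C, degree_eq_natDegree hi] at hle
    rw [degree_eq_natDegree hi]
    have : 1 + (w i).natDegree ≤ colDegree L j := by exact_mod_cast hle
    exact_mod_cast (by omega : (w i).natDegree < colDegree L j)

theorem min_high {m k : ℕ} (L : Matrix (Fin m) (Fin k) ℂ[X]) (hL : normalRank L = k)
    (hmin : ∀ L' : Matrix (Fin m) (Fin k) ℂ[X], colSpace L' = colSpace L →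
      ∑ j, colDegree L j ≤ ∑ j, colDegree L' j) (c : Fin k → ℂ)
    (hc : highCoeff L *ᵥ c = 0) : c = 0 := by
  by_contra hc0
  obtain ⟨j, hj, hm⟩ := exists_max_col (colDegree L) c hc0
  set u : Fin k → ℂ[X] := fun l => C (c l) * X ^ (colDegree L j - colDegree L l) with hu
  refine min_step L hL hmin j (L *ᵥ u) u 1 one_ne_zero
    (by simpa [hu] using hj) (fun i => one_mul _) ?_
  intro i
  rw [Polynomial.degree_lt_iff_coeff_zero]
  intro n hn
  have e : (L *ᵥ u) i = ∑ l, L i l * (C (c l) * X ^ (colDegree L j - colDegree L l)) := rfl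
  rw [e, Polynomial.finsetSum_coeff]
  have hco : ∀ l, c l ≠ 0 → (L i l * (C (c l) * X ^ (colDegree L j - colDegree L l))).coeff n
      = (L i l).coeff (n - (colDegree L j - colDegree L l)) * c l := by
    intro l hl
    rw [← mul_assoc, Polynomial.coeff_mul_X_pow', if_pos (by omega), Polynomial.coeff_mul_C]
  rcases hn.eq_or_lt with rfl | hn
  · rw [← show (highCoeff L *ᵥ c) i = 0 by rw [hc]; rfl]
    refine Finset.sum_congr rfl fun l _ => ?_
    by_cases hl : c l = 0
    · simp [hl]
    · rw [hco l hl, Nat.sub_sub_self (hm l hl)]; rfl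
  · refine Finset.sum_eq_zero fun l _ => ?_
    by_cases hl : c l = 0
    · simp [hl]
    · rw [hco l hl, Polynomial.coeff_eq_zero_of_natDegree_lt, zero_mul]
      have := natDegree_le_colDegree L i l
      have := hm l hl
      omega

theorem divide_out {m k : ℕ} (L : Matrix (Fin m) (Fin k) ℂ[X])
    (hL : ∀ (α : ℂ) (c : Fin k → ℂ), (L.map (Polynomial.eval α)) *ᵥ c = 0 → c = 0) (n : ℕ) :
    ∀ (q : ℂ[X]) (p : Fin m → ℂ[X]) (y : Fin k → ℂ[X]), q ≠ 0 → q.natDegree = n →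
      (∀ i, q * p i = (L *ᵥ y) i) → ∃ z, p = L *ᵥ z := by
  induction n with
  | zero =>
    intro q p y hq hn h
    obtain ⟨a, rfl⟩ := Polynomial.natDegree_eq_zero.1 hn
    have ha : a ≠ 0 := by rintro rfl; simp at hq
    refine ⟨C a⁻¹ • y, ?_⟩
    funext i
    rw [Matrix.mulVec_smul, Pi.smul_apply, ← h, smul_eq_mul, ← mul_assoc, ← C_mul,
      inv_mul_cancel₀ ha, C_1, one_mul]
  | succ n ih =>
    intro q p y hq hn h
    obtain ⟨α, hα⟩ := IsAlgClosed.exists_root q (by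
      rw [degree_eq_natDegree hq, hn]; exact_mod_cast Nat.succ_ne_zero n)
    obtain ⟨q', rfl⟩ := Polynomial.dvd_iff_isRoot.2 hα
    have h0 : (fun l => (y l).eval α) = 0 := by
      apply hL α
      funext i
      have := congrArg (Polynomial.eval α) (h i)
      simp [Matrix.mulVec, dotProduct, Polynomial.eval_finsetSum] at this ⊢
      exact this.symm
    have hdvd : ∀ l, ∃ y', y l = (X - C α) * y' := fun l =>
      Polynomial.dvd_iff_isRoot.2 (congrFun h0 l)
    choose y' hy' using hdvd
    have hq' : q' ≠ 0 := right_ne_zero_of_mul hq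
    refine ih q' p y' hq' ?_ ?_
    · rw [natDegree_mul (X_sub_C_ne_zero α) hq', natDegree_X_sub_C] at hn
      omega
    · intro i
      apply mul_left_cancel₀ (X_sub_C_ne_zero α)
      rw [← mul_assoc, h, show y = (X - C α) • y' from funext hy', Matrix.mulVec_smul]
      rfl

theorem lift_poly {m k : ℕ} (L : Matrix (Fin m) (Fin k) ℂ[X])
    (hL : ∀ (α : ℂ) (c : Fin k → ℂ), (L.map (Polynomial.eval α)) *ᵥ c = 0 → c = 0)
    (p : Fin m → ℂ[X]) (x : Fin k → RatFunc ℂ)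
    (h : (fun i => algebraMap ℂ[X] (RatFunc ℂ) (p i))
      = (L.map (algebraMap ℂ[X] (RatFunc ℂ))) *ᵥ x) : ∃ z, p = L *ᵥ z := by
  obtain ⟨q, hq⟩ := IsLocalization.exist_integer_multiples_of_finite (nonZeroDivisors ℂ[X]) x
  choose y hy using hq
  refine divide_out L hL _ q p y (nonZeroDivisors.ne_zero q.2) rfl ?_
  intro i
  apply IsFractionRing.injective ℂ[X] (RatFunc ℂ)
  rw [← map_mulVec']
  have : (fun l => algebraMap ℂ[X] (RatFunc ℂ) (y l)) = algebraMap ℂ[X] (RatFunc ℂ) q • x := by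
    funext l; rw [hy l]; simp [Algebra.smul_def]
  rw [this, Matrix.mulVec_smul, ← h]
  simp

theorem lift_mat {m k n : ℕ} (L : Matrix (Fin m) (Fin k) ℂ[X])
    (hL : ∀ (α : ℂ) (c : Fin k → ℂ), (L.map (Polynomial.eval α)) *ᵥ c = 0 → c = 0)
    (Q : Matrix (Fin m) (Fin n) ℂ[X]) (M : Matrix (Fin k) (Fin n) (RatFunc ℂ))
    (h : Q.map (algebraMap ℂ[X] (RatFunc ℂ)) = L.map (algebraMap ℂ[X] (RatFunc ℂ)) * M) :
    ∃ A : Matrix (Fin k) (Fin n) ℂ[X], Q = L * A := by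
  have : ∀ j, ∃ z, (fun i => Q i j) = L *ᵥ z := fun j =>
    lift_poly L hL (fun i => Q i j) (fun l => M l j) (by
      funext i; exact congrFun (congrFun h i) j)
  choose z hz using this
  refine ⟨Matrix.of fun l j => z j l, ?_⟩
  ext1 i j
  exact congrFun (hz j) i

theorem exists_mat_of_colSpace {m k n : ℕ} (L : Matrix (Fin m) (Fin k) ℂ[X])
    (Q : Matrix (Fin m) (Fin n) ℂ[X]) (h : colSpace Q ≤ colSpace L) :
    ∃ M : Matrix (Fin k) (Fin n) (RatFunc ℂ),
      Q.map (algebraMap ℂ[X] (RatFunc ℂ)) = L.map (algebraMap ℂ[X] (RatFunc ℂ)) * M := by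
  have : ∀ j, ∃ c : Fin k → RatFunc ℂ,
      ∑ l, c l • (fun i => algebraMap ℂ[X] (RatFunc ℂ) (L i l))
        = fun i => algebraMap ℂ[X] (RatFunc ℂ) (Q i j) := fun j =>
    (Submodule.mem_span_range_iff_exists_fun _).1 (h (Submodule.subset_span ⟨j, rfl⟩))
  choose c hc using this
  refine ⟨Matrix.of fun l j => c j l, ?_⟩
  ext1 i j
  have := congrFun (hc j) i
  simp [Matrix.mul_apply] at this ⊢
  rw [← this]
  exact Finset.sum_congr rfl fun _ _ => mul_comm _ _

theorem exists_min {m n k : ℕ} (P : Matrix (Fin m) (Fin n) ℂ[X]) (hk : normalRank P = k) :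
    ∃ L : Matrix (Fin m) (Fin k) ℂ[X], colSpace L = colSpace P ∧
      ∀ L' : Matrix (Fin m) (Fin k) ℂ[X], colSpace L' = colSpace P →
        ∑ j, colDegree L j ≤ ∑ j, colDegree L' j := by
  have hne : {L : Matrix (Fin m) (Fin k) ℂ[X] | colSpace L = colSpace P}.Nonempty := by
    rw [← finrank_colSpace, colSpace] at hk
    subst hk
    obtain ⟨f, hf, hs, -⟩ := Submodule.exists_fun_fin_finrank_span_eq (RatFunc ℂ)
      (Set.range fun j i => algebraMap (Polynomial ℂ) (RatFunc ℂ) (P i j))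
    choose g hg using hf
    refine ⟨Matrix.of fun i l => P i (g l), ?_⟩
    change Submodule.span _ _ = Submodule.span _ _
    refine Eq.trans ?_ hs
    congr 2
    funext l
    exact hg l
  refine ⟨Function.argminOn (fun L => ∑ j, colDegree L j) _ hne,
    Function.argminOn_mem _ _ hne, fun L' hL' => 
      Function.argminOn_le (fun L : Matrix (Fin m) (Fin k) ℂ[X] => ∑ j, colDegree L j)
        {L | colSpace L = colSpace P} hL'⟩

/-- Every skew-symmetric matrix polynomial of normal rank exactly `2r` factors as
`L E Lᵀ` with `L` a minimal basis of the column space of `P` and `E` skew-symmetric of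
normal rank `2r`. -/
theorem skew_symmetric_minimal_rank_factorization (m r : ℕ)
    (P : Matrix (Fin m) (Fin m) (Polynomial ℂ)) (hP : Pᵀ = -P)
    (hrk : normalRank P = 2 * r) :
    ∃ (L : Matrix (Fin m) (Fin (2 * r)) (Polynomial ℂ))
      (E : Matrix (Fin (2 * r)) (Fin (2 * r)) (Polynomial ℂ)),
      P = L * E * Lᵀ ∧
      Eᵀ = -E ∧
      normalRank E = 2 * r ∧
      IsMinimalBasis L ∧
      colSpace L = colSpace P := by
  obtain ⟨L, hLP, hmin⟩ := exists_min P hrk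
  rw [← hLP] at hmin
  have hLr : normalRank L = 2 * r := by
    rw [← finrank_colSpace, hLP, finrank_colSpace, hrk]
  have hev := min_eval L hLr hmin
  have hhi := min_high L hLr hmin
  set φ := algebraMap ℂ[X] (RatFunc ℂ) with hφ
  have hφi : Function.Injective φ := IsFractionRing.injective ℂ[X] (RatFunc ℂ)
  obtain ⟨M, hM⟩ := exists_mat_of_colSpace L P hLP.ge
  obtain ⟨A, hA⟩ := lift_mat L hev P M hM
  -- left inverse
  obtain ⟨R, hR⟩ : ∃ R : Matrix (Fin (2*r)) (Fin m) (RatFunc ℂ), R * L.map φ = 1 := by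
    obtain ⟨g, hg⟩ := LinearMap.exists_leftInverse_of_injective (L.map φ).mulVecLin
      (LinearMap.ker_eq_bot'.2 fun x hx => inj_of_finrank L hLr x (by simpa using hx))
    refine ⟨LinearMap.toMatrix' g, ?_⟩
    rw [← LinearMap.toMatrix'_toLin' (L.map φ), ← LinearMap.toMatrix'_comp, Matrix.toLin'_apply', hg]
    simp
  have hR' : (L.map φ)ᵀ * Rᵀ = 1 := by
    rw [← Matrix.transpose_mul, hR, Matrix.transpose_one]
  have hskew : Aᵀ * Lᵀ = -(L * A) := by
    rw [← Matrix.transpose_mul, ← hA, hP]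
  obtain ⟨B, hB⟩ := lift_mat L hev Aᵀ (-(A.map φ * Rᵀ)) (by
    have h1 := congrArg (fun Z : Matrix (Fin m) (Fin m) ℂ[X] => Z.map φ * Rᵀ) hskew
    simp only [Matrix.map_mul] at h1
    rw [Matrix.mul_assoc, Matrix.transpose_map, Matrix.transpose_map] at h1
    rw [Matrix.transpose_map] 
    rw [hR', Matrix.mul_one] at h1
    rw [h1]
    rw [Matrix.map_neg φ (by simp)]
    simp [Matrix.mul_assoc, hφ])
  have hAB : A = Bᵀ * Lᵀ := by
    rw [← Matrix.transpose_mul, ← hB, Matrix.transpose_transpose]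
  have hPE : P = L * Bᵀ * Lᵀ := by rw [Matrix.mul_assoc, ← hAB, ← hA]
  refine ⟨L, Bᵀ, hPE, ?_, ?_, ⟨fun α => rank_eq_of_inj _ (hev α), rank_eq_of_inj _ hhi⟩, hLP⟩
  · have h1 : L * (B + Bᵀ) * Lᵀ = 0 := by
      have : L * B * Lᵀ = Pᵀ := by
        rw [hPE]; simp [Matrix.transpose_mul, Matrix.mul_assoc]
      rw [Matrix.mul_add, Matrix.add_mul, this, ← hPE, hP]; simp
    have h2 : L.map φ * (B + Bᵀ).map φ * (L.map φ)ᵀ = 0 := by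
      have := congrArg (fun Z : Matrix (Fin m) (Fin m) ℂ[X] => Z.map φ) h1
      simp only [Matrix.map_mul] at this
      rw [Matrix.transpose_map] at this
      rw [this]; simp
    have h3 : (B + Bᵀ).map φ = 0 := by
      calc (B + Bᵀ).map φ = (R * L.map φ) * (B + Bᵀ).map φ * ((L.map φ)ᵀ * Rᵀ) := by
            rw [hR, hR']; simp
        _ = R * (L.map φ * (B + Bᵀ).map φ * (L.map φ)ᵀ) * Rᵀ := by
            simp only [Matrix.mul_assoc]
        _ = 0 := by rw [h2]; simp
    have h4 : B + Bᵀ = 0 := by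
      apply Matrix.map_injective hφi
      change (B + Bᵀ).map φ = Matrix.map 0 φ
      rw [h3]; simp
    rw [Matrix.transpose_transpose]
    exact eq_neg_of_add_eq_zero_left h4
  · apply le_antisymm
    · exact (Matrix.rank_le_width _)
    · refine hrk.ge.trans ?_
      rw [normalRank, normalRank, hPE, Matrix.map_mul, Matrix.map_mul]
      exact (Matrix.rank_mul_le_left _ _).trans (Matrix.rank_mul_le_right _ _)
end

section
/- Let P be an m×m skew-symmetric matrix polynomial over ℂ of grade d with normal rank exactly 2r, degree exactly d, and no eigenvalues (finite or infinite). Suppose P = L E Lᵀ where L is an m×2r matrix polynomial that is a minimal basis whose columns span (over ℂ(λ)) the column space of P, E is a 2r×2r skew-symmetric matrix polynomial of normal rank 2r, and the columns of L are ordered so that their degrees are nonincreasing: deg(L₁) ≥ deg(L₂) ≥ ⋯ ≥ deg(L₂ᵣ). Then deg(Lᵢ) + deg(L₂ᵣ₋ᵢ₊₁) = d for every i = 1, …, 2r. -/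
open Polynomial Matrix

theorem aux_le {m k : ℕ} (L : Matrix (Fin m) (Fin k) (Polynomial ℂ)) (a : Fin m) (j : Fin k) :
    (L a j).natDegree ≤ colDegree L j :=
  Finset.le_sup (f := fun i => (L i j).natDegree) (Finset.mem_univ a)

theorem aux_coeff {m k : ℕ} (L : Matrix (Fin m) (Fin k) (Polynomial ℂ))
    (v : Fin k → Polynomial ℂ) (d : ℕ)
    (hv : ∀ j, (v j * X ^ colDegree L j).natDegree ≤ d) (a : Fin m) :
    ((L *ᵥ v) a).coeff d = (highCoeff L *ᵥ fun j => (v j * X ^ colDegree L j).coeff d) a := by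
  simp only [Matrix.mulVec, dotProduct, finsetSum_coeff]
  refine Finset.sum_congr rfl fun j _ => ?_
  have h := coeff_mul_add_eq_of_natDegree_le (aux_le L a j) (hv j)
  rw [← mul_assoc, add_comm, coeff_mul_X_pow] at h
  rw [h]; rfl

theorem aux_inj {m k : ℕ} (A : Matrix (Fin m) (Fin k) ℂ) (h : A.rank = k) (w : Fin k → ℂ)
    (hw : A *ᵥ w = 0) : w = 0 := by
  have hli : LinearIndependent ℂ A.col := by
    rw [linearIndependent_iff_card_eq_finrank_span, Fintype.card_fin]
    rw [Matrix.rank_eq_finrank_span_cols] at h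
    exact h.symm
  have := Matrix.mulVec_injective_iff.2 hli
  exact this (by simpa using hw)

theorem aux_bound {m k : ℕ} (L : Matrix (Fin m) (Fin k) (Polynomial ℂ))
    (hL : (highCoeff L).rank = k)
    (v : Fin k → Polynomial ℂ) (d : ℕ)
    (h : ∀ a, ((L *ᵥ v) a).natDegree ≤ d) (j : Fin k) :
    (v j * X ^ colDegree L j).natDegree ≤ d := by
  have key : ∀ n, (∀ j, (v j * X ^ colDegree L j).natDegree ≤ d + n) →
      ∀ j, (v j * X ^ colDegree L j).natDegree ≤ d := by
    intro n
    induction n with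
    | zero => exact fun h => h
    | succ n ih =>
      intro hn
      apply ih
      have hz : (fun j => (v j * X ^ colDegree L j).coeff (d + (n + 1))) = 0 := by
        apply aux_inj _ hL
        funext a
        rw [← aux_coeff L v _ hn a]
        exact coeff_eq_zero_of_natDegree_lt (by have := h a; omega)
      intro j
      have h1 := hn j
      by_contra hcon
      have h2 : (v j * X ^ colDegree L j).natDegree = d + (n + 1) := by omega
      have h3 := congrFun hz j
      simp only [Pi.zero_apply] at h3
      rw [← h2, coeff_natDegree, leadingCoeff_eq_zero] at h3
      rw [h3] at h2
      simp at h2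
  refine key (Finset.univ.sup fun j => (v j * X ^ colDegree L j).natDegree) (fun j => ?_) j
  exact le_add_left (Finset.le_sup (f := fun j => (v j * X ^ colDegree L j).natDegree)
    (Finset.mem_univ j))

theorem aux_det {n : ℕ} (A : Matrix (Fin n) (Fin n) ℂ) (h : n ≤ A.rank) : A.det ≠ 0 := by
  intro h0
  obtain ⟨v, hv, hv0⟩ := Matrix.exists_mulVec_eq_zero_iff.2 h0
  have := A.rank_le_width
  exact hv (aux_inj A (by omega) v hv0)

theorem aux_coeff_det {n d : ℕ} (F : Matrix (Fin n) (Fin n) (Polynomial ℂ))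
    (hF : ∀ i j, (F i j).natDegree ≤ d) :
    F.det.coeff (n * d) = (Matrix.of fun i j => (F i j).coeff d).det := by
  rw [Matrix.det_apply, Matrix.det_apply, finsetSum_coeff]
  refine Finset.sum_congr rfl fun σ _ => ?_
  rw [coeff_smul]
  congr 1
  have := coeff_prod_of_natDegree_le (s := Finset.univ) (fun i => F (σ i) i) d
    (fun i _ => hF _ _)
  simpa using this

/-- For a skew-symmetric matrix polynomial of grade `d`, normal rank exactly `2r`,
degree exactly `d`, and with no (finite or infinite) eigenvalues, any minimal-basis
factorization `P = L E Lᵀ` with nonincreasing column degrees of `L` satisfies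
`deg(Lᵢ) + deg(L₂ᵣ₋ᵢ₊₁) = d` for all `i`. -/
theorem colDegree_add_colDegree_rev_eq (m r d : ℕ)
    (P : Matrix (Fin m) (Fin m) (Polynomial ℂ)) (hP : Pᵀ = -P)
    (hgrade : ∀ i j, (P i j).natDegree ≤ d)
    (hdeg : (Matrix.of fun a b => (P a b).coeff d) ≠ (0 : Matrix (Fin m) (Fin m) ℂ))
    (hrk : normalRank P = 2 * r)
    (hnoeig : ∀ α : ℂ, (P.map (Polynomial.eval α)).rank = 2 * r)
    (hnoinf : (Matrix.of fun a b => (P a b).coeff d).rank = 2 * r)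
    (L : Matrix (Fin m) (Fin (2 * r)) (Polynomial ℂ))
    (E : Matrix (Fin (2 * r)) (Fin (2 * r)) (Polynomial ℂ))
    (hfact : P = L * E * Lᵀ)
    (hE : Eᵀ = -E) (hErk : normalRank E = 2 * r)
    (hL : IsMinimalBasis L)
    (hspan : colSpace L = colSpace P)
    (hord : ∀ i j : Fin (2 * r), i ≤ j → colDegree L j ≤ colDegree L i) :
    ∀ i : Fin (2 * r), colDegree L i + colDegree L i.rev = d := by
  obtain ⟨-, hLh⟩ := hL
  -- degree bounds
  have hP1 : ∀ a b, P a b = (L *ᵥ fun j => (E * Lᵀ) j b) a := by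
    intro a b
    rw [hfact, Matrix.mul_assoc]; rfl
  have hb1 : ∀ j b, ((E * Lᵀ) j b * X ^ colDegree L j).natDegree ≤ d := by
    intro j b
    exact aux_bound L hLh (fun j => (E * Lᵀ) j b) d (fun a => by rw [← hP1]; exact hgrade a b) j
  have hP2 : ∀ j b, (E * Lᵀ) j b * X ^ colDegree L j
      = (L *ᵥ fun i => E j i * X ^ colDegree L j) b := by
    intro j b
    simp only [Matrix.mul_apply, Matrix.mulVec, dotProduct, Matrix.transpose_apply,
      Finset.sum_mul]
    exact Finset.sum_congr rfl fun i _ => by ring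
  have hb2 : ∀ j i, (E j i * X ^ colDegree L j * X ^ colDegree L i).natDegree ≤ d := by
    intro j i
    exact aux_bound L hLh (fun i => E j i * X ^ colDegree L j) d
      (fun a => by rw [← hP2]; exact hb1 j a) i
  set F : Matrix (Fin (2 * r)) (Fin (2 * r)) (Polynomial ℂ) :=
    Matrix.of fun j i => E j i * X ^ colDegree L j * X ^ colDegree L i with hF
  set G : Matrix (Fin (2 * r)) (Fin (2 * r)) ℂ := Matrix.of fun j i => (F j i).coeff d with hG
  have hPd : (Matrix.of fun a b => (P a b).coeff d) = highCoeff L * (G * (highCoeff L)ᵀ) := by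
    ext a b
    rw [Matrix.of_apply, hP1, aux_coeff L _ d (fun j => hb1 j b) a, Matrix.mul_apply]
    simp only [Matrix.mulVec, dotProduct]
    refine Finset.sum_congr rfl fun j _ => ?_
    rw [hP2, aux_coeff L _ d (hb2 j) b, Matrix.mul_apply]
    simp only [Matrix.mulVec, dotProduct]
    congr 1
    refine Finset.sum_congr rfl fun i _ => ?_
    rw [mul_comm]; rfl
  have hGdet : G.det ≠ 0 := by
    apply aux_det
    rw [hPd] at hnoinf
    exact hnoinf.symm.le.trans <| (Matrix.rank_mul_le_right _ _).trans (Matrix.rank_mul_le_left _ _)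
  have hEdet : ∀ α, ¬ IsRoot E.det α := by
    intro α hα
    have : (E.map (eval α)).det = 0 := by
      have h := RingHom.map_det (evalRingHom α) E
      rw [IsRoot.def] at hα
      rw [coe_evalRingHom, hα] at h
      exact h.symm
    refine aux_det _ ?_ this
    have h : P.map (eval α) = L.map (eval α) * (E.map (eval α) * Lᵀ.map (eval α)) := by
      rw [hfact, Matrix.mul_assoc]
      have := Matrix.map_mul (L := L) (M := E * Lᵀ) (f := evalRingHom α)
      have h2 := Matrix.map_mul (L := E) (M := Lᵀ) (f := evalRingHom α)
      rw [h2] at this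
      exact this
    have h2 := hnoeig α
    rw [h] at h2
    exact h2.symm.le.trans <| (Matrix.rank_mul_le_right _ _).trans (Matrix.rank_mul_le_left _ _)
  have hdeg0 : E.det.degree = 0 := by
    by_contra hne
    obtain ⟨x, hx⟩ := IsAlgClosed.exists_root E.det hne
    exact hEdet x hx
  obtain ⟨c, hc⟩ : ∃ c, E.det = C c := ⟨_, eq_C_of_degree_le_zero hdeg0.le⟩
  have hEne : E.det ≠ 0 := fun h => hEdet 0 (by rw [h]; simp)
  have hFdet : F.det = C c * X ^ (2 * ∑ i, colDegree L i) := by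
    have : F = Matrix.diagonal (fun j => X ^ colDegree L j) * E *
        Matrix.diagonal (fun j => X ^ colDegree L j) := by
      ext1 i j
      rw [Matrix.mul_diagonal, Matrix.diagonal_mul, hF, Matrix.of_apply]
      ring
    rw [this, Matrix.det_mul, Matrix.det_mul, Matrix.det_diagonal, hc,
      Finset.prod_pow_eq_pow_sum]
    ring
  have hsum : 2 * r * d = 2 * ∑ i, colDegree L i := by
    have h := aux_coeff_det F hb2
    rw [hFdet, coeff_C_mul_X_pow] at h
    by_contra hne
    rw [if_neg hne] at h
    exact hGdet h.symm
  have hle : ∀ i : Fin (2 * r), colDegree L i + colDegree L i.rev ≤ d := by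
    intro i
    by_contra hlt
    push Not at hlt
    have hz : ∀ a b, a ≤ i → b ≤ i.rev → E a b = 0 := by
      intro a b ha hb
      by_contra hne
      have h := hb2 a b
      rw [mul_assoc, ← pow_add, natDegree_mul_X_pow _ hne] at h
      have := hord _ _ ha
      have := hord _ _ hb
      omega
    apply hEne
    rw [Matrix.det_apply]
    refine Finset.sum_eq_zero fun σ _ => ?_
    obtain ⟨b, hb, hs⟩ : ∃ b, b ≤ i.rev ∧ σ b ≤ i := by
      by_contra hcon
      push Not at hcon
      have hcard := Finset.card_le_card_of_injOn (s := Finset.Iic i.rev) (t := Finset.Ioi i) σ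
        (fun b hb => by simpa using hcon b (by simpa using hb)) σ.injective.injOn
      rw [Fin.card_Iic, Fin.card_Ioi, Fin.val_rev] at hcard
      omega
    have hp : ∏ i, E (σ i) i = 0 :=
      Finset.prod_eq_zero (f := fun i => E (σ i) i) (Finset.mem_univ b) (hz _ _ hs hb)
    rw [hp, smul_zero]
  have hrev : ∑ i : Fin (2 * r), colDegree L i.rev = ∑ i, colDegree L i :=
    Equiv.sum_comp Fin.revPerm (colDegree L)
  have htot : ∑ i : Fin (2 * r), (colDegree L i + colDegree L i.rev)
      = ∑ _i : Fin (2 * r), d := by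
    rw [Finset.sum_add_distrib, hrev]
    simp only [Finset.sum_const, Finset.card_univ, Fintype.card_fin, smul_eq_mul]
    omega
  intro i
  exact (Finset.sum_eq_sum_iff_of_le (fun i _ => hle i)).1 htot i (Finset.mem_univ i)
end

section
/- Let m, r, d be integers with m > 2, d ≥ 1, and 2 ≤ 2r ≤ m−1. Then every m×m skew-symmetric matrix polynomial P over ℂ of grade d with normal rank at most 2r is the coefficientwise limit of a sequence (Pₙ) of m×m skew-symmetric matrix polynomials of grade d such that each Pₙ has degree exactly d, normal rank exactly 2r, and no eigenvalues (finite or infinite), i.e., rank Pₙ(α) = 2r for every α ∈ ℂ and the d-th coefficient matrix of Pₙ has rank 2r. -/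
open Polynomial Matrix

/-- The tuple of coefficient matrices of a matrix polynomial of grade `d`. -/
noncomputable def coeffTuple (m d : ℕ) (P : Matrix (Fin m) (Fin m) (Polynomial ℂ)) :
    Fin (d + 1) → Matrix (Fin m) (Fin m) ℂ :=
  fun i => Matrix.of fun a b => (P a b).coeff (i : ℕ)


/-- degree bounded by an integer -/
def DB (c : ℤ) (p : Polynomial ℂ) : Prop := ∀ n : ℕ, c < n → p.coeff n = 0

/-- coefficient at an integer -/
noncomputable def lc (c : ℤ) (p : Polynomial ℂ) : ℂ := if 0 ≤ c then p.coeff c.toNat else 0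

lemma DB.mono {c e : ℤ} {p : Polynomial ℂ} (h : DB c p) (hce : c ≤ e) : DB e p :=
  fun n hn => h n (by omega)

lemma DB.zero (c : ℤ) : DB c 0 := fun n _ => by simp

lemma DB.add {c : ℤ} {p q : Polynomial ℂ} (hp : DB c p) (hq : DB c q) : DB c (p + q) :=
  fun n hn => by simp [hp n hn, hq n hn]

lemma DB.neg {c : ℤ} {p : Polynomial ℂ} (hp : DB c p) : DB c (-p) :=
  fun n hn => by simp [hp n hn]

lemma DB.sub {c : ℤ} {p q : Polynomial ℂ} (hp : DB c p) (hq : DB c q) : DB c (p - q) :=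
  fun n hn => by simp [hp n hn, hq n hn]

lemma DB.sum {c : ℤ} {ι : Type*} (s : Finset ι) {f : ι → Polynomial ℂ}
    (h : ∀ i ∈ s, DB c (f i)) : DB c (∑ i ∈ s, f i) := by
  intro n hn
  rw [finsetSum_coeff]
  exact Finset.sum_eq_zero fun i hi => h i hi n hn

lemma DB.mul {c e : ℤ} {p q : Polynomial ℂ} (hp : DB c p) (hq : DB e q) : DB (c + e) (p * q) := by
  intro n hn
  rw [coeff_mul]
  refine Finset.sum_eq_zero fun x hx => ?_
  rw [Finset.HasAntidiagonal.mem_antidiagonal] at hx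
  by_cases h : c < x.1
  · rw [hp _ h, zero_mul]
  · rw [hq _ (by push_cast [← hx] at hn; omega), mul_zero]

lemma DB.const (z : ℂ) : DB 0 (C z) := fun n hn => by
  rw [coeff_C, if_neg]; omega

lemma DB.eq_C {p : Polynomial ℂ} (h : DB 0 p) : p = Polynomial.C (p.coeff 0) := by
  ext n
  rw [coeff_C]
  split_ifs with hn
  · rw [hn]
  · exact h n (by omega)

lemma DB.eq_zero {c : ℤ} {p : Polynomial ℂ} (h : DB c p) (hc : c < 0) : p = 0 := by
  ext n
  exact h n (by omega)

lemma DB.of_natDegree {n : ℕ} {p : Polynomial ℂ} (h : p.natDegree ≤ n) : DB n p :=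
  fun k hk => coeff_eq_zero_of_natDegree_lt (by omega)

lemma DB.natDegree {n : ℕ} {p : Polynomial ℂ} (h : DB n p) : p.natDegree ≤ n :=
  natDegree_le_iff_coeff_eq_zero.2 fun k hk => h k (by omega)

lemma DB.X_pow (n : ℕ) : DB n (X ^ n : Polynomial ℂ) := DB.of_natDegree (by simp)

lemma lc_mul {c e : ℤ} {p q : Polynomial ℂ} (hp : DB c p) (hq : DB e q) :
    lc (c + e) (p * q) = lc c p * lc e q := by
  by_cases hc : c < 0
  · rw [hp.eq_zero hc]; simp [lc]
  by_cases he : e < 0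
  · rw [hq.eq_zero he]; simp [lc]
  push Not at hc he
  lift c to ℕ using hc
  lift e to ℕ using he
  have h : (0:ℤ) ≤ (c:ℤ) + e := by positivity
  have h3 : ((c:ℤ) + e).toNat = c + e := by omega
  simp only [lc, h, h3, if_true, Int.toNat_natCast, Nat.cast_nonneg]
  exact coeff_mul_add_eq_of_natDegree_le hp.natDegree hq.natDegree

lemma DB_prod {ι : Type*} (s : Finset ι) (c : ι → ℤ) (f : ι → Polynomial ℂ)
    (h : ∀ i ∈ s, DB (c i) (f i)) :
    DB (∑ i ∈ s, c i) (∏ i ∈ s, f i) ∧ lc (∑ i ∈ s, c i) (∏ i ∈ s, f i) = ∏ i ∈ s, lc (c i) (f i) := by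
  classical
  induction s using Finset.induction_on with
  | empty => 
    constructor
    · simpa using DB.const 1
    · simp [lc]
  | insert i s hi ih =>
    obtain ⟨h1, h2⟩ := ih fun j hj => h j (Finset.mem_insert_of_mem hj)
    have h0 := h i (Finset.mem_insert_self i s)
    rw [Finset.sum_insert hi, Finset.prod_insert hi, Finset.prod_insert hi]
    exact ⟨h0.mul h1, by rw [lc_mul h0 h1, h2]⟩

lemma lc_sum (c : ℤ) {ι : Type*} (s : Finset ι) (f : ι → Polynomial ℂ) :
    lc c (∑ i ∈ s, f i) = ∑ i ∈ s, lc c (f i) := by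
  unfold lc
  split_ifs <;> simp

lemma lc_smul_int (c : ℤ) (k : ℤˣ) (p : Polynomial ℂ) : lc c (k • p) = k • lc c p := by
  rcases Int.units_eq_one_or k with h | h <;> simp [h, lc] 

lemma DB_det {ι : Type*} [Fintype ι] [DecidableEq ι] (M : Matrix ι ι (Polynomial ℂ))
    (b c : ι → ℤ) (h : ∀ i j, DB (b i + c j) (M i j)) :
    DB (∑ i, b i + ∑ i, c i) M.det ∧ lc (∑ i, b i + ∑ i, c i) M.det
      = (Matrix.of fun i j => lc (b i + c j) (M i j)).det := by
  have key : ∀ σ : Equiv.Perm ι, ∑ i, b i + ∑ i, c i = ∑ i, (b (σ i) + c i) := by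
    intro σ
    rw [Finset.sum_add_distrib, Equiv.sum_comp σ b]
  rw [Matrix.det_apply, Matrix.det_apply, lc_sum]
  constructor
  · refine DB.sum _ fun σ _ => ?_
    have := (DB_prod Finset.univ (fun i => b (σ i) + c i) (fun i => M (σ i) i) (fun i _ => h _ _)).1
    rw [← key σ] at this
    rcases Int.units_eq_one_or (Equiv.Perm.sign σ) with hs | hs
    · simpa [hs] using this
    · simpa [hs] using this.neg
  · refine Finset.sum_congr rfl fun σ _ => ?_
    have := (DB_prod Finset.univ (fun i => b (σ i) + c i) (fun i => M (σ i) i) (fun i _ => h _ _)).2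
    rw [lc_smul_int, key σ, this]
    rfl

lemma rank_pivot {K ι : Type*} [Field K] [Fintype ι] [DecidableEq ι] (S S' : Matrix ι ι K) (i j : ι)
    (hker : ∀ x, S *ᵥ x = 0 → S' *ᵥ x = 0) (hi : S' *ᵥ Pi.single i 1 = 0)
    (hj : S' *ᵥ Pi.single j 1 = 0) (hij : S i j ≠ 0) (hji : S j i ≠ 0) (hii : S i i = 0) :
    S'.rank + 2 ≤ S.rank := by
  have r1 := LinearMap.finrank_range_add_finrank_ker S.mulVecLin
  have r2 := LinearMap.finrank_range_add_finrank_ker S'.mulVecLin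
  let φ : (ι → K) →ₗ[K] K := LinearMap.proj i ∘ₗ S.mulVecLin
  let K1 := LinearMap.ker S'.mulVecLin ⊓ LinearMap.ker φ
  have h1 : LinearMap.ker S.mulVecLin < K1 := by
    refine lt_of_le_of_ne ?_ ?_
    · intro x hx
      have hx' : S *ᵥ x = 0 := by simpa using hx
      refine ⟨by simpa using hker x hx', ?_⟩
      simp [φ, hx']
    · intro h
      have : Pi.single i 1 ∈ K1 := ⟨by simpa using hi, by simp [φ, hii]⟩
      rw [← h] at this
      have h3 : S *ᵥ Pi.single i 1 = 0 := by simpa using this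
      apply hji
      simpa using congrFun h3 j
  have h2 : K1 < LinearMap.ker S'.mulVecLin := by
    refine lt_of_le_of_ne inf_le_left ?_
    intro h
    have : Pi.single j 1 ∈ LinearMap.ker S'.mulVecLin := by simpa using hj
    rw [← h] at this
    have h3 := this.2
    apply hij
    simpa [φ] using h3
  have h1' := Submodule.finrank_lt_finrank_of_lt h1
  have h2' := Submodule.finrank_lt_finrank_of_lt h2
  unfold Matrix.rank
  omega

/-- decomposition into hyperbolic pairs with degree bounds -/
def Dec {ι : Type} (d : ℕ) (a : ι → ℕ) (S : Matrix ι ι (Polynomial ℂ)) (r : ℕ) : Prop :=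
  ∃ (p : Fin r → ℕ) (u v : Fin r → ι → Polynomial ℂ), (∀ i, p i ≤ d) ∧
    (∀ i l, DB ((p i : ℤ) - a l) (u i l)) ∧ (∀ i l, DB ((d : ℤ) - p i - a l) (v i l)) ∧
    ∀ l m, S l m = ∑ i, (u i l * v i m - v i l * u i m)

noncomputable def nrk {ι : Type} [Fintype ι] (S : Matrix ι ι (Polynomial ℂ)) : ℕ :=
  (S.map (algebraMap (Polynomial ℂ) (RatFunc ℂ))).rank

lemma skew_apply {ι R : Type*} [Ring R] {S : Matrix ι ι R} (h : Sᵀ = -S) (i j : ι) :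
    S i j = - S j i := by
  have := congrFun (congrFun h j) i
  simpa using this

lemma skew_diag {ι : Type*} {S : Matrix ι ι (Polynomial ℂ)} (h : Sᵀ = -S) (i : ι) :
    S i i = 0 := self_eq_neg.1 (skew_apply h i i)

lemma dec_zero {ι : Type} (d : ℕ) (a : ι → ℕ) (S : Matrix ι ι (Polynomial ℂ)) (r : ℕ)
    (h : ∀ i j, S i j = 0) : Dec d a S r :=
  ⟨fun _ => 0, fun _ _ => 0, fun _ _ => 0, fun _ => Nat.zero_le _, fun _ _ => DB.zero _,
    fun _ _ => DB.zero _, fun l m => by simp [h]⟩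

lemma dec_mono {ι : Type} {d : ℕ} {a a' : ι → ℕ} {S : Matrix ι ι (Polynomial ℂ)} {r : ℕ}
    (h : Dec d a' S r) (haa : ∀ i, a i ≤ a' i) : Dec d a S r := by
  obtain ⟨p, u, v, h1, h2, h3, h4⟩ := h
  exact ⟨p, u, v, h1, fun i l => (h2 i l).mono (by have := haa l; omega),
    fun i l => (h3 i l).mono (by have := haa l; omega), h4⟩

lemma dec_delete {ι : Type} [DecidableEq ι] {d : ℕ} {a : ι → ℕ} {S : Matrix ι ι (Polynomial ℂ)}
    {r : ℕ} (j : ι) (h0 : ∀ l, S j l = 0) (h0' : ∀ l, S l j = 0)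
    (h : Dec d (fun l : {l // l ≠ j} => a l) (S.submatrix Subtype.val Subtype.val) r) :
    Dec d a S r := by
  obtain ⟨p, u, v, h1, h2, h3, h4⟩ := h
  refine ⟨p, fun i l => if h : l ≠ j then u i ⟨l, h⟩ else 0,
    fun i l => if h : l ≠ j then v i ⟨l, h⟩ else 0, h1, ?_, ?_, ?_⟩
  · intro i l
    by_cases hl : l ≠ j
    · simpa [hl] using h2 i ⟨l, hl⟩
    · simpa [hl] using DB.zero _
  · intro i l
    by_cases hl : l ≠ j
    · simpa [hl] using h3 i ⟨l, hl⟩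
    · simpa [hl] using DB.zero _
  · intro l m
    by_cases hl : l = j
    · simp [hl, h0]
    by_cases hm : m = j
    · simp [hm, h0']
    · simpa [hl, hm] using h4 ⟨l, hl⟩ ⟨m, hm⟩

/-- the modified matrix -/
noncomputable def moveMat {ι : Type} [DecidableEq ι] (S : Matrix ι ι (Polynomial ℂ)) (j : ι)
    (z : ι → Polynomial ℂ) : Matrix ι ι (Polynomial ℂ) :=
  Matrix.of fun l m => if l = j then (if m = j then 0 else - z m) else if m = j then z l else S l m

lemma moveMat_skew {ι : Type} [DecidableEq ι] (S : Matrix ι ι (Polynomial ℂ)) (hS : Sᵀ = -S) (j : ι)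
    (z : ι → Polynomial ℂ) : (moveMat S j z)ᵀ = - moveMat S j z := by
  ext1 l m
  simp only [moveMat, Matrix.transpose_apply, Matrix.neg_apply, Matrix.of_apply]
  split_ifs <;> simp [skew_apply hS m l]

lemma moveMat_DB {ι : Type} [DecidableEq ι] {d : ℕ} {a : ι → ℕ} (S : Matrix ι ι (Polynomial ℂ))
    (hD : ∀ i j, DB ((d : ℤ) - a i - a j) (S i j)) (j : ι)
    (z : ι → Polynomial ℂ) (hz : ∀ l, DB ((d : ℤ) - a l - a j - 1) (z l)) (l m : ι) :
    DB ((d : ℤ) - (Function.update a j (a j + 1) l : ℕ) - (Function.update a j (a j + 1) m : ℕ))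
      (moveMat S j z l m) := by
  simp only [moveMat, Matrix.of_apply]
  by_cases hl : l = j <;> by_cases hm : m = j
  · simpa [hl, hm] using DB.zero _
  · simp only [hl, hm, if_true, if_false, Function.update_self, ne_eq, not_false_eq_true,
      Function.update_of_ne]
    exact (hz m).neg.mono (by push_cast; omega)
  · simp only [hl, hm, if_true, if_false, Function.update_self, ne_eq, not_false_eq_true,
      Function.update_of_ne]
    exact (hz l).mono (by push_cast; omega)
  · simpa [hl, hm] using hD l m

lemma moveMat_rank {ι : Type} [Fintype ι] [DecidableEq ι] (S : Matrix ι ι (Polynomial ℂ))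
    (hS : Sᵀ = -S) (j : ι) (x z : ι → Polynomial ℂ) (g : Polynomial ℂ) (hg : g ≠ 0)
    (hx : ∀ l, ∑ q, S l q * x q = g * z l) :
    nrk (moveMat S j z) ≤ nrk S := by
  let φ := algebraMap (Polynomial ℂ) (RatFunc ℂ)
  have hφ : Function.Injective φ := IsFractionRing.injective _ _
  have hg' : φ g ≠ 0 := by rwa [Ne, map_eq_zero_iff _ hφ]
  have hxz : ∑ q, x q * z q = 0 := by
    apply mul_left_cancel₀ hg
    rw [mul_zero, Finset.mul_sum]
    have e1 : ∀ q, g * (x q * z q) = ∑ l, x q * S q l * x l := by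
      intro q
      rw [mul_left_comm, ← hx, Finset.mul_sum]
      exact Finset.sum_congr rfl fun _ _ => by ring
    simp only [e1]
    apply self_eq_neg.1
    conv_lhs => rw [Finset.sum_comm]
    simp only [← Finset.sum_neg_distrib]
    refine Finset.sum_congr rfl fun p _ => Finset.sum_congr rfl fun q _ => ?_
    rw [skew_apply hS q p]; ring
  let M : Matrix ι ι (RatFunc ℂ) := Matrix.of fun q m =>
    if m = j then φ (x q) / φ g else if q = m then 1 else 0
  let Sφ := S.map φ
  have e1 : ∀ l m, (Sφ * M) l m = if m = j then φ (z l) else φ (S l m) := by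
    intro l m
    rw [Matrix.mul_apply]
    by_cases hm : m = j
    · simp only [hm, M, Matrix.of_apply, if_true, Sφ, Matrix.map_apply]
      have : φ (z l) = φ (∑ q, S l q * x q) / φ g := by
        rw [hx, map_mul]; field_simp
      rw [this, map_sum, Finset.sum_div]
      refine Finset.sum_congr rfl fun q _ => ?_
      rw [map_mul, mul_div_assoc]
    · simp [hm, M, Sφ]
  have e2 : (moveMat S j z).map φ = Mᵀ * (Sφ * M) := by
    ext1 l m
    rw [Matrix.mul_apply]
    simp only [e1, Matrix.transpose_apply]
    by_cases hl : l = j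
    · by_cases hm : m = j
      · have : φ (∑ q, x q * z q) / φ g = 0 := by rw [hxz]; simp
        rw [map_sum, Finset.sum_div] at this
        simp only [hl, hm, M, Matrix.of_apply, if_true, moveMat, Matrix.map_apply, map_zero]
        rw [← this]
        refine Finset.sum_congr rfl fun q _ => ?_
        rw [map_mul]; ring
      · simp only [hl, hm, M, Matrix.of_apply, if_true, if_false, moveMat, Matrix.map_apply]
        have : φ (z m) = φ (∑ q, S m q * x q) / φ g := by
          rw [hx, map_mul]; field_simp
        rw [map_neg, this, map_sum, Finset.sum_div, ← Finset.sum_neg_distrib]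
        refine Finset.sum_congr rfl fun q _ => ?_
        rw [map_mul, skew_apply hS m q, map_neg]; ring
    · by_cases hm : m = j
      · simp [hl, hm, M, moveMat]
      · simp [hl, hm, M, moveMat]
  unfold nrk
  change ((moveMat S j z).map φ).rank ≤ Sφ.rank
  rw [e2]
  exact (Matrix.rank_mul_le_right _ _).trans (Matrix.rank_mul_le_left _ _)

lemma dec_move {ι : Type} [Fintype ι] [DecidableEq ι] {d : ℕ} {a : ι → ℕ}
    (S : Matrix ι ι (Polynomial ℂ)) (r : ℕ)
    (hS : Sᵀ = -S) (j : ι) (x z : ι → Polynomial ℂ) (g : Polynomial ℂ)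
    (hxj : x j = 1) (hxD : ∀ q, DB ((a q : ℤ) - a j) (x q)) (hg : DB 1 g)
    (hx : ∀ l, ∑ q, S l q * x q = g * z l)
    (h : Dec d (Function.update a j (a j + 1)) (moveMat S j z) r) : Dec d a S r := by
  obtain ⟨p, u, v, h1, h2, h3, h4⟩ := h
  let F : (ι → Polynomial ℂ) → ι → Polynomial ℂ := fun u l =>
    if l = j then g * u j - ∑ q ∈ Finset.univ.erase j, x q * u q else u l
  have hF : ∀ (c : ℤ) (u : ι → Polynomial ℂ),
      (∀ l, DB (c - (Function.update a j (a j + 1) l : ℕ)) (u l)) → ∀ l, DB (c - a l) (F u l) := by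
    intro c u hu l
    by_cases hl : l = j
    · simp only [F, hl, if_true]
      refine DB.sub ?_ (DB.sum _ fun q hq => ?_)
      · have := hu j
        rw [Function.update_self] at this
        exact (hg.mul this).mono (by push_cast; omega)
      · have := hu q
        rw [Function.update_of_ne (Finset.ne_of_mem_erase hq)] at this
        exact ((hxD q).mul this).mono (by omega)
    · have := hu l
      rw [Function.update_of_ne hl] at this
      simpa [F, hl] using this
  have hzero : ∀ l, l ≠ j → S l j = g * moveMat S j z l j
      - ∑ q ∈ Finset.univ.erase j, x q * moveMat S j z l q := by
    intro l hl
    have e := hx l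
    rw [← Finset.add_sum_erase _ _ (Finset.mem_univ j), hxj, mul_one] at e
    have e3 : moveMat S j z l j = z l := by simp [moveMat, hl]
    rw [e3, ← e, eq_sub_iff_add_eq]
    congr 1
    refine Finset.sum_congr rfl fun q hq => ?_
    simp [moveMat, hl, Finset.ne_of_mem_erase hq, mul_comm]
  have hlj : ∀ l, l ≠ j → S l j = ∑ i, (u i l * F (v i) j - v i l * F (u i) j) := by
    intro l hl
    rw [hzero l hl]
    simp only [h4, F, if_true, Finset.mul_sum]
    rw [Finset.sum_comm, ← Finset.sum_sub_distrib]
    refine Finset.sum_congr rfl fun i _ => ?_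
    have : ∑ q ∈ Finset.univ.erase j, x q * (u i l * v i q - v i l * u i q)
      = u i l * (∑ q ∈ Finset.univ.erase j, x q * v i q)
        - v i l * (∑ q ∈ Finset.univ.erase j, x q * u i q) := by
      rw [Finset.mul_sum, Finset.mul_sum, ← Finset.sum_sub_distrib]
      exact Finset.sum_congr rfl fun q _ => by ring
    rw [this]; ring
  refine ⟨p, fun i => F (u i), fun i => F (v i), h1, fun i => hF _ _ (h2 i),
    fun i => hF _ _ (h3 i), ?_⟩
  intro l m
  beta_reduce
  by_cases hl : l = j
  · by_cases hm : m = j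
    · rw [hl, hm, skew_diag hS]
      exact (Finset.sum_eq_zero fun i _ => by ring).symm
    · rw [skew_apply hS, hl, hlj m hm, ← Finset.sum_neg_distrib]
      refine Finset.sum_congr rfl fun i _ => ?_
      have : ∀ u : ι → Polynomial ℂ, F u m = u m := fun u => by simp [F, hm]
      rw [this, this]; ring
  · have e : ∀ u : ι → Polynomial ℂ, F u l = u l := fun u => by simp [F, hl]
    by_cases hm : m = j
    · rw [hm, hlj l hl]
      refine Finset.sum_congr rfl fun i _ => ?_
      rw [e, e]
    · have e' : ∀ u : ι → Polynomial ℂ, F u m = u m := fun u => by simp [F, hm]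
      simp only [e, e', ← h4]
      simp [moveMat, hl, hm]

/-- Schur complement -/
noncomputable def pivMat {ι : Type} (S : Matrix ι ι (Polynomial ℂ)) (i j : ι) (c : ℂ) :
    Matrix ι ι (Polynomial ℂ) :=
  Matrix.of fun l m => S l m - C c⁻¹ * (S l j * S i m - S l i * S j m)

lemma pivMat_skew {ι : Type} (S : Matrix ι ι (Polynomial ℂ)) (hS : Sᵀ = -S) (i j : ι) (c : ℂ) :
    (pivMat S i j c)ᵀ = - pivMat S i j c := by
  ext1 l m
  simp only [pivMat, Matrix.transpose_apply, Matrix.neg_apply, Matrix.of_apply]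
  rw [skew_apply hS m l, skew_apply hS m i, skew_apply hS m j, skew_apply hS j l,
    skew_apply hS i l]
  ring

lemma pivMat_row {ι : Type} (S : Matrix ι ι (Polynomial ℂ)) (hS : Sᵀ = -S) (i j : ι) (c : ℂ)
    (hc : c ≠ 0) (hij : S i j = C c) (l : ι) : pivMat S i j c l i = 0 ∧ pivMat S i j c l j = 0 := by
  have hcc : (C c⁻¹ * C c : Polynomial ℂ) = 1 := by
    rw [← C_mul, inv_mul_cancel₀ hc, C_1]
  have hji : S j i = - C c := by rw [skew_apply hS, hij]
  simp only [pivMat, Matrix.of_apply, skew_diag hS, hij, hji]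
  constructor
  · linear_combination (- S l i) * hcc
  · linear_combination (- S l j) * hcc

lemma pivMat_rank {ι : Type} [Fintype ι] [DecidableEq ι] (S : Matrix ι ι (Polynomial ℂ))
    (hS : Sᵀ = -S) (i j : ι) (c : ℂ)
    (hc : c ≠ 0) (hij : S i j = C c) : nrk (pivMat S i j c) + 2 ≤ nrk S := by
  let φ := algebraMap (Polynomial ℂ) (RatFunc ℂ)
  have hφ : Function.Injective φ := IsFractionRing.injective _ _
  have hji : S j i = - C c := by rw [skew_apply hS, hij]
  refine rank_pivot _ _ i j ?_ ?_ ?_ ?_ ?_ ?_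
  · intro x hx
    have hx' : ∀ l, ∑ q, φ (S l q) * x q = 0 := fun l => by
      simpa [Matrix.mulVec, dotProduct] using congrFun hx l
    ext1 l
    simp only [Matrix.mulVec, dotProduct, Matrix.map_apply, pivMat, Matrix.of_apply, Pi.zero_apply]
    change ∑ q, φ _ * x q = 0
    have : ∀ q, φ (S l q - C c⁻¹ * (S l j * S i q - S l i * S j q)) * x q =
      φ (S l q) * x q - φ (C c⁻¹) * φ (S l j) * (φ (S i q) * x q)
        + φ (C c⁻¹) * φ (S l i) * (φ (S j q) * x q) := by
      intro q; simp only [map_sub, map_mul]; ring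
    simp only [this, Finset.sum_add_distrib, Finset.sum_sub_distrib, ← Finset.mul_sum, hx']
    ring
  · ext1 l
    simp [(pivMat_row S hS i j c hc hij l).1]
  · ext1 l
    simp [(pivMat_row S hS i j c hc hij l).2]
  · rw [Matrix.map_apply, Ne, map_eq_zero_iff _ hφ, hij]; simpa using hc
  · rw [Matrix.map_apply, Ne, map_eq_zero_iff _ hφ, hji]; simpa using hc
  · rw [Matrix.map_apply, skew_diag hS, map_zero]

lemma dec_pivot {ι : Type} [Fintype ι] [DecidableEq ι] {d : ℕ} {a : ι → ℕ}
    (S : Matrix ι ι (Polynomial ℂ)) (r : ℕ)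
    (hS : Sᵀ = -S) (hD : ∀ i j, DB ((d : ℤ) - a i - a j) (S i j)) (i j : ι) (c : ℂ)
    (hij : a i + a j = d)
    (h : Dec d a (pivMat S i j c) r) : Dec d a S (r + 1) := by
  obtain ⟨p, u, v, h1, h2, h3, h4⟩ := h
  refine ⟨Fin.cons (a i) p, Fin.cons (fun l => C c⁻¹ * S l j) u, Fin.cons (fun l => S i l) v,
    ?_, ?_, ?_, ?_⟩
  · refine Fin.cases ?_ ?_
    · simp only [Fin.cons_zero]; omega
    · simpa using h1
  · refine Fin.cases ?_ ?_
    · intro l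
      simp only [Fin.cons_zero]
      exact ((DB.const _).mul (hD l j)).mono (by omega)
    · simpa using h2
  · refine Fin.cases ?_ ?_
    · intro l
      simp only [Fin.cons_zero]
      exact (hD i l)
    · simpa using h3
  · intro l m
    rw [Fin.sum_univ_succ]
    simp only [Fin.cons_zero, Fin.cons_succ]
    rw [← h4]
    simp only [pivMat, Matrix.of_apply]
    rw [skew_apply hS i l, skew_apply hS m j]
    ring

lemma DB.div_linear {c : ℤ} {α : ℂ} {z : Polynomial ℂ} (h : DB c ((X - C α) * z)) :
    DB (c - 1) z := by
  by_cases hz : z = 0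
  · rw [hz]; exact DB.zero _
  have hne : (X - C α) * z ≠ 0 := mul_ne_zero (X_sub_C_ne_zero α) hz
  have hd : ((X - C α) * z).natDegree = 1 + z.natDegree := by
    rw [natDegree_mul (X_sub_C_ne_zero α) hz, natDegree_X_sub_C]
  have : ¬ (c < (((X - C α) * z).natDegree : ℕ)) := fun hlt =>
    hne (leadingCoeff_eq_zero.1 (h _ hlt))
  rw [hd] at this
  exact (DB.of_natDegree le_rfl).mono (by push_cast at this; omega)

lemma DB.of_lc {c : ℤ} {p : Polynomial ℂ} (h : DB c p) (h0 : lc c p = 0) : DB (c - 1) p := by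
  intro n hn
  by_cases hcn : c < n
  · exact h n hcn
  · have : c = n := by omega
    subst this
    simpa [lc] using h0

def Piv {ι : Type} (d : ℕ) (a : ι → ℕ) (S : Matrix ι ι (Polynomial ℂ)) : Prop :=
  ∃ (i j : ι) (c : ℂ), c ≠ 0 ∧ S i j = C c ∧ a i + a j = d

def Mov {ι : Type} [Fintype ι] (d : ℕ) (a : ι → ℕ) (S : Matrix ι ι (Polynomial ℂ)) : Prop :=
  ∃ (j : ι) (x z : ι → Polynomial ℂ) (g : Polynomial ℂ), x j = 1 ∧
    (∀ q, DB ((a q : ℤ) - a j) (x q)) ∧ DB 1 g ∧ g ≠ 0 ∧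
    (∀ l, DB ((d : ℤ) - a l - a j - 1) (z l)) ∧ ∀ l, ∑ q, S l q * x q = g * z l

lemma exists_min_supp {ι : Type} [Fintype ι] (a : ι → ℕ) (v : ι → ℂ) (hv : v ≠ 0) :
    ∃ j, v j ≠ 0 ∧ ∀ q, v q ≠ 0 → a j ≤ a q := by
  classical
  obtain ⟨i, hi⟩ := Function.ne_iff.1 hv
  obtain ⟨j, hj, hmin⟩ := Finset.exists_min_image (Finset.univ.filter fun q => v q ≠ 0) a
    ⟨i, by simpa using hi⟩
  exact ⟨j, by simpa using hj, fun q hq => hmin q (by simpa using hq)⟩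

lemma mov_finite {ι : Type} [Fintype ι] [DecidableEq ι] {d : ℕ} {a : ι → ℕ}
    (S : Matrix ι ι (Polynomial ℂ)) (hD : ∀ i j, DB ((d : ℤ) - a i - a j) (S i j)) (α : ℂ)
    (h : S.det.eval α = 0) : Mov d a S := by
  have h' : (S.map (eval α)).det = 0 := by
    rw [← h, ← coe_evalRingHom, RingHom.map_det]; rfl
  obtain ⟨v, hv, hSv⟩ := Matrix.exists_mulVec_eq_zero_iff.2 h'
  obtain ⟨j, hj, hmin⟩ := exists_min_supp a v hv
  let x : ι → Polynomial ℂ := fun q => C (v q / v j)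
  have hxD : ∀ q, DB ((a q : ℤ) - a j) (x q) := by
    intro q
    by_cases hq : v q = 0
    · simpa [x, hq] using DB.zero _
    · exact (DB.const _).mono (by have := hmin q hq; omega)
  have hdvd : ∀ l, ∃ z, ∑ q, S l q * x q = (X - C α) * z := by
    intro l
    have : (∑ q, S l q * x q).IsRoot α := by
      have := congrFun hSv l
      simp only [Matrix.mulVec, dotProduct, Matrix.map_apply, Pi.zero_apply] at this
      simp only [IsRoot, eval_finsetSum, eval_mul, x, eval_C]
      simp only [← mul_div_assoc, ← Finset.sum_div, this, zero_div]
    exact dvd_iff_isRoot.2 this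
  choose z hz using hdvd
  refine ⟨j, x, z, X - C α, by simp [x, hj], hxD, DB.of_natDegree (n := 1) (by simp),
    X_sub_C_ne_zero α, fun l => ?_, hz⟩
  apply DB.div_linear (α := α)
  rw [← hz]
  exact DB.sum _ fun q _ => ((hD l q).mul (hxD q)).mono (by omega)

lemma mov_infinite {ι : Type} [Fintype ι] [DecidableEq ι] {d : ℕ} {a : ι → ℕ}
    (S : Matrix ι ι (Polynomial ℂ)) (hD : ∀ i j, DB ((d : ℤ) - a i - a j) (S i j))
    (h : (Matrix.of fun i j => lc ((d : ℤ) - a i - a j) (S i j)).det = 0) : Mov d a S := by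
  obtain ⟨v, hv, hSv⟩ := Matrix.exists_mulVec_eq_zero_iff.2 h
  obtain ⟨j, hj, hmin⟩ := exists_min_supp a v hv
  let x : ι → Polynomial ℂ := fun q => C (v q / v j) * X ^ (a q - a j)
  have hxD : ∀ q, DB ((a q : ℤ) - a j) (x q) := by
    intro q
    by_cases hq : v q = 0
    · simpa [x, hq] using DB.zero _
    · exact ((DB.const _).mul (DB.X_pow _)).mono (by have := hmin q hq; omega)
  have hxl : ∀ q, lc ((a q : ℤ) - a j) (x q) = v q / v j := by
    intro q
    by_cases hq : v q = 0
    · simp [x, hq, lc]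
    · have := hmin q hq
      have e : ((a q : ℤ) - a j) = ((a q - a j : ℕ) : ℤ) := by omega
      rw [e, lc, if_pos (by positivity), Int.toNat_natCast]
      simp [x]
  refine ⟨j, x, fun l => ∑ q, S l q * x q, 1, by simp [x, hj], hxD,
    (DB.const 1).mono (by norm_num), one_ne_zero, fun l => ?_, fun l => (one_mul _).symm⟩
  have e : ∀ q, (d : ℤ) - a l - a j = ((d : ℤ) - a l - a q) + (a q - a j) := fun q => by ring
  apply DB.of_lc
  · exact DB.sum _ fun q _ => ((hD l q).mul (hxD q)).mono (by omega)
  · rw [lc_sum]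
    have := congrFun hSv l
    simp only [Matrix.mulVec, dotProduct, Matrix.of_apply, Pi.zero_apply] at this
    have e2 : ∀ q, lc ((d : ℤ) - a l - a j) (S l q * x q)
        = lc ((d : ℤ) - a l - a q) (S l q) * v q / v j := by
      intro q
      rw [e q, lc_mul (hD l q) (hxD q), hxl, mul_div_assoc]
    simp only [e2, ← Finset.sum_div, this, zero_div]

lemma piv_or_mov {ι : Type} [Fintype ι] [DecidableEq ι] [Nonempty ι] {d : ℕ} {a : ι → ℕ}
    (S : Matrix ι ι (Polynomial ℂ)) (hD : ∀ i j, DB ((d : ℤ) - a i - a j) (S i j)) :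
    Piv d a S ∨ Mov d a S := by
  by_cases h1 : ∃ α, S.det.eval α = 0
  · obtain ⟨α, hα⟩ := h1
    exact Or.inr (mov_finite S hD α hα)
  by_cases h2 : (Matrix.of fun i j => lc ((d : ℤ) - a i - a j) (S i j)).det = 0
  · exact Or.inr (mov_infinite S hD h2)
  left
  push Not at h1
  have hdeg : S.det.degree = 0 := by
    by_contra hne
    obtain ⟨α, hα⟩ := IsAlgClosed.exists_root S.det hne
    exact h1 α hα
  have hdet0 : S.det ≠ 0 := by
    intro h0; rw [h0] at hdeg; simp at hdeg
  obtain ⟨k1, k2⟩ := DB_det S (fun i => (d : ℤ) - a i) (fun j => - (a j : ℤ)) (fun i j => by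
    simpa [sub_eq_add_neg] using hD i j)
  simp only [← sub_eq_add_neg] at k2
  rw [← k2] at h2
  set s := ∑ i, ((d : ℤ) - a i) + ∑ i, -(a i : ℤ) with hs
  have hs0 : s = 0 := by
    by_contra hne
    apply h2
    unfold lc
    split_ifs with hpos
    · apply coeff_eq_zero_of_degree_lt
      rw [hdeg]
      have : 0 < s.toNat := by omega
      exact_mod_cast this
    · rfl
  rw [Matrix.det_apply] at hdet0
  obtain ⟨σ, -, hσ⟩ := Finset.exists_ne_zero_of_sum_ne_zero hdet0
  have hprod : ∏ i, S (σ i) i ≠ 0 := by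
    intro h0; apply hσ; rw [h0, smul_zero]
  rw [Finset.prod_ne_zero_iff] at hprod
  have hnn : ∀ i ∈ Finset.univ, 0 ≤ (d : ℤ) - a (σ i) - a i := by
    intro i hi
    by_contra hlt
    exact hprod i hi ((hD (σ i) i).eq_zero (by omega))
  have hsum : ∑ i, ((d : ℤ) - a (σ i) - a i) = 0 := by
    rw [← hs0, hs, Finset.sum_sub_distrib, Equiv.sum_comp σ (fun i => (d : ℤ) - a i),
      Finset.sum_neg_distrib, sub_eq_add_neg]
  have hall := (Finset.sum_eq_zero_iff_of_nonneg hnn).1 hsum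
  obtain ⟨i⟩ := ‹Nonempty ι›
  have hi := hall i (Finset.mem_univ i)
  have hDi := hD (σ i) i
  rw [hi] at hDi
  refine ⟨σ i, i, (S (σ i) i).coeff 0, ?_, hDi.eq_C, by omega⟩
  intro h0
  apply hprod i (Finset.mem_univ i)
  rw [hDi.eq_C, h0, C_0]

lemma sum_update_lt {ι : Type} [Fintype ι] [DecidableEq ι] (d : ℕ) (a : ι → ℕ) (j : ι) (b : ℕ)
    (hj : a j ≤ d) (hb : a j < b) :
    ∑ i, (d + 1 - Function.update a j b i + 1) < ∑ i, (d + 1 - a i + 1) := by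
  apply Finset.sum_lt_sum
  · intro i _
    by_cases h : i = j
    · subst h; simp; omega
    · simp [h]
  · exact ⟨j, Finset.mem_univ j, by simp; omega⟩

theorem decomp (d : ℕ) : ∀ (N : ℕ) (ι : Type) [Fintype ι] [DecidableEq ι] (a : ι → ℕ)
    (S : Matrix ι ι (Polynomial ℂ)) (r : ℕ), Sᵀ = -S → (∀ i j, DB ((d : ℤ) - a i - a j) (S i j)) →
    nrk S ≤ 2 * r → ∑ i, (d + 1 - a i + 1) ≤ N → Dec d a S r := by
  intro N
  induction N using Nat.strong_induction_on with
  | _ N ih =>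
  intro ι _ _ a S r hS hD hr hN
  rcases isEmpty_or_nonempty ι with he | hne
  · exact dec_zero d a S r fun i => he.elim i
  by_cases hbig : ∃ j, d < a j
  · obtain ⟨j, hj⟩ := hbig
    refine dec_delete j (fun l => (hD j l).eq_zero (by omega)) (fun l => (hD l j).eq_zero (by omega)) ?_
    have hlt : ∑ i : {l // l ≠ j}, (d + 1 - a i + 1) < ∑ i, (d + 1 - a i + 1) := by
      rw [← Finset.add_sum_erase _ _ (Finset.mem_univ j)]
      have : ∑ i : {l // l ≠ j}, (d + 1 - a i + 1) = ∑ i ∈ Finset.univ.erase j, (d + 1 - a i + 1) :=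
        (Finset.sum_subtype (Finset.univ.erase j) (by simp) (fun i => d + 1 - a i + 1)).symm
      rw [this]; omega
    refine ih _ (lt_of_lt_of_le hlt hN) _ _ _ r ?_ ?_ ?_ le_rfl
    · rw [Matrix.transpose_submatrix, hS]; rfl
    · intro i k; exact hD i k
    · refine le_trans ?_ hr
      unfold nrk
      rw [← Matrix.submatrix_map]
      exact Matrix.rank_submatrix_le _ _ _
  push Not at hbig
  rcases piv_or_mov S hD with ⟨i, j, c, hc, hij, hadd⟩ | ⟨j, x, z, g, hxj, hxD, hg, hg0, hz, hx⟩
  · have hrk := pivMat_rank S hS i j c hc hij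
    obtain ⟨r', rfl⟩ : ∃ r', r = r' + 1 := ⟨r - 1, by omega⟩
    refine dec_pivot S r' hS hD i j c hadd ?_
    have hi := hbig i
    refine dec_mono (a' := Function.update a i (d + 1)) ?_ ?_
    · refine ih _ (lt_of_lt_of_le (sum_update_lt d a i (d + 1) hi (by omega)) hN) _ _ _ r'
        (pivMat_skew S hS i j c) ?_ (by omega) le_rfl
      have hcol := fun l => (pivMat_row S hS i j c hc hij l).1
      intro l m
      by_cases hm : m = i
      · rw [hm, hcol]; exact DB.zero _
      by_cases hl : l = i
      · rw [hl, skew_apply (pivMat_skew S hS i j c), hcol, neg_zero]; exact DB.zero _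
      rw [Function.update_of_ne hm, Function.update_of_ne hl]
      simp only [pivMat, Matrix.of_apply]
      refine (hD l m).sub (DB.mono ((DB.const _).mul (DB.sub (c := (d : ℤ) - a l - a m) ?_ ?_))
        (by omega))
      · exact ((hD l j).mul (hD i m)).mono (by omega)
      · exact ((hD l i).mul (hD j m)).mono (by omega)
    · intro l
      by_cases hl : l = i
      · subst hl; simp; omega
      · simp [hl]
  · refine dec_move S r hS j x z g hxj hxD hg hx ?_
    exact ih _ (lt_of_lt_of_le (sum_update_lt d a j _ (hbig j) (by omega)) hN) _ _ _ r
      (moveMat_skew S hS j z) (moveMat_DB S hD j z hz)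
      ((moveMat_rank S hS j x z g hg0 hx).trans hr) le_rfl

/-- the pairing form -/
def pf {r : ℕ} {n R : Type*} [CommRing R] (W : Matrix (Fin r ⊕ Fin r) n R) : Matrix n n R :=
  Matrix.of fun l m => ∑ i, (W (Sum.inr i) l * W (Sum.inl i) m - W (Sum.inl i) l * W (Sum.inr i) m)

lemma pf_eq {r : ℕ} {n R : Type*} [Fintype n] [CommRing R] (W : Matrix (Fin r ⊕ Fin r) n R) :
    pf W = Wᵀ * (Matrix.J (Fin r) R * W) := by
  ext l m
  simp only [pf, Matrix.of_apply, Matrix.mul_apply, Matrix.transpose_apply, Fintype.sum_sum_type,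
    Matrix.J, Matrix.fromBlocks_apply₁₁, Matrix.fromBlocks_apply₁₂, Matrix.fromBlocks_apply₂₁,
    Matrix.fromBlocks_apply₂₂, Matrix.zero_apply, Matrix.neg_apply, Matrix.one_apply]
  simp [Finset.sum_sub_distrib]
  ring

lemma pf_rank {r m : ℕ} {K : Type*} [Field K] (W : Matrix (Fin r ⊕ Fin r) (Fin m) K)
    (f : Fin r ⊕ Fin r → Fin m) (h : (W.submatrix id f).det ≠ 0) : (pf W).rank = 2 * r := by
  apply le_antisymm
  · rw [pf_eq]
    refine ((Matrix.rank_mul_le_right _ _).trans (Matrix.rank_mul_le_right _ _)).trans ?_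
    refine (Matrix.rank_le_card_height W).trans ?_
    simp; omega
  · have e : (pf W).submatrix f f = pf (W.submatrix id f) := by
      ext l m; simp [pf]
    have h2 : (pf (W.submatrix id f)).det ≠ 0 := by
      rw [pf_eq, Matrix.det_mul, Matrix.det_mul, Matrix.det_transpose]
      exact mul_ne_zero h (mul_ne_zero (Matrix.isUnit_det_J _ _).ne_zero h)
    have h3 := Matrix.rank_of_det_ne_zero h2
    have h4 := Matrix.rank_submatrix_le (pf W) f f
    rw [e, h3] at h4
    simp at h4
    omega

lemma pf_skew {r : ℕ} {n R : Type*} [CommRing R] (W : Matrix (Fin r ⊕ Fin r) n R) :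
    (pf W)ᵀ = - pf W := by
  ext l m
  simp only [pf, Matrix.transpose_apply, Matrix.of_apply, Matrix.neg_apply,
    ← Finset.sum_neg_distrib]
  exact Finset.sum_congr rfl fun i _ => by ring

lemma pf_map {r : ℕ} {n R T : Type*} [CommRing R] [CommRing T] (φ : R →+* T)
    (W : Matrix (Fin r ⊕ Fin r) n R) : (pf W).map φ = pf (W.map φ) := by
  ext l m
  simp [pf]

lemma pf_coeff {r m d : ℕ} (W : Matrix (Fin r ⊕ Fin r) (Fin m) (Polynomial ℂ))
    (b : Fin r ⊕ Fin r → ℕ) (hb : ∀ i, b (Sum.inl i) + b (Sum.inr i) = d)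
    (hW : ∀ s l, (W s l).natDegree ≤ b s) :
    (Matrix.of fun l m => (pf W l m).coeff d) = pf (Matrix.of fun s l => (W s l).coeff (b s)) := by
  ext l m
  simp only [pf, Matrix.of_apply, finsetSum_coeff, coeff_sub]
  refine Finset.sum_congr rfl fun i _ => ?_
  congr 1
  · rw [← hb i, add_comm, coeff_mul_add_eq_of_natDegree_le (hW _ _) (hW _ _)]
  · rw [← hb i, coeff_mul_add_eq_of_natDegree_le (hW _ _) (hW _ _)]

lemma pf_natDegree {r m d : ℕ} (W : Matrix (Fin r ⊕ Fin r) (Fin m) (Polynomial ℂ))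
    (b : Fin r ⊕ Fin r → ℕ) (hb : ∀ i, b (Sum.inl i) + b (Sum.inr i) = d)
    (hW : ∀ s l, (W s l).natDegree ≤ b s) (l k : Fin m) : (pf W l k).natDegree ≤ d := by
  simp only [pf, Matrix.of_apply]
  refine natDegree_sum_le_of_forall_le _ _ fun i _ => ?_
  refine (natDegree_sub_le _ _).trans (max_le ?_ ?_)
  · refine natDegree_mul_le.trans ?_
    have := hW (Sum.inr i) l
    have := hW (Sum.inl i) k
    have := hb i
    omega
  · refine natDegree_mul_le.trans ?_
    have := hW (Sum.inr i) k
    have := hW (Sum.inl i) l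
    have := hb i
    omega

lemma pf_expand {r m : ℕ} (W W0 : Matrix (Fin r ⊕ Fin r) (Fin m) (Polynomial ℂ)) :
    ∃ B E : Matrix (Fin m) (Fin m) (Polynomial ℂ), ∀ ε : ℂ, ∀ l k,
      pf (W + (C ε) • W0) l k = pf W l k + C ε * B l k + C (ε ^ 2) * E l k := by
  refine ⟨Matrix.of fun l m => ∑ i, (W (Sum.inr i) l * W0 (Sum.inl i) m
    - W (Sum.inl i) l * W0 (Sum.inr i) m + W0 (Sum.inr i) l * W (Sum.inl i) m
    - W0 (Sum.inl i) l * W (Sum.inr i) m), pf W0, fun ε l k => ?_⟩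
  simp only [pf, Matrix.of_apply, Matrix.add_apply, Matrix.smul_apply, smul_eq_mul, Finset.mul_sum,
    ← Finset.sum_add_distrib]
  refine Finset.sum_congr rfl fun i _ => ?_
  rw [C_pow]
  ring

/-- the explicit matrix without eigenvalues -/
noncomputable def W0 {r : ℕ} (m : ℕ) (b : Fin r ⊕ Fin r → ℕ) :
    Matrix (Fin r ⊕ Fin r) (Fin m) (Polynomial ℂ) :=
  Matrix.of fun s l => if l.val = (finSumFinEquiv s).val then X ^ b s else
    if l.val = (finSumFinEquiv s).val + 1 then 1 else 0

def f1 {r m : ℕ} (h : r + r + 1 ≤ m) (s : Fin r ⊕ Fin r) : Fin m :=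
  ⟨(finSumFinEquiv s).val, by omega⟩

def f2 {r m : ℕ} (h : r + r + 1 ≤ m) (s : Fin r ⊕ Fin r) : Fin m :=
  ⟨(finSumFinEquiv s).val + 1, by omega⟩

lemma W0_det1 {r m : ℕ} (h : r + r + 1 ≤ m) (b : Fin r ⊕ Fin r → ℕ) :
    ((W0 m b).submatrix id (f1 h)).det = X ^ (∑ s, b s) := by
  rw [← Matrix.det_submatrix_equiv_self (finSumFinEquiv (m := r) (n := r)).symm,
    Matrix.det_of_isUpperTriangular]
  · simp only [Matrix.submatrix_apply, W0, f1, Matrix.of_apply, id, if_true]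
    rw [Equiv.prod_comp finSumFinEquiv.symm (fun s => (X : Polynomial ℂ) ^ b s),
      Finset.prod_pow_eq_pow_sum]
  · intro i j hij
    have hij' : j.val < i.val := hij
    simp only [Matrix.submatrix_apply, W0, f1, Matrix.of_apply, id, Equiv.apply_symm_apply]
    rw [if_neg (by omega), if_neg (by omega)]

lemma W0_det2 {r m : ℕ} (h : r + r + 1 ≤ m) (b : Fin r ⊕ Fin r → ℕ) :
    ((W0 m b).submatrix id (f2 h)).det = 1 := by
  rw [← Matrix.det_submatrix_equiv_self (finSumFinEquiv (m := r) (n := r)).symm,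
    Matrix.det_of_isLowerTriangular]
  · simp [W0, f2]
  · intro i j hij
    have hij' : i.val < j.val := hij
    simp only [Matrix.submatrix_apply, W0, f2, Matrix.of_apply, id, Equiv.apply_symm_apply]
    rw [if_neg (by omega), if_neg (by omega)]

lemma W0_natDegree {r m : ℕ} (b : Fin r ⊕ Fin r → ℕ) (s : Fin r ⊕ Fin r) (l : Fin m) :
    (W0 m b s l).natDegree ≤ b s := by
  simp only [W0, Matrix.of_apply]
  split_ifs <;> simp

lemma det_rowDeg {σ : Type} [Fintype σ] [DecidableEq σ] (M : Matrix σ σ (Polynomial ℂ)) (b : σ → ℕ)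
    (h : ∀ s l, (M s l).natDegree ≤ b s) : M.det.natDegree ≤ ∑ s, b s ∧
      M.det.coeff (∑ s, b s) = (Matrix.of fun s l => (M s l).coeff (b s)).det := by
  obtain ⟨h1, h2⟩ := DB_det M (fun s => (b s : ℤ)) (fun _ => 0) (fun s l => by
    simpa using DB.of_natDegree (h s l))
  have e : ∑ s, (b s : ℤ) + ∑ _s : σ, (0 : ℤ) = ((∑ s, b s : ℕ) : ℤ) := by simp
  rw [e] at h1 h2
  refine ⟨h1.natDegree, ?_⟩
  simpa only [lc, add_zero, Nat.cast_nonneg, if_true, Int.toNat_natCast] using h2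

lemma perturb {r m : ℕ} (hm : r + r + 1 ≤ m) (b : Fin r ⊕ Fin r → ℕ) (hb : ∑ s, b s ≠ 0)
    (W : Matrix (Fin r ⊕ Fin r) (Fin m) (Polynomial ℂ)) (hW : ∀ s l, (W s l).natDegree ≤ b s) :
    ∃ N : ℕ, ∀ n : ℕ, N ≤ n →
      (∀ α, ∃ f : Fin r ⊕ Fin r → Fin m,
        ((((W0 m b + C (n : ℂ) • W).map (eval α))).submatrix id f).det ≠ 0) ∧
      ∃ f : Fin r ⊕ Fin r → Fin m,
        (((Matrix.of fun s l => ((W0 m b + C (n : ℂ) • W) s l).coeff (b s))).submatrix id f).det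
          ≠ 0 := by
  set D := ∑ s, b s with hD
  let V : Matrix (Fin r ⊕ Fin r) (Fin m) (Polynomial (Polynomial ℂ)) :=
    (W0 m b).map (mapRingHom (C : ℂ →+* Polynomial ℂ)) +
      (C X : Polynomial (Polynomial ℂ)) • W.map (mapRingHom (C : ℂ →+* Polynomial ℂ))
  let ev : ℂ → Polynomial (Polynomial ℂ) →+* Polynomial ℂ := fun t => mapRingHom (evalRingHom t)
  have hcomp : ∀ (t : ℂ) (p : Polynomial ℂ), ev t (mapRingHom (C : ℂ →+* Polynomial ℂ) p) = p := by
    intro t p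
    simp only [ev, coe_mapRingHom, Polynomial.map_map]
    have : (evalRingHom t).comp (C : ℂ →+* Polynomial ℂ) = RingHom.id ℂ := by ext; simp
    rw [this, Polynomial.map_id]
  have hV : ∀ t : ℂ, V.map (ev t) = W0 m b + C t • W := by
    intro t
    ext1 s l
    simp only [V, Matrix.map_apply, Matrix.add_apply, Matrix.smul_apply, smul_eq_mul, map_add,
      map_mul, hcomp]
    simp [ev]
  have hdeg : ∀ (t : ℂ) s l, ((W0 m b + C t • W) s l).natDegree ≤ b s := by
    intro t s l
    refine (natDegree_add_le _ _).trans (max_le (W0_natDegree b s l) ?_)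
    exact (natDegree_C_mul_le _ _).trans (hW s l)
  let Fd : (Fin r ⊕ Fin r → Fin m) → Polynomial (Polynomial ℂ) := fun f => (V.submatrix id f).det
  have hF : ∀ f (t : ℂ), ev t (Fd f) = ((W0 m b + C t • W).submatrix id f).det := by
    intro f t
    simp only [Fd]
    rw [RingHom.map_det, ← hV t]
    rfl
  have hFdeg : ∀ f, (Fd f).natDegree ≤ D := by
    intro f
    rw [natDegree_le_iff_coeff_eq_zero]
    intro n hn
    apply Polynomial.funext
    intro t
    have h1 : ((ev t (Fd f)).coeff n) = eval t ((Fd f).coeff n) := by simp [ev, coeff_map]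
    rw [← h1, hF, eval_zero]
    exact coeff_eq_zero_of_natDegree_lt
      (lt_of_le_of_lt (det_rowDeg _ b (fun s l => hdeg t s (f l))).1 hn)
  let R := resultant (Fd (f1 hm)) (Fd (f2 hm)) D D
  obtain ⟨p, q, -, -, hpq⟩ := exists_mul_add_mul_eq_C_resultant (Fd (f1 hm)) (Fd (f2 hm))
    (hFdeg _) (hFdeg _) (Or.inl hb)
  have hF10 : ev 0 (Fd (f1 hm)) = X ^ D := by
    rw [hF]; simp [W0_det1, hD]
  have hF20 : ev 0 (Fd (f2 hm)) = 1 := by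
    rw [hF]; simp [W0_det2]
  have hR0 : eval 0 R = 1 := by
    have := resultant_map_map (Fd (f1 hm)) (Fd (f2 hm)) D D (evalRingHom (0 : ℂ))
    change resultant (ev 0 (Fd (f1 hm))) (ev 0 (Fd (f2 hm))) D D = eval 0 R at this
    rw [← this, hF10, hF20, resultant_one_right]
    simp
  have hL0 : eval 0 ((Fd (f1 hm)).coeff D) = 1 := by
    have h1 : ((ev 0 (Fd (f1 hm))).coeff D) = eval 0 ((Fd (f1 hm)).coeff D) := by
      simp [ev, coeff_map]
    rw [← h1, hF10]; simp
  let H := R * (Fd (f1 hm)).coeff D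
  have hH : H ≠ 0 := by
    intro h0
    have : eval 0 H = 1 := by simp only [H, eval_mul, hR0, hL0, mul_one]
    rw [h0] at this; simp at this
  have hfin : ∀ᶠ n : ℕ in Filter.atTop, eval (n : ℂ) H ≠ 0 := by
    have hs : {z : ℂ | eval z H = 0}.Finite := by
      refine (Multiset.finite_toSet H.roots).subset fun z hz => ?_
      simpa [hH] using hz
    have := (hs.preimage (Nat.cast_injective (R := ℂ)).injOn).eventually_cofinite_notMem
    rw [Nat.cofinite_eq_atTop] at this
    filter_upwards [this] with n hn h0
    exact hn h0
  obtain ⟨N, hN⟩ := Filter.eventually_atTop.1 hfin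
  refine ⟨N, fun n hn => ?_⟩
  have hn' := hN n hn
  simp only [H, eval_mul] at hn'
  constructor
  · intro α
    by_contra hcon
    push Not at hcon
    have key : ∀ f, eval α (ev n (Fd f)) = 0 := by
      intro f
      rw [hF, ← hcon f, ← coe_evalRingHom, RingHom.map_det]
      rfl
    have := congrArg (fun P => eval α (ev n P)) hpq
    simp only [map_add, map_mul, eval_add, eval_mul, key, zero_mul, add_zero] at this
    apply hn'
    have e : eval α (ev n (C R)) = eval (n : ℂ) R := by simp [ev]
    rw [← e, ← this, zero_mul]
  · refine ⟨f1 hm, ?_⟩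
    have h1 := (det_rowDeg ((W0 m b + C (n : ℂ) • W).submatrix id (f1 hm)) b
      (fun s l => hdeg n s (f1 hm l))).2
    rw [← hF] at h1
    intro h0
    apply hn'
    have e : eval (n : ℂ) ((Fd (f1 hm)).coeff D) = (ev n (Fd (f1 hm))).coeff D := by
      simp [ev, coeff_map]
    rw [e, h1]
    have : (Matrix.of fun s l => (((W0 m b + C (n : ℂ) • W).submatrix id (f1 hm)) s l).coeff (b s)).det = 0 := h0
    rw [this, mul_zero]

lemma dec_main (m r d : ℕ) (P : Matrix (Fin m) (Fin m) (Polynomial ℂ)) (hP : Pᵀ = -P)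
    (hgrade : ∀ i j, (P i j).natDegree ≤ d) (hrk : nrk P ≤ 2 * r) :
    ∃ (b : Fin r ⊕ Fin r → ℕ) (W : Matrix (Fin r ⊕ Fin r) (Fin m) (Polynomial ℂ)),
      (∀ i, b (Sum.inl i) + b (Sum.inr i) = d) ∧ (∀ s l, (W s l).natDegree ≤ b s) ∧ P = pf W := by
  obtain ⟨p, u, v, h1, h2, h3, h4⟩ := decomp d _ (Fin m) (fun _ => 0) P r hP
    (fun i j => by simpa using DB.of_natDegree (hgrade i j)) hrk le_rfl
  refine ⟨Sum.elim (fun i => d - p i) p, Matrix.of (Sum.elim v u), fun i => ?_, ?_, ?_⟩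
  · have := h1 i
    simp; omega
  · rintro (i | i) l
    · exact DB.natDegree ((h3 i l).mono (by have := h1 i; simp; omega))
    · exact DB.natDegree ((h2 i l).mono (by simp))
  · ext1 l k
    rw [h4]
    simp [pf]

/-- Every m×m skew-symmetric matrix polynomial of grade `d` and normal rank at most `2r`
is the coefficientwise limit of skew-symmetric matrix polynomials of grade `d`, degree
exactly `d`, normal rank exactly `2r`, and with no (finite or infinite) eigenvalues. -/
theorem skew_symmetric_bounded_rank_limit_of_generic (m r d : ℕ)
    (hm : 2 < m) (hd : 1 ≤ d) (h2 : 2 ≤ 2 * r) (hrm : 2 * r ≤ m - 1)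
    (P : Matrix (Fin m) (Fin m) (Polynomial ℂ)) (hP : Pᵀ = -P)
    (hgrade : ∀ i j, (P i j).natDegree ≤ d) (hrk : normalRank P ≤ 2 * r) :
    ∃ Q : ℕ → Matrix (Fin m) (Fin m) (Polynomial ℂ),
      (∀ n, (Q n)ᵀ = -(Q n)) ∧
      (∀ n i j, ((Q n) i j).natDegree ≤ d) ∧
      (∀ n, (Matrix.of fun a b => ((Q n) a b).coeff d) ≠ (0 : Matrix (Fin m) (Fin m) ℂ)) ∧
      (∀ n, normalRank (Q n) = 2 * r) ∧
      (∀ n, ∀ α : ℂ, ((Q n).map (Polynomial.eval α)).rank = 2 * r) ∧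
      (∀ n, (Matrix.of fun a b => ((Q n) a b).coeff d).rank = 2 * r) ∧
      Filter.Tendsto (fun n => coeffTuple m d (Q n)) Filter.atTop
        (nhds (coeffTuple m d P)) := by
  obtain ⟨b, W, hb, hW, rfl⟩ := dec_main m r d P hP hgrade hrk
  have hbs : ∑ s, b s ≠ 0 := by
    have : ∑ s, b s = r * d := by
      rw [Fintype.sum_sum_type, ← Finset.sum_add_distrib]
      simp [hb]
    rw [this]
    exact Nat.mul_ne_zero (by omega) (by omega)
  obtain ⟨N, hN⟩ := perturb (by omega : r + r + 1 ≤ m) b hbs W hW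
  let t : ℕ → ℕ := fun n => n + N + 1
  let ε : ℕ → ℂ := fun n => ((t n : ℕ) : ℂ)⁻¹
  have ht : ∀ n, ((t n : ℕ) : ℂ) ≠ 0 := fun n =>
    Nat.cast_ne_zero.2 (Nat.succ_ne_zero _)
  have hε : ∀ n, ε n ≠ 0 := fun n => inv_ne_zero (ht n)
  have hscale : ∀ n, W + C (ε n) • W0 m b = C (ε n) • (W0 m b + C ((t n : ℕ) : ℂ) • W) := by
    intro n
    rw [smul_add, smul_smul, ← C_mul]
    simp only [ε]
    rw [inv_mul_cancel₀ (ht n), C_1, one_smul, add_comm]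
  have hfin : ∀ n α, ∃ f : Fin r ⊕ Fin r → Fin m,
      (((W + C (ε n) • W0 m b).map (eval α)).submatrix id f).det ≠ 0 := by
    intro n α
    obtain ⟨f, hf⟩ := (hN (t n) (by simp only [t]; omega)).1 α
    refine ⟨f, ?_⟩
    have e : ((W + C (ε n) • W0 m b).map (eval α)).submatrix id f
        = ε n • (((W0 m b + C ((t n : ℕ) : ℂ) • W).map (eval α)).submatrix id f) := by
      rw [hscale]
      ext s l
      simp
      ring
    rw [e, Matrix.det_smul]
    exact mul_ne_zero (pow_ne_zero _ (hε n)) hf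
  have hinf : ∀ n, ∃ f : Fin r ⊕ Fin r → Fin m,
      ((Matrix.of fun s l => ((W + C (ε n) • W0 m b) s l).coeff (b s)).submatrix id f).det ≠ 0 := by
    intro n
    obtain ⟨f, hf⟩ := (hN (t n) (by simp only [t]; omega)).2
    refine ⟨f, ?_⟩
    have e : (Matrix.of fun s l => ((W + C (ε n) • W0 m b) s l).coeff (b s)).submatrix id f
        = ε n • ((Matrix.of fun s l =>
          ((W0 m b + C ((t n : ℕ) : ℂ) • W) s l).coeff (b s)).submatrix id f) := by
      rw [hscale]
      ext s l
      simp only [Matrix.submatrix_apply, Matrix.of_apply, Matrix.smul_apply (C (ε n)), smul_eq_mul,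
        coeff_C_mul, Matrix.smul_apply (ε n)]
    rw [e, Matrix.det_smul]
    exact mul_ne_zero (pow_ne_zero _ (hε n)) hf
  have hdeg : ∀ n s l, ((W + C (ε n) • W0 m b) s l).natDegree ≤ b s := by
    intro n s l
    refine (natDegree_add_le _ _).trans (max_le (hW s l) ?_)
    exact (natDegree_C_mul_le _ _).trans (W0_natDegree b s l)
  have hlead : ∀ n, (Matrix.of fun i j => (pf (W + C (ε n) • W0 m b) i j).coeff d).rank = 2 * r := by
    intro n
    rw [pf_coeff _ b hb (hdeg n)]
    obtain ⟨f, hf⟩ := hinf n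
    exact pf_rank _ f hf
  refine ⟨fun n => pf (W + C (ε n) • W0 m b), fun n => pf_skew _,
    fun n i j => pf_natDegree _ b hb (hdeg n) i j, ?_, ?_, ?_, hlead, ?_⟩
  · intro n h0
    have := hlead n
    rw [h0, Matrix.rank_zero] at this
    omega
  · intro n
    unfold normalRank
    rw [pf_map]
    obtain ⟨f, hf⟩ := hfin n 0
    refine pf_rank _ f ?_
    have hφ : Function.Injective (algebraMap (Polynomial ℂ) (RatFunc ℂ)) :=
      IsFractionRing.injective _ _
    intro h0
    have h1 : algebraMap (Polynomial ℂ) (RatFunc ℂ)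
        ((W + C (ε n) • W0 m b).submatrix id f).det = 0 := by
      rw [RingHom.map_det]; exact h0
    rw [map_eq_zero_iff _ hφ] at h1
    apply hf
    have h3 : evalRingHom (0 : ℂ) ((W + C (ε n) • W0 m b).submatrix id f).det = 0 := by
      rw [h1, map_zero]
    rw [RingHom.map_det] at h3
    exact h3
  · intro n α
    obtain ⟨f, hf⟩ := hfin n α
    have := pf_map (evalRingHom α) (W + C (ε n) • W0 m b)
    rw [coe_evalRingHom] at this
    rw [this]
    exact pf_rank _ f hf
  · obtain ⟨B, E, hBE⟩ := pf_expand W (W0 m b)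
    have hlim : Filter.Tendsto ε Filter.atTop (nhds 0) := by
      have h1 := tendsto_inv_atTop_nhds_zero_nat (𝕜 := ℂ)
      have h2 : Filter.Tendsto t Filter.atTop Filter.atTop := by
        simp only [t, add_assoc]; exact Filter.tendsto_add_atTop_nat (N + 1)
      exact h1.comp h2
    refine tendsto_pi_nhds.2 fun k => ?_
    refine tendsto_pi_nhds.2 fun i => ?_
    refine tendsto_pi_nhds.2 fun j => ?_
    simp only [coeffTuple, Matrix.of_apply, hBE, coeff_add, coeff_C_mul]
    have h3 := (hlim.mul_const ((B i j).coeff k)).const_add ((pf W i j).coeff k)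
    have h4 := h3.add ((hlim.pow 2).mul_const ((E i j).coeff k))
    simpa using h4
end

section
/- Let m, r, d be integers with d ≥ 1 and 2 ≤ 2r ≤ m−1. An m×m matrix polynomial P over ℂ is skew-symmetric of grade d with normal rank exactly 2r, degree exactly d, and no eigenvalues (finite or infinite) if and only if P = L J₂ᵣ Lᵀ for some m×2r matrix polynomial L such that: (a) L is a minimal basis (Forney's criterion); (b) the column degrees of L are nonincreasing, deg(L₁) ≥ deg(L₂) ≥ ⋯ ≥ deg(L₂ᵣ); and (c) deg(Lᵢ) + deg(L₂ᵣ₋ᵢ₊₁) = d for every i = 1, …, 2r. Here J₂ᵣ = [[0, Δᵣ], [−Δᵣ, 0]] with Δᵣ the r×r anti-identity matrix. -/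
open Polynomial Matrix

def bd (p : ℂ[X]) (a : ℤ) : Prop := ∀ k : ℕ, a < k → p.coeff k = 0

noncomputable def zc (p : ℂ[X]) (a : ℤ) : ℂ := if 0 ≤ a then p.coeff a.toNat else 0

lemma bd_mono {p : ℂ[X]} {a b : ℤ} (h : bd p a) (hab : a ≤ b) : bd p b :=
  fun k hk => h k (lt_of_le_of_lt hab hk)

lemma bd_zero (a : ℤ) : bd 0 a := fun _ _ => by simp

lemma bd_neg {p : ℂ[X]} {a : ℤ} (h : bd p a) : bd (-p) a := fun k hk => by simp [h k hk]

lemma bd_add {p q : ℂ[X]} {a : ℤ} (h : bd p a) (h' : bd q a) : bd (p + q) a :=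
  fun k hk => by simp [h k hk, h' k hk]

lemma bd_sub {p q : ℂ[X]} {a : ℤ} (h : bd p a) (h' : bd q a) : bd (p - q) a :=
  fun k hk => by simp [h k hk, h' k hk]

lemma bd_sum {ι : Type*} {s : Finset ι} {f : ι → ℂ[X]} {a : ℤ} (h : ∀ i ∈ s, bd (f i) a) :
    bd (∑ i ∈ s, f i) a :=
  fun k hk => by
    rw [Polynomial.finsetSum_coeff]
    exact Finset.sum_eq_zero fun i hi => h i hi k hk

lemma bd_C (c : ℂ) : bd (C c) 0 := fun k hk => by
  rw [Polynomial.coeff_C, if_neg]; omega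

lemma bd_neg_eq_zero {p : ℂ[X]} {a : ℤ} (h : bd p a) (ha : a < 0) : p = 0 := by
  ext k; simpa using h k (by omega)

lemma bd_nat {p : ℂ[X]} {n : ℕ} : bd p n ↔ p.natDegree ≤ n := by
  rw [Polynomial.natDegree_le_iff_coeff_eq_zero]
  constructor
  · intro h k hk; exact h k (by exact_mod_cast hk)
  · intro h k hk; exact h k (by exact_mod_cast hk)

lemma bd_mul {p q : ℂ[X]} {a b : ℤ} (hp : bd p a) (hq : bd q b) : bd (p * q) (a + b) := by
  by_cases ha : a < 0
  · rw [bd_neg_eq_zero hp ha, zero_mul]; exact bd_zero _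
  by_cases hb : b < 0
  · rw [bd_neg_eq_zero hq hb, mul_zero]; exact bd_zero _
  push Not at ha hb
  lift a to ℕ using ha
  lift b to ℕ using hb
  rw [bd_nat] at hp hq
  have := Polynomial.natDegree_mul_le_of_le hp hq
  exact_mod_cast bd_nat.2 this

lemma zc_nat (p : ℂ[X]) (n : ℕ) : zc p n = p.coeff n := by simp [zc]

lemma zc_zero (a : ℤ) : zc 0 a = 0 := by simp [zc]

lemma zc_sum {ι : Type*} (s : Finset ι) (f : ι → ℂ[X]) (a : ℤ) :
    zc (∑ i ∈ s, f i) a = ∑ i ∈ s, zc (f i) a := by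
  unfold zc
  split_ifs
  · rw [Polynomial.finsetSum_coeff]
  · simp

lemma zc_mul {p q : ℂ[X]} {a b : ℤ} (hp : bd p a) (hq : bd q b) :
    zc (p * q) (a + b) = zc p a * zc q b := by
  by_cases ha : a < 0
  · rw [bd_neg_eq_zero hp ha, zero_mul, zc_zero, zc_zero, zero_mul]
  by_cases hb : b < 0
  · rw [bd_neg_eq_zero hq hb, mul_zero, zc_zero, zc_zero, mul_zero]
  push Not at ha hb
  lift a to ℕ using ha
  lift b to ℕ using hb
  rw [bd_nat] at hp hq
  rw [zc_nat, zc_nat, ← Nat.cast_add, zc_nat]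
  exact Polynomial.coeff_mul_add_eq_of_natDegree_le hp hq

lemma bd_pred {p : ℂ[X]} {a : ℤ} (h : bd p (a + 1)) (h' : zc p (a + 1) = 0) : bd p a := by
  intro k hk
  rcases eq_or_lt_of_le (Int.add_one_le_iff.2 hk) with e | e
  · rw [e, zc_nat] at h'; exact h'
  · exact h k e

lemma zc_tri {m k : ℕ} (M : Matrix (Fin m) (Fin k) ℂ[X]) (Q : Matrix (Fin k) (Fin k) ℂ[X])
    (e : Fin k → ℤ) (D : ℤ) (hM : ∀ x i, bd (M x i) (e i))
    (hQ : ∀ i j, bd (Q i j) (D - e i - e j)) :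
    (∀ x y, bd ((M * Q * Mᵀ) x y) D) ∧
    (Matrix.of fun x y => zc ((M * Q * Mᵀ) x y) D) =
      (Matrix.of fun x i => zc (M x i) (e i)) * (Matrix.of fun i j => zc (Q i j) (D - e i - e j)) *
      (Matrix.of fun x i => zc (M x i) (e i))ᵀ := by
  have h1 : ∀ x j, bd ((M * Q) x j) (D - e j) := by
    intro x j
    rw [Matrix.mul_apply]
    refine bd_sum fun i _ => bd_mono (bd_mul (hM x i) (hQ i j)) (by omega)
  refine ⟨?_, ?_⟩
  · intro x y
    rw [Matrix.mul_apply]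
    exact bd_sum fun j _ => bd_mono (bd_mul (h1 x j) (hM y j)) (by omega)
  · ext x y
    simp only [Matrix.of_apply]
    rw [Matrix.mul_apply, zc_sum, Matrix.mul_apply]
    refine Finset.sum_congr rfl fun j _ => ?_
    have := zc_mul (h1 x j) (hM y j)
    rw [sub_add_cancel] at this
    rw [Matrix.transpose_apply, this, Matrix.transpose_apply, Matrix.of_apply]
    congr 1
    rw [Matrix.mul_apply, zc_sum, Matrix.mul_apply]
    refine Finset.sum_congr rfl fun i _ => ?_
    have := zc_mul (hM x i) (hQ i j)
    rw [show e i + (D - e i - e j) = D - e j by ring] at this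
    rw [this]; rfl

lemma exists_leftInv {K : Type*} [Field K] {m k : ℕ} (A : Matrix (Fin m) (Fin k) K)
    (h : A.rank = k) : ∃ B : Matrix (Fin k) (Fin m) K, B * A = 1 := by
  rw [← Matrix.vecMul_surjective_iff_exists_left_inverse]
  have h2 : Aᵀ.rank = k := by rw [Matrix.rank_transpose, h]
  rw [Matrix.rank] at h2
  have h3 : LinearMap.range Aᵀ.mulVecLin = ⊤ :=
    Submodule.eq_top_of_finrank_eq (by rw [h2]; simp)
  intro v
  obtain ⟨w, hw⟩ := LinearMap.range_eq_top.1 h3 v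
  exact ⟨w, by rw [← hw, Matrix.mulVecLin_apply, Matrix.mulVec_transpose]⟩

lemma rank_of_leftInv {K : Type*} [Field K] {m k : ℕ} (A : Matrix (Fin m) (Fin k) K)
    (B : Matrix (Fin k) (Fin m) K) (h : B * A = 1) : A.rank = k := by
  apply le_antisymm
  · simpa using A.rank_le_width
  · have := Matrix.rank_mul_le_right B A
    rw [h, Matrix.rank_one] at this
    simpa using this

lemma rank_tri {K : Type*} [Field K] {m k : ℕ} (A : Matrix (Fin m) (Fin k) K)
    (J : Matrix (Fin k) (Fin k) K) (hJ : J.rank = k) :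
    (A * J * Aᵀ).rank = k ↔ A.rank = k := by
  constructor
  · intro h
    apply le_antisymm
    · simpa using A.rank_le_width
    · have h1 := Matrix.rank_mul_le_left A (J * Aᵀ)
      rw [← Matrix.mul_assoc, h] at h1
      exact h1
  · intro h
    obtain ⟨B, hB⟩ := exists_leftInv A h
    apply le_antisymm
    · have h1 := Matrix.rank_mul_le_left A (J * Aᵀ)
      rw [← Matrix.mul_assoc, h] at h1
      exact h1
    · have h1 := Matrix.rank_mul_le_right B ((A * J * Aᵀ) * Bᵀ)
      have h2 := Matrix.rank_mul_le_left (A * J * Aᵀ) Bᵀ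
      have h3 : B * ((A * J * Aᵀ) * Bᵀ) = J := by
        calc B * ((A * J * Aᵀ) * Bᵀ) = (B * A) * J * (B * A)ᵀ := by
              rw [Matrix.transpose_mul]; simp only [Matrix.mul_assoc]
          _ = J := by rw [hB]; simp
      rw [h3, hJ] at h1
      exact h1.trans h2

lemma rank_mid {K : Type*} [Field K] {m k : ℕ} (A : Matrix (Fin m) (Fin k) K)
    (J : Matrix (Fin k) (Fin k) K) (h : (A * J * Aᵀ).rank = k) : J.rank = k := by
  apply le_antisymm
  · simpa using J.rank_le_width
  · have h1 := Matrix.rank_mul_le_left (A * J) Aᵀ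
    have h2 := Matrix.rank_mul_le_right A J
    omega

lemma peel {m : ℕ} (d : ℤ) {ι : Type*} [DecidableEq ι] (e : ι → ℤ) (v : ι → Fin m → ℂ[X])
    (hv : ∀ i x, bd (v i x) (e i)) (S : ι → ι → ℂ[X])
    (hS : ∀ i j, bd (S i j) (e i + e j - d)) :
    ∀ (n : ℕ) (s : Finset ι) (_ : s.card = 2 * n) (Q : ι → ι → ℂ[X])
      (_ : ∀ i j, Q j i = - Q i j) (_ : ∀ i j, bd (Q i j) (d - e i - e j))
      (_ : ∀ i ∈ s, ∀ k ∈ s, ∑ j ∈ s, Q i j * S j k = if i = k then 1 else 0),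
      ∃ (u w : Fin n → Fin m → ℂ[X]) (f g : Fin n → ℤ), (∀ k, f k + g k = d) ∧
        (∀ k x, bd (u k x) (f k)) ∧ (∀ k x, bd (w k x) (g k)) ∧
        ∀ x y, ∑ i ∈ s, ∑ j ∈ s, Q i j * v i x * v j y =
          ∑ k, (u k x * w k y - w k x * u k y) := by
  intro n
  induction n with
  | zero =>
    intro s hs Q _ _ _
    have : s = ∅ := by simpa using hs
    subst this
    exact ⟨fun _ _ => 0, fun _ _ => 0, fun _ => d, fun _ => 0, by simp, fun k => k.elim0,
      fun k => k.elim0, by simp⟩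
  | succ n ih =>
    intro s hs Q hskew hQ hinv
    have hdiag : ∀ i, Q i i = 0 := fun i => self_eq_neg.1 (hskew i i)
    obtain ⟨a, ha⟩ : s.Nonempty := by
      rw [← Finset.card_pos]; omega
    have h1 := hinv a ha a ha
    rw [if_pos rfl] at h1
    obtain ⟨b, hb, hne⟩ : ∃ b ∈ s, Q a b * S b a ≠ 0 := by
      by_contra! hcon
      rw [Finset.sum_eq_zero hcon] at h1
      exact zero_ne_one h1
    have hQab : Q a b ≠ 0 := left_ne_zero_of_mul hne
    have hSba : S b a ≠ 0 := right_ne_zero_of_mul hne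
    have hab : a ≠ b := by rintro rfl; exact hQab (hdiag a)
    have he : e a + e b = d := by
      have h3 : ¬ (d - e a - e b < 0) := fun h => hQab (bd_neg_eq_zero (hQ a b) h)
      have h4 : ¬ (e b + e a - d < 0) := fun h => hSba (bd_neg_eq_zero (hS b a) h)
      omega
    obtain ⟨c, hc⟩ : ∃ c, Q a b = C c := by
      refine ⟨_, Polynomial.eq_C_of_natDegree_le_zero (bd_nat.1 ?_)⟩
      exact bd_mono (hQ a b) (by push_cast; omega)
    have hc0 : c ≠ 0 := by rintro rfl; exact hQab (by simpa using hc)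
    have hcc : (C c : ℂ[X]) * C c⁻¹ = 1 := by rw [← C_mul, mul_inv_cancel₀ hc0, C_1]
    set t := (s.erase a).erase b with ht
    have hat : a ∉ t := by simp [ht]
    have hbt : b ∉ t := by simp [ht]
    have hsum : ∀ F : ι → ℂ[X], ∑ i ∈ s, F i = F a + F b + ∑ i ∈ t, F i := by
      intro F
      rw [← Finset.add_sum_erase s F ha,
        ← Finset.add_sum_erase (s.erase a) F (Finset.mem_erase.2 ⟨hab.symm, hb⟩), add_assoc]
    have htc : t.card = 2 * n := by
      rw [ht, Finset.card_erase_of_mem (Finset.mem_erase.2 ⟨hab.symm, hb⟩),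
        Finset.card_erase_of_mem ha]; omega
    have hts : ∀ i ∈ t, i ∈ s := fun i hi => Finset.mem_of_mem_erase (Finset.mem_of_mem_erase hi)
    let Q' : ι → ι → ℂ[X] := fun i j => Q i j - C c⁻¹ * (Q i b * Q a j - Q a i * Q j b)
    obtain ⟨u, w, f, g, hfg, hu, hw, huw⟩ := ih t htc Q'
      (by intro i j; simp only [Q']; rw [hskew i j]; ring)
      (by
        intro i j
        refine bd_sub (hQ i j) ?_
        have := bd_mul (bd_C c⁻¹) (bd_sub
          (bd_mono (bd_mul (hQ i b) (hQ a j)) (show _ ≤ d - e i - e j by omega))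
          (bd_mono (bd_mul (hQ a i) (hQ j b)) (show _ ≤ d - e i - e j by omega)))
        simpa using this)
      (by
        intro i hi k hk
        have hia : a ≠ k := by rintro rfl; exact hat hk
        have hib : b ≠ k := by rintro rfl; exact hbt hk
        have e1 := hinv i (hts i hi) k (hts k hk)
        have e2 := hinv a ha k (hts k hk)
        have e3 := hinv b hb k (hts k hk)
        rw [if_neg hia, hsum, hdiag] at e2
        rw [if_neg hib, hsum, hdiag] at e3
        rw [hsum] at e1
        have e4 : ∑ j ∈ t, Q j b * S j k = - ∑ j ∈ t, Q b j * S j k := by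
          rw [← Finset.sum_neg_distrib]
          exact Finset.sum_congr rfl fun j _ => by rw [hskew b j]; ring
        have e5 : ∑ j ∈ t, Q' i j * S j k = ∑ j ∈ t, Q i j * S j k -
            C c⁻¹ * (Q i b * ∑ j ∈ t, Q a j * S j k - Q a i * ∑ j ∈ t, Q j b * S j k) := by
          simp only [Finset.mul_sum, ← Finset.sum_sub_distrib]
          exact Finset.sum_congr rfl fun j _ => by simp only [Q']; ring
        rw [e5, e4, ← e1]
        rw [hskew a b, hc] at e3
        rw [hc] at e2
        rw [hskew a i]
        linear_combination (-C c⁻¹ * Q i b) * e2 + (-C c⁻¹ * Q a i) * e3 + (Q i b * S b k - Q a i * S a k) * hcc)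
    let u0 : Fin m → ℂ[X] := fun x => C c * v a x + ∑ j ∈ t, Q j b * v j x
    let w0 : Fin m → ℂ[X] := fun x => v b x + C c⁻¹ * ∑ j ∈ t, Q a j * v j x
    refine ⟨Fin.cons u0 u, Fin.cons w0 w, Fin.cons (e a) f, Fin.cons (e b) g, ?_, ?_, ?_, ?_⟩
    · intro k; refine Fin.cases ?_ ?_ k
      · simpa using he
      · intro k; simpa using hfg k
    · intro k x; refine Fin.cases ?_ ?_ k
      · simp only [Fin.cons_zero]
        refine bd_add (bd_mono (bd_mul (bd_C c) (hv a x)) (by omega)) ?_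
        exact bd_sum fun j _ => bd_mono (bd_mul (hQ j b) (hv j x)) (by omega)
      · intro k; simpa using hu k x
    · intro k x; refine Fin.cases ?_ ?_ k
      · simp only [Fin.cons_zero]
        refine bd_add (hv b x) ?_
        refine bd_mono (bd_mul (bd_C c⁻¹) (bd_sum (a := e b) fun j _ => bd_mono (bd_mul (hQ a j) (hv j x)) ?_)) ?_ <;> omega
      · intro k; simpa using hw k x
    · intro x y
      rw [Fin.sum_univ_succ]
      simp only [Fin.cons_zero, Fin.cons_succ]
      rw [← huw x y]
      have e1 : ∑ i ∈ t, ∑ j ∈ t, Q' i j * v i x * v j y =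
          ∑ i ∈ t, ∑ j ∈ t, Q i j * v i x * v j y - C c⁻¹ * (
            (∑ j ∈ t, Q j b * v j x) * (∑ j ∈ t, Q a j * v j y) -
            (∑ j ∈ t, Q a j * v j x) * (∑ j ∈ t, Q j b * v j y)) := by
        rw [Finset.sum_mul_sum, Finset.sum_mul_sum]
        simp only [Finset.mul_sum, ← Finset.sum_sub_distrib]
        refine Finset.sum_congr rfl fun i _ => Finset.sum_congr rfl fun j _ => ?_
        simp only [Q']; ring
      have e2 : ∑ i ∈ s, ∑ j ∈ s, Q i j * v i x * v j y =
          C c * (v a x * v b y - v b x * v a y)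
          + v a x * (∑ j ∈ t, Q a j * v j y) - v a y * (∑ j ∈ t, Q a j * v j x)
          - v b x * (∑ j ∈ t, Q j b * v j y) + v b y * (∑ j ∈ t, Q j b * v j x)
          + ∑ i ∈ t, ∑ j ∈ t, Q i j * v i x * v j y := by
        rw [hsum]
        simp only [hsum]
        rw [hskew a b, hc, hdiag, hdiag]
        simp only [Finset.mul_sum, Finset.sum_add_distrib]
        have f1 : ∑ j ∈ t, Q a j * v a x * v j y = ∑ j ∈ t, v a x * (Q a j * v j y) :=
          Finset.sum_congr rfl fun j _ => by ring
        have f2 : ∑ j ∈ t, Q b j * v b x * v j y = - ∑ j ∈ t, v b x * (Q j b * v j y) := by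
          rw [← Finset.sum_neg_distrib]
          exact Finset.sum_congr rfl fun j _ => by rw [hskew j b]; ring
        have f3 : ∑ j ∈ t, Q j a * v j x * v a y = - ∑ j ∈ t, v a y * (Q a j * v j x) := by
          rw [← Finset.sum_neg_distrib]
          exact Finset.sum_congr rfl fun j _ => by rw [hskew a j]; ring
        have f4 : ∑ j ∈ t, Q j b * v j x * v b y = ∑ j ∈ t, v b y * (Q j b * v j x) :=
          Finset.sum_congr rfl fun j _ => by ring
        rw [f1, f2, f3, f4]
        ring
      rw [e1, e2]
      simp only [u0, w0]
      generalize ∑ j ∈ t, Q a j * v j x = A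
      generalize ∑ j ∈ t, Q a j * v j y = B
      generalize ∑ j ∈ t, Q j b * v j x = A'
      generalize ∑ j ∈ t, Q j b * v j y = B'
      linear_combination (v a y * A - v a x * B) * hcc

lemma Jmat_apply' (r : ℕ) (i j : Fin (2 * r)) :
    Jmat r i j = if i = j.rev then (if (j : ℕ) < r then -1 else 1) else 0 := by
  have hi := i.2
  have hj := j.2
  have h : i = j.rev ↔ (i : ℕ) + (j : ℕ) + 1 = 2 * r := by
    rw [Fin.ext_iff, Fin.val_rev]; omega
  simp only [Jmat, Matrix.of_apply, h]
  by_cases h1 : (i : ℕ) + (j : ℕ) + 1 = 2 * r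
  · by_cases h2 : (j : ℕ) < r
    · have : ¬ (i : ℕ) < r := by omega
      simp [h1, h2, this]
    · have : (i : ℕ) < r := by omega
      simp [h1, h2, this]
  · simp [h1]

lemma Jmat_transpose (r : ℕ) : (Jmat r)ᵀ = - Jmat r := by
  ext1 i j
  rw [Matrix.transpose_apply, Matrix.neg_apply, Jmat_apply', Jmat_apply']
  have hi := i.2
  have hj := j.2
  have h : (j = i.rev) ↔ (i = j.rev) := by
    rw [Fin.ext_iff, Fin.ext_iff, Fin.val_rev, Fin.val_rev]; omega
  simp only [h]
  by_cases h1 : i = j.rev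
  · have h2 : (i : ℕ) + (j : ℕ) + 1 = 2 * r := by
      rw [Fin.ext_iff, Fin.val_rev] at h1; omega
    by_cases h3 : (j : ℕ) < r
    · have : ¬ (i : ℕ) < r := by omega
      simp [h1, h3]; omega
    · have : (i : ℕ) < r := by omega
      simp [h1, h3]; omega
  · simp [h1]

lemma mul_Jmat {m : ℕ} (r : ℕ) (L : Matrix (Fin m) (Fin (2 * r)) ℂ[X]) (x : Fin m)
    (j : Fin (2 * r)) : (L * Jmat r) x j = (if (j : ℕ) < r then - L x j.rev else L x j.rev) := by
  rw [Matrix.mul_apply]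
  simp only [Jmat_apply']
  simp

lemma Jmat_sq (r : ℕ) : Jmat r * Jmat r = -1 := by
  ext1 i j
  rw [mul_Jmat, Jmat_apply', Matrix.neg_apply, Matrix.one_apply]
  have hj := j.2
  simp only [Fin.rev_rev]
  by_cases h1 : i = j
  · by_cases h3 : (j : ℕ) < r
    · simp [h1, h3]; omega
    · simp [h1, h3]; omega
  · simp [h1]

lemma sum_halves (r : ℕ) (F : Fin (2 * r) → ℂ[X]) :
    ∑ j, F j = ∑ k : Fin r, F (Fin.castLE (by omega) k) +
      ∑ k : Fin r, F (Fin.castLE (by omega) k).rev := by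
  rw [← Equiv.sum_comp (finCongr (show r + r = 2 * r by omega)), Fin.sum_univ_add]
  congr 1
  rw [← Equiv.sum_comp (Fin.revPerm (n := r))]
  refine Finset.sum_congr rfl fun k _ => ?_
  congr 1
  have hk := k.2
  ext; simp; omega

lemma tri_Jmat {m : ℕ} (r : ℕ) (L : Matrix (Fin m) (Fin (2 * r)) ℂ[X]) (x y : Fin m) :
    (L * Jmat r * Lᵀ) x y = ∑ k : Fin r,
      (L x (Fin.castLE (by omega) k) * L y (Fin.castLE (by omega) k).rev -
       L x (Fin.castLE (by omega) k).rev * L y (Fin.castLE (by omega) k)) := by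
  rw [Matrix.mul_apply, sum_halves, ← Finset.sum_add_distrib]
  refine Finset.sum_congr rfl fun k _ => ?_
  have hk := k.2
  rw [mul_Jmat, mul_Jmat, if_pos (by simp), if_neg (by simp; omega)]
  simp only [Matrix.transpose_apply, Fin.rev_rev]
  ring

lemma map_tri {R S : Type*} [CommRing R] [CommRing S] (φ : R →+* S) {m k : ℕ}
    (L : Matrix (Fin m) (Fin k) R) (J : Matrix (Fin k) (Fin k) R) :
    (L * J * Lᵀ).map φ = L.map φ * J.map φ * (L.map φ)ᵀ := by
  rw [Matrix.map_mul, Matrix.map_mul, Matrix.transpose_map]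

lemma rank_of_sq {K : Type*} [Field K] {k : ℕ} (J : Matrix (Fin k) (Fin k) K)
    (h : J * J = -1) : J.rank = k :=
  rank_of_leftInv J (-J) (by rw [neg_mul, h, neg_neg])

lemma Jmat_map_rank {K : Type*} [Field K] (φ : ℂ[X] →+* K) (r : ℕ) :
    ((Jmat r).map φ).rank = 2 * r := by
  apply rank_of_sq
  rw [← Matrix.map_mul, Jmat_sq]
  ext i j
  simp only [Matrix.map_apply, Matrix.neg_apply, Matrix.one_apply]
  split_ifs <;> simp

lemma map_eval {m k : ℕ} (L : Matrix (Fin m) (Fin k) ℂ[X]) (α : ℂ) :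
    L.map (Polynomial.eval α) = L.map (Polynomial.evalRingHom α) := rfl

lemma Jmat_bd (r : ℕ) (d : ℤ) (f : Fin (2 * r) → ℤ) (hf : ∀ i, f i + f i.rev = d) :
    (∀ i j, bd (Jmat r i j) (d - f i - f j)) ∧
    (Matrix.of fun i j => zc (Jmat r i j) (d - f i - f j)) =
      (Jmat r).map (Polynomial.evalRingHom (0 : ℂ)) := by
  have key : ∀ i j, bd (Jmat r i j) (d - f i - f j) ∧
      zc (Jmat r i j) (d - f i - f j) = Polynomial.evalRingHom (0 : ℂ) (Jmat r i j) := by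
    intro i j
    rw [Jmat_apply']
    by_cases h : i = j.rev
    · have h0 : d - f i - f j = 0 := by have := hf j; rw [h]; omega
      rw [if_pos h, h0]
      split_ifs
      · refine ⟨?_, ?_⟩
        · simpa using bd_C (-1)
        · simp [zc]
      · refine ⟨?_, ?_⟩
        · simpa using bd_C 1
        · simp [zc]
    · rw [if_neg h]
      exact ⟨bd_zero _, by rw [zc_zero]; simp⟩
  exact ⟨fun i j => (key i j).1, by ext i j; exact (key i j).2⟩

lemma backward (m r d : ℕ) (h2 : 2 ≤ 2 * r)
    (L : Matrix (Fin m) (Fin (2 * r)) ℂ[X]) (hL : IsMinimalBasis L)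
    (hdeg : ∀ i : Fin (2 * r), colDegree L i + colDegree L i.rev = d) :
    ((L * Jmat r * Lᵀ)ᵀ = -(L * Jmat r * Lᵀ) ∧ (∀ i j, ((L * Jmat r * Lᵀ) i j).natDegree ≤ d) ∧
     normalRank (L * Jmat r * Lᵀ) = 2 * r ∧
     (Matrix.of fun a b => ((L * Jmat r * Lᵀ) a b).coeff d) ≠ (0 : Matrix (Fin m) (Fin m) ℂ) ∧
     (∀ α : ℂ, ((L * Jmat r * Lᵀ).map (Polynomial.eval α)).rank = 2 * r) ∧
     (Matrix.of fun a b => ((L * Jmat r * Lᵀ) a b).coeff d).rank = 2 * r) := by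
  obtain ⟨hev, hhi⟩ := hL
  have hJ := Jmat_bd r d (fun i => (colDegree L i : ℤ)) (fun i => by exact_mod_cast hdeg i)
  have hM : ∀ x i, bd (L x i) (colDegree L i : ℤ) := fun x i =>
    bd_nat.2 (Finset.le_sup (f := fun x => (L x i).natDegree) (Finset.mem_univ x))
  obtain ⟨t1, t2⟩ := zc_tri L (Jmat r) _ d hM hJ.1
  have hrank : (Matrix.of fun a b => ((L * Jmat r * Lᵀ) a b).coeff d).rank = 2 * r := by
    rw [hJ.2] at t2
    simp only [zc_nat] at t2
    rw [t2]
    exact (rank_tri _ _ (Jmat_map_rank _ _)).2 hhi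
  refine ⟨?_, fun i j => bd_nat.1 (t1 i j), ?_, ?_, ?_, hrank⟩
  · rw [Matrix.transpose_mul, Matrix.transpose_mul, Jmat_transpose, Matrix.transpose_transpose,
      Matrix.neg_mul, Matrix.mul_neg, Matrix.mul_assoc]
  · rw [normalRank, map_tri, rank_tri _ _ (Jmat_map_rank _ _)]
    obtain ⟨B, hB⟩ := exists_leftInv _ (hev 0)
    have h1 : (B.map C * L).det ≠ 0 := by
      intro h
      have h2 := congrArg (Polynomial.evalRingHom (0:ℂ)) h
      rw [RingHom.map_det, RingHom.mapMatrix_apply, Matrix.map_mul, ← map_eval L] at h2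
      have h3 : (B.map C).map (Polynomial.evalRingHom (0:ℂ)) = B := by ext; simp
      rw [h3, hB] at h2
      simp at h2
    have h4 : ((B.map C * L).map (algebraMap ℂ[X] (RatFunc ℂ))).det ≠ 0 := by
      rw [← RingHom.mapMatrix_apply, ← RingHom.map_det]
      intro h
      exact h1 ((map_eq_zero_iff _ (RatFunc.algebraMap_injective ℂ)).1 h)
    rw [Matrix.map_mul] at h4
    refine rank_of_leftInv _ ((((B.map C).map (algebraMap ℂ[X] (RatFunc ℂ))) * (L.map (algebraMap ℂ[X] (RatFunc ℂ))))⁻¹ * ((B.map C).map (algebraMap ℂ[X] (RatFunc ℂ)))) ?_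
    rw [Matrix.mul_assoc, Matrix.nonsing_inv_mul _ (isUnit_iff_ne_zero.2 h4)]
  · intro h
    rw [h, Matrix.rank_zero] at hrank
    omega
  · intro α
    rw [map_eval, map_tri, rank_tri _ _ (Jmat_map_rank _ _), ← map_eval]
    exact hev α

lemma exists_factor {m k : ℕ} (P : Matrix (Fin m) (Fin m) ℂ[X]) (hP : Pᵀ = -P)
    (hk : normalRank P = k) :
    ∃ (M : Matrix (Fin m) (Fin k) ℂ[X]) (N : Matrix (Fin k) (Fin m) ℂ[X])
      (Q : Matrix (Fin k) (Fin k) ℂ[X]), N * M = 1 ∧ P = M * Q * Mᵀ := by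
  obtain ⟨n, bM, bN, f, a, snf⟩ := Submodule.smithNormalForm (Pi.basisFun ℂ[X] (Fin m))
    (LinearMap.range P.mulVecLin)
  let M : Matrix (Fin m) (Fin n) ℂ[X] := Matrix.of fun x i => bM (f i) x
  let N : Matrix (Fin n) (Fin m) ℂ[X] := Matrix.of fun i x => bM.repr (Pi.single x 1) (f i)
  have hNv : ∀ v : Fin m → ℂ[X], ∀ i, (N *ᵥ v) i = bM.repr v (f i) := by
    intro v i
    conv_rhs => rw [← Finset.univ_sum_single v]
    rw [map_sum, Finsupp.finsetSum_apply]
    simp only [Matrix.mulVec, dotProduct, N, Matrix.of_apply]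
    refine Finset.sum_congr rfl fun x _ => ?_
    have : (Pi.single x (v x) : Fin m → ℂ[X]) = v x • Pi.single x 1 := by
      rw [← Pi.single_smul]; simp
    rw [this, map_smul]
    simp [mul_comm]
  have hNM : N * M = 1 := by
    ext1 i j
    have : (N * M) i j = (N *ᵥ (bM (f j))) i := by
      simp [Matrix.mul_apply, Matrix.mulVec, dotProduct, M]
    rw [this, hNv, Module.Basis.repr_self, Matrix.one_apply, Finsupp.single_apply]
    simp [eq_comm]
  have hR : ∃ R : Matrix (Fin n) (Fin m) ℂ[X], P = M * R := by
    refine ⟨Matrix.of fun i y => bN.repr ⟨P.mulVecLin (Pi.single y 1), ⟨_, rfl⟩⟩ i * a i, ?_⟩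
    ext1 x y
    have h1 := congrArg (Subtype.val) (bN.sum_repr ⟨P.mulVecLin (Pi.single y 1), ⟨_, rfl⟩⟩)
    have h2 := congrFun h1 x
    simp only [Submodule.coe_sum, Submodule.coe_smul, snf, Finset.sum_apply, Pi.smul_apply] at h2
    have h3 : P.mulVecLin (Pi.single y 1) x = P x y := by simp
    rw [← h3, ← h2, Matrix.mul_apply]
    refine Finset.sum_congr rfl fun i _ => ?_
    simp [M]; ring
  have hS : ∃ S : Matrix (Fin m) (Fin n) ℂ[X], P * S = M * Matrix.diagonal a := by
    have : ∀ i, ∃ v, P.mulVecLin v = (bN i : Fin m → ℂ[X]) := fun i => (bN i).2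
    choose v hv using this
    refine ⟨Matrix.of fun x i => v i x, ?_⟩
    ext1 x i
    have h1 := congrFun (hv i) x
    rw [snf] at h1
    rw [Matrix.mul_diagonal]
    simp only [Matrix.mulVecLin_apply, Matrix.mulVec, dotProduct] at h1
    simp only [Matrix.mul_apply, Matrix.of_apply, M, h1]
    simp [mul_comm]
  have ha : ∀ i, a i ≠ 0 := by
    intro i h
    apply bN.ne_zero i
    apply Subtype.ext
    rw [snf, h]; simp
  have hn : n = k := by
    obtain ⟨R, hR⟩ := hR
    obtain ⟨S, hS⟩ := hS
    let φ := algebraMap ℂ[X] (RatFunc ℂ)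
    rw [← hk, normalRank]
    apply le_antisymm
    · have h1 : N * (P * S) = Matrix.diagonal a := by
        rw [hS, ← Matrix.mul_assoc, hNM, Matrix.one_mul]
      have h2 : ((N * (P * S)).map φ).rank = n := by
        classical
        rw [h1, Matrix.diagonal_map (map_zero _), Matrix.rank_diagonal]
        simp [φ, ha]
      rw [Matrix.map_mul, Matrix.map_mul] at h2
      have h3 := Matrix.rank_mul_le_right (N.map φ) (P.map φ * S.map φ)
      have h4 := Matrix.rank_mul_le_left (P.map φ) (S.map φ)
      rw [h2] at h3
      exact h3.trans h4
    · conv_lhs => rw [hR]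
      rw [Matrix.map_mul]
      refine (Matrix.rank_mul_le_left _ _).trans ?_
      simpa using Matrix.rank_le_width (M.map φ)
  subst hn
  obtain ⟨R, hR⟩ := hR
  refine ⟨M, N, -(N * Rᵀ), hNM, ?_⟩
  have h1 : P = -(Rᵀ * Mᵀ) := by
    rw [← Matrix.transpose_mul, ← hR, hP, neg_neg]
  have h2 : M * (N * P) = P := by
    conv_lhs => rw [hR]
    rw [← Matrix.mul_assoc N, hNM, Matrix.one_mul, ← hR]
  conv_lhs => rw [← h2, h1]
  simp [Matrix.mul_assoc]

lemma rank_of_inj {k m : ℕ} (A : Matrix (Fin m) (Fin k) ℂ)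
    (h : ∀ c : Fin k → ℂ, A *ᵥ c = 0 → c = 0) : A.rank = k := by
  have h1 : Function.Injective A.mulVecLin := by
    rw [← LinearMap.ker_eq_bot, LinearMap.ker_eq_bot']
    exact h
  rw [Matrix.rank, LinearMap.finrank_range_of_inj h1]
  simp

lemma reduce {m k : ℕ} (P : Matrix (Fin m) (Fin m) ℂ[X]) :
    ∀ (s : ℕ) (M : Matrix (Fin m) (Fin k) ℂ[X]) (N : Matrix (Fin k) (Fin m) ℂ[X])
      (Q : Matrix (Fin k) (Fin k) ℂ[X]) (e : Fin k → ℕ), ∑ i, e i = s → N * M = 1 →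
      P = M * Q * Mᵀ → (∀ x i, bd (M x i) (e i)) →
      ∃ (M : Matrix (Fin m) (Fin k) ℂ[X]) (N : Matrix (Fin k) (Fin m) ℂ[X])
      (Q : Matrix (Fin k) (Fin k) ℂ[X]) (e : Fin k → ℕ), N * M = 1 ∧
      P = M * Q * Mᵀ ∧ (∀ x i, bd (M x i) (e i)) ∧
      (Matrix.of fun x i => zc (M x i) (e i)).rank = k := by
  intro s
  induction s using Nat.strong_induction_on with
  | _ s ih =>
  intro M N Q e hs hNM hP hM
  by_cases hr : (Matrix.of fun x i => zc (M x i) (e i)).rank = k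
  · exact ⟨M, N, Q, e, hNM, hP, hM, hr⟩
  obtain ⟨c, hc, hc0⟩ : ∃ c, (Matrix.of fun x i => zc (M x i) (e i)) *ᵥ c = 0 ∧ c ≠ 0 := by
    by_contra! hcon
    exact hr (rank_of_inj _ hcon)
  obtain ⟨k0, hk0, hmax⟩ : ∃ k0, c k0 ≠ 0 ∧ ∀ j, c j ≠ 0 → e j ≤ e k0 := by
    obtain ⟨j0, hj0⟩ := Function.ne_iff.1 hc0
    obtain ⟨k0, h1, h2⟩ := Finset.exists_max_image (Finset.univ.filter fun j => c j ≠ 0) e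
      ⟨j0, by simpa using hj0⟩
    exact ⟨k0, by simpa using h1, fun j hj => h2 j (by simpa using hj)⟩
  let x : Fin k → ℂ[X] := fun j => C (c j / c k0) * X ^ (e k0 - e j)
  have hxk : x k0 = 1 := by simp [x, hk0]
  let Z : Matrix (Fin k) (Fin k) ℂ[X] := Matrix.of fun i j => if j = k0 ∧ i ≠ k0 then x i else 0
  have hZZ : Z * Z = 0 := by
    ext1 i j
    rw [Matrix.mul_apply]
    refine Finset.sum_eq_zero fun l _ => ?_
    simp only [Z, Matrix.of_apply]
    by_cases h : l = k0 <;> simp [h]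
  have hE : (1 + Z) * (1 - Z) = 1 := by
    have : (1 + Z) * (1 - Z) = 1 - Z * Z := by noncomm_ring
    rw [this, hZZ, sub_zero]
  have hE' : (1 - Z) * (1 + Z) = 1 := by
    have : (1 - Z) * (1 + Z) = 1 - Z * Z := by noncomm_ring
    rw [this, hZZ, sub_zero]
  have hN' : ((1 - Z) * N) * (M * (1 + Z)) = 1 := by
    calc ((1 - Z) * N) * (M * (1 + Z)) = (1 - Z) * (N * M) * (1 + Z) := by
          simp only [Matrix.mul_assoc]
      _ = 1 := by rw [hNM, Matrix.mul_one, hE']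
  have hP' : P = (M * (1 + Z)) * ((1 - Z) * Q * (1 - Z)ᵀ) * (M * (1 + Z))ᵀ := by
    rw [hP]
    calc M * Q * Mᵀ = M * ((1 + Z) * (1 - Z)) * Q * ((1 + Z) * (1 - Z))ᵀ * Mᵀ := by
          rw [hE]; simp
      _ = _ := by simp only [Matrix.transpose_mul, Matrix.mul_assoc]
  have hcol : ∀ y j, j ≠ k0 → (M * (1 + Z) : Matrix (Fin m) (Fin k) ℂ[X]) y j = M y j := by
    intro y j hj
    rw [Matrix.mul_add, Matrix.mul_one, Matrix.add_apply, Matrix.mul_apply]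
    simp [Z, hj]
  have hcol0 : ∀ y, (M * (1 + Z) : Matrix (Fin m) (Fin k) ℂ[X]) y k0 = ∑ i, M y i * x i := by
    intro y
    rw [Matrix.mul_add, Matrix.mul_one, Matrix.add_apply, Matrix.mul_apply,
      ← Finset.add_sum_erase _ _ (Finset.mem_univ k0), ← Finset.add_sum_erase _ (fun i => M y i * x i) (Finset.mem_univ k0), hxk]
    simp only [Z, Matrix.of_apply]
    simp only [true_and, ne_eq, not_true_eq_false, if_false, mul_zero, zero_add, mul_one]
    congr 1
    refine Finset.sum_congr rfl fun i hi => ?_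
    rw [if_pos (Finset.ne_of_mem_erase hi)]
  have hx : ∀ j, bd (x j) ((e k0 : ℤ) - e j) ∧ zc (x j) ((e k0 : ℤ) - e j) = c j / c k0 := by
    intro j
    by_cases hj : c j = 0
    · have : x j = 0 := by simp [x, hj]
      rw [this, hj]; exact ⟨bd_zero _, by simp [zc_zero]⟩
    · have h1 := hmax j hj
      have h2 : ((e k0 : ℤ) - e j) = ((e k0 - e j : ℕ) : ℤ) := by omega
      rw [h2]
      refine ⟨bd_nat.2 (Polynomial.natDegree_C_mul_X_pow_le _ _), ?_⟩
      rw [zc_nat]; simp [x]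
  have hb0 : ∀ y, bd ((M * (1 + Z) : Matrix (Fin m) (Fin k) ℂ[X]) y k0) ((e k0 : ℤ) - 1) := by
    intro y
    apply bd_pred
    · rw [hcol0]
      refine bd_sum fun i _ => bd_mono (bd_mul (hM y i) (hx i).1) (by omega)
    · rw [hcol0, zc_sum]
      have h1 := congrFun hc y
      simp only [Matrix.mulVec, dotProduct, Matrix.of_apply, Pi.zero_apply] at h1
      calc _ = ∑ i, zc (M y i) (e i) * (c i / c k0) := by
            refine Finset.sum_congr rfl fun i _ => ?_
            rw [← (hx i).2, ← zc_mul (hM y i) (hx i).1]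
            congr 1; ring
        _ = (∑ i, zc (M y i) (e i) * c i) / c k0 := by
            rw [Finset.sum_div]; exact Finset.sum_congr rfl fun i _ => by ring
        _ = 0 := by rw [h1, zero_div]
  have hepos : e k0 ≠ 0 := by
    intro h0
    have h1 := congrFun (congrFun hN' k0) k0
    rw [Matrix.mul_apply, Matrix.one_apply_eq, Finset.sum_eq_zero] at h1
    · exact zero_ne_one h1
    · intro y _
      rw [bd_neg_eq_zero (hb0 y) (by omega), mul_zero]
  refine ih (∑ i, Function.update e k0 (e k0 - 1) i) ?_ (M * (1 + Z)) ((1 - Z) * N)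
    ((1 - Z) * Q * (1 - Z)ᵀ) (Function.update e k0 (e k0 - 1)) rfl hN' hP' ?_
  · rw [← hs]
    refine Finset.sum_lt_sum ?_ ⟨k0, Finset.mem_univ _, by simp; omega⟩
    intro i _
    by_cases h : i = k0
    · subst h; simp
    · simp [h]
  · intro y i
    by_cases h : i = k0
    · subst h
      rw [Function.update_self]
      exact bd_mono (hb0 y) (by omega)
    · rw [Function.update_of_ne h, hcol y i h]
      exact hM y i

lemma cancel_tri {m k : ℕ} {R : Type*} [CommRing R] (A : Matrix (Fin m) (Fin k) R)
    (B : Matrix (Fin k) (Fin m) R) (h : B * A = 1) (Q : Matrix (Fin k) (Fin k) R) :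
    B * (A * Q * Aᵀ) * Bᵀ = Q := by
  calc B * (A * Q * Aᵀ) * Bᵀ = (B * A) * Q * (B * A)ᵀ := by
        rw [Matrix.transpose_mul]; simp only [Matrix.mul_assoc]
    _ = Q := by rw [h]; simp

lemma predict {m k : ℕ} (M : Matrix (Fin m) (Fin k) ℂ[X]) (Q : Matrix (Fin k) (Fin k) ℂ[X])
    (e : Fin k → ℕ) (d : ℕ) (hM : ∀ x i, bd (M x i) (e i))
    (hr : (Matrix.of fun x i => zc (M x i) (e i)).rank = k)
    (hP : ∀ x y, bd ((M * Q * Mᵀ) x y) d) : ∀ i j, bd (Q i j) ((d : ℤ) - e i - e j) := by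
  obtain ⟨B, hB⟩ := exists_leftInv _ hr
  have key : ∀ n : ℕ, (∀ i j, bd (Q i j) ((d : ℤ) + n - e i - e j)) →
      ∀ i j, bd (Q i j) ((d : ℤ) - e i - e j) := by
    intro n
    induction n with
    | zero => intro h; simpa using h
    | succ n ih =>
      intro h
      apply ih
      have h1 := (zc_tri M Q (fun i => (e i : ℤ)) ((d : ℤ) + (n + 1 : ℕ)) hM h).2
      have h2 : (Matrix.of fun x y => zc ((M * Q * Mᵀ) x y) ((d : ℤ) + (n + 1 : ℕ))) = 0 := by
        ext x y
        have := hP x y (d + (n + 1)) (by push_cast; omega)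
        rw [Matrix.of_apply, ← Nat.cast_add, zc_nat, this]; rfl
      rw [h2] at h1
      have h3 := cancel_tri _ B hB (Matrix.of fun i j => zc (Q i j) ((d : ℤ) + (n + 1 : ℕ) - e i - e j))
      rw [← h1] at h3
      simp only [Matrix.mul_zero, Matrix.zero_mul] at h3
      intro i j
      have h4 := congrFun (congrFun h3 i) j
      have e1 : (d : ℤ) + (n + 1 : ℕ) - e i - e j = ((d : ℤ) + n - e i - e j) + 1 := by
        push_cast; ring
      have h5 := h i j
      rw [e1] at h5
      apply bd_pred h5
      rw [← e1]; exact h4.symm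
  apply key (∑ i, ∑ j, ((Q i j).natDegree + e i + e j))
  intro i j
  have h1 : (Q i j).natDegree + e i + e j ≤ ∑ j, ((Q i j).natDegree + e i + e j) :=
    Finset.single_le_sum (f := fun j => (Q i j).natDegree + e i + e j) (fun _ _ => Nat.zero_le _)
      (Finset.mem_univ j)
  have h2 : ∑ j, ((Q i j).natDegree + e i + e j) ≤ ∑ i, ∑ j, ((Q i j).natDegree + e i + e j) :=
    Finset.single_le_sum (f := fun i => ∑ j, ((Q i j).natDegree + e i + e j))
      (fun _ _ => Nat.zero_le _) (Finset.mem_univ i)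
  exact bd_mono (bd_nat.2 le_rfl) (by omega)

lemma predict_inv {k : ℕ} (Q S : Matrix (Fin k) (Fin k) ℂ[X]) (hQS : Q * S = 1)
    (e : Fin k → ℕ) (d : ℕ) (hQ : ∀ i j, bd (Q i j) ((d : ℤ) - e i - e j))
    (hr : (Matrix.of fun i j => zc (Q i j) ((d : ℤ) - e i - e j)).rank = k) :
    ∀ i j, bd (S i j) ((e i : ℤ) + e j - d) := by
  obtain ⟨B, hB⟩ := exists_leftInv _ hr
  have key : ∀ n : ℕ, (∀ i j, bd (S i j) ((e i : ℤ) + e j - d + n)) →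
      ∀ i j, bd (S i j) ((e i : ℤ) + e j - d) := by
    intro n
    induction n with
    | zero => intro h; simpa using h
    | succ n ih =>
      intro h
      apply ih
      have h1 : (Matrix.of fun i j => zc (Q i j) ((d : ℤ) - e i - e j)) *
          (Matrix.of fun i j => zc (S i j) ((e i : ℤ) + e j - d + (n + 1 : ℕ))) = 0 := by
        ext i j
        rw [Matrix.mul_apply]
        have h2 : zc ((Q * S) i j) ((e j : ℤ) - e i + (n + 1 : ℕ)) = 0 := by
          rw [hQS]
          by_cases hij : i = j
          · subst hij
            rw [Matrix.one_apply_eq, sub_self, zero_add, zc_nat, Polynomial.coeff_one, if_neg]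
            omega
          · rw [Matrix.one_apply_ne hij, zc_zero]
        rw [Matrix.mul_apply, zc_sum] at h2
        rw [Matrix.zero_apply, ← h2]
        refine Finset.sum_congr rfl fun l _ => ?_
        rw [Matrix.of_apply, Matrix.of_apply, ← zc_mul (hQ i l) (h l j)]
        congr 1; ring
      have h3 : (Matrix.of fun i j => zc (S i j) ((e i : ℤ) + e j - d + (n + 1 : ℕ))) = 0 := by
        rw [← Matrix.one_mul (Matrix.of _), ← hB, Matrix.mul_assoc, h1, Matrix.mul_zero]
      intro i j
      have h4 := congrFun (congrFun h3 i) j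
      have e1 : (e i : ℤ) + e j - d + (n + 1 : ℕ) = ((e i : ℤ) + e j - d + n) + 1 := by
        push_cast; ring
      have h5 := h i j
      rw [e1] at h5
      apply bd_pred h5
      rw [← e1]; exact h4
  apply key (d + ∑ i, ∑ j, (S i j).natDegree)
  intro i j
  have h1 : (S i j).natDegree ≤ ∑ j, (S i j).natDegree :=
    Finset.single_le_sum (f := fun j => (S i j).natDegree) (fun _ _ => Nat.zero_le _)
      (Finset.mem_univ j)
  have h2 : ∑ j, (S i j).natDegree ≤ ∑ i, ∑ j, (S i j).natDegree :=
    Finset.single_le_sum (f := fun i => ∑ j, (S i j).natDegree)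
      (fun _ _ => Nat.zero_le _) (Finset.mem_univ i)
  exact bd_mono (bd_nat.2 le_rfl) (by rw [Nat.cast_add]; omega)

lemma finish (m r d : ℕ) (P : Matrix (Fin m) (Fin m) ℂ[X])
    (hev : ∀ α : ℂ, (P.map (Polynomial.eval α)).rank = 2 * r)
    (hd : (Matrix.of fun a b => (P a b).coeff d).rank = 2 * r)
    (L : Matrix (Fin m) (Fin (2 * r)) ℂ[X]) (f : Fin (2 * r) → ℤ)
    (hL : ∀ x i, bd (L x i) (f i)) (hf : ∀ i, f i + f i.rev = d)
    (hanti : ∀ i j, i ≤ j → f j ≤ f i) (hP : P = L * Jmat r * Lᵀ) :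
    ∃ L : Matrix (Fin m) (Fin (2 * r)) (Polynomial ℂ),
      IsMinimalBasis L ∧
      (∀ i j : Fin (2 * r), i ≤ j → colDegree L j ≤ colDegree L i) ∧
      (∀ i : Fin (2 * r), colDegree L i + colDegree L i.rev = d) ∧
      P = L * Jmat r * Lᵀ := by
  have hJ := Jmat_bd r d f hf
  have t2 := (zc_tri L (Jmat r) f d hL hJ.1).2
  simp only [← hP, zc_nat] at t2
  rw [t2, hJ.2, rank_tri _ _ (Jmat_map_rank _ _)] at hd
  have hcd : ∀ j, (colDegree L j : ℤ) = f j := by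
    intro j
    obtain ⟨B, hB⟩ := exists_leftInv _ hd
    obtain ⟨x, hx⟩ : ∃ x, zc (L x j) (f j) ≠ 0 := by
      by_contra! hcon
      have h1 := congrFun (congrFun hB j) j
      rw [Matrix.mul_apply, Matrix.one_apply_eq, Finset.sum_eq_zero] at h1
      · exact zero_ne_one h1
      · intro x _
        rw [Matrix.of_apply, hcon x, mul_zero]
    have h0 : 0 ≤ f j := by
      by_contra hneg
      exact hx (by simp [zc, hneg])
    obtain ⟨n, hn⟩ := Int.eq_ofNat_of_zero_le h0
    have hb : ∀ x, (L x j).natDegree ≤ n := fun x => bd_nat.1 (by rw [← hn]; exact hL x j)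
    rw [hn, zc_nat] at hx
    rw [hn]
    congr 1
    apply le_antisymm
    · exact Finset.sup_le fun x _ => hb x
    · exact (Polynomial.le_natDegree_of_ne_zero hx).trans
        (Finset.le_sup (f := fun x => (L x j).natDegree) (Finset.mem_univ x))
  refine ⟨L, ⟨?_, ?_⟩, ?_, ?_, hP⟩
  · intro α
    have h := hev α
    rw [hP, map_eval, map_tri, rank_tri _ _ (Jmat_map_rank _ _), ← map_eval] at h
    exact h
  · have : highCoeff L = Matrix.of fun x i => zc (L x i) (f i) := by
      ext x i
      rw [highCoeff, Matrix.of_apply, Matrix.of_apply, ← hcd, zc_nat]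
    rw [this]; exact hd
  · intro i j hij
    have := hanti i j hij
    rw [← hcd, ← hcd] at this
    exact_mod_cast this
  · intro i
    have := hf i
    rw [← hcd, ← hcd] at this
    exact_mod_cast this

lemma arrange (m r d : ℕ) (P : Matrix (Fin m) (Fin m) ℂ[X])
    (u w : Fin r → Fin m → ℂ[X]) (f g : Fin r → ℤ) (hfg : ∀ k, f k + g k = d)
    (hu : ∀ k x, bd (u k x) (f k)) (hw : ∀ k x, bd (w k x) (g k))
    (hP : ∀ x y, P x y = ∑ k, (u k x * w k y - w k x * u k y)) :
    ∃ (L : Matrix (Fin m) (Fin (2 * r)) ℂ[X]) (f : Fin (2 * r) → ℤ),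
      (∀ x i, bd (L x i) (f i)) ∧ (∀ i, f i + f i.rev = d) ∧
      (∀ i j, i ≤ j → f j ≤ f i) ∧ P = L * Jmat r * Lᵀ := by
  wlog hle : ∀ k, g k ≤ f k generalizing u w f g with H
  · refine H (fun k => if g k ≤ f k then u k else w k)
      (fun k => if g k ≤ f k then w k else fun x => - u k x)
      (fun k => if g k ≤ f k then f k else g k) (fun k => if g k ≤ f k then g k else f k)
      ?_ ?_ ?_ ?_ ?_
    · intro k; have := hfg k; split_ifs <;> omega
    · intro k x; split_ifs
      · exact hu k x
      · exact hw k x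
    · intro k x; split_ifs
      · exact hw k x
      · exact bd_neg (hu k x)
    · intro x y
      rw [hP]
      refine Finset.sum_congr rfl fun k _ => ?_
      split_ifs
      · rfl
      · ring
    · intro k; split_ifs <;> omega
  let σ := Tuple.sort g
  have hσ : Monotone (g ∘ σ) := Tuple.monotone_sort g
  have hr : ∀ j : Fin (2 * r), ¬ (j : ℕ) < r → (j.rev : ℕ) < r := by
    intro j hj; have := j.2; rw [Fin.val_rev]; omega
  let L : Matrix (Fin m) (Fin (2 * r)) ℂ[X] := Matrix.of fun x j =>
    if h : (j : ℕ) < r then u (σ ⟨j, h⟩) x else w (σ ⟨j.rev, hr j h⟩) x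
  let F : Fin (2 * r) → ℤ := fun j =>
    if h : (j : ℕ) < r then f (σ ⟨j, h⟩) else g (σ ⟨j.rev, hr j h⟩)
  refine ⟨L, F, ?_, ?_, ?_, ?_⟩
  · intro x i
    simp only [L, F, Matrix.of_apply]
    split_ifs
    · exact hu _ _
    · exact hw _ _
  · intro i
    have hi := i.2
    by_cases h : (i : ℕ) < r
    · have h' : ¬ (i.rev : ℕ) < r := by rw [Fin.val_rev]; omega
      simp only [F, dif_pos h, dif_neg h', Fin.rev_rev]
      exact hfg _
    · simp only [F, dif_neg h, dif_pos (hr i h)]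
      rw [add_comm]
      exact hfg _
  · intro i j hij
    have hij' : (i : ℕ) ≤ j := hij
    by_cases hj : (j : ℕ) < r
    · have hi : (i : ℕ) < r := by omega
      simp only [F, dif_pos hj, dif_pos hi]
      have h1 := hσ (show (⟨i, hi⟩ : Fin r) ≤ ⟨j, hj⟩ from hij')
      have h2 := hfg (σ ⟨i, hi⟩)
      have h3 := hfg (σ ⟨j, hj⟩)
      simp only [Function.comp] at h1
      omega
    · by_cases hi : (i : ℕ) < r
      · simp only [F, dif_neg hj, dif_pos hi]
        have h1 := hfg (σ ⟨i, hi⟩)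
        have h2 := hfg (σ ⟨j.rev, hr j hj⟩)
        have h3 := hle (σ ⟨i, hi⟩)
        have h4 := hle (σ ⟨j.rev, hr j hj⟩)
        omega
      · simp only [F, dif_neg hj, dif_neg hi]
        exact hσ (show (⟨j.rev, hr j hj⟩ : Fin r) ≤ ⟨i.rev, hr i hi⟩ from by
          rw [Fin.mk_le_mk, Fin.val_rev, Fin.val_rev]; omega)
  · ext1 x y
    rw [tri_Jmat, hP, ← Equiv.sum_comp σ]
    refine Finset.sum_congr rfl fun k _ => ?_
    have hk := k.2
    have e1 : ∀ x, L x (Fin.castLE (by omega) k) = u (σ k) x := by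
      intro x
      simp [L]
    have e2 : ∀ x, L x (Fin.castLE (by omega) k).rev = w (σ k) x := by
      intro x
      have : ¬ (((Fin.castLE (show r ≤ 2 * r by omega) k).rev : Fin (2 * r)) : ℕ) < r := by
        rw [Fin.val_rev]; simp; omega
      simp only [L, Matrix.of_apply, dif_neg this]
      simp
    rw [e1, e1, e2, e2]

lemma det_ne_of_rank {k : ℕ} (A : Matrix (Fin k) (Fin k) ℂ) (h : A.rank = k) : A.det ≠ 0 := by
  obtain ⟨B, hB⟩ := exists_leftInv A h
  intro h0
  have := congrArg Matrix.det hB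
  rw [Matrix.det_mul, h0] at this
  simp at this

lemma forward (m r d : ℕ) (P : Matrix (Fin m) (Fin m) ℂ[X]) (hskew : Pᵀ = -P)
    (hdeg : ∀ i j, (P i j).natDegree ≤ d) (hn : normalRank P = 2 * r)
    (hev : ∀ α : ℂ, (P.map (Polynomial.eval α)).rank = 2 * r)
    (hd : (Matrix.of fun a b => (P a b).coeff d).rank = 2 * r) :
    ∃ L : Matrix (Fin m) (Fin (2 * r)) (Polynomial ℂ),
      IsMinimalBasis L ∧
      (∀ i j : Fin (2 * r), i ≤ j → colDegree L j ≤ colDegree L i) ∧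
      (∀ i : Fin (2 * r), colDegree L i + colDegree L i.rev = d) ∧
      P = L * Jmat r * Lᵀ := by
  obtain ⟨M0, N0, Q0, hNM0, hP0⟩ := exists_factor P hskew hn
  obtain ⟨M, N, Q, e, hNM, hP, hM, hMr⟩ := reduce P _ M0 N0 Q0 (colDegree M0) rfl hNM0 hP0
    (fun x i => bd_nat.2 (Finset.le_sup (f := fun x => (M0 x i).natDegree) (Finset.mem_univ x)))
  have hQ := predict M Q e d hM hMr (by rw [← hP]; exact fun x y => bd_nat.2 (hdeg x y))
  have hQskew : ∀ i j, Q j i = - Q i j := by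
    have h1 := cancel_tri M N hNM Q
    rw [← hP] at h1
    have h2 : Qᵀ = -Q := by
      rw [← h1, Matrix.transpose_mul, Matrix.transpose_mul, hskew, Matrix.transpose_transpose]
      simp [Matrix.mul_assoc]
    intro i j
    exact congrFun (congrFun h2 i) j
  have hQd : (Matrix.of fun i j => zc (Q i j) ((d : ℤ) - e i - e j)).rank = 2 * r := by
    have h1 := (zc_tri M Q (fun i => (e i : ℤ)) d hM hQ).2
    simp only [← hP, zc_nat] at h1
    rw [h1] at hd
    exact rank_mid _ _ hd
  have hdet : IsUnit Q.det := by
    have h1 : ∀ α, Q.det.eval α ≠ 0 := by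
      intro α
      have h := hev α
      rw [hP, map_eval, map_tri] at h
      have h2 := det_ne_of_rank _ (rank_mid _ _ h)
      rw [← RingHom.mapMatrix_apply, ← RingHom.map_det] at h2
      exact h2
    rw [Polynomial.isUnit_iff_degree_eq_zero]
    by_contra hne
    obtain ⟨α, hα⟩ := IsAlgClosed.exists_root Q.det hne
    exact h1 α hα
  have hQS : Q * Q⁻¹ = 1 := Matrix.mul_nonsing_inv _ hdet
  have hS := predict_inv Q Q⁻¹ hQS e d hQ hQd
  obtain ⟨u, w, f, g, hfg, hu, hw, huw⟩ := peel (d : ℤ) (fun i => (e i : ℤ)) (fun i x => M x i)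
    (fun i x => hM x i) (fun i j => Q⁻¹ i j) hS r Finset.univ (by simp) (fun i j => Q i j) hQskew hQ
    (by
      intro i _ k _
      rw [← Matrix.mul_apply, hQS, Matrix.one_apply])
  have hPe : ∀ x y, P x y = ∑ k, (u k x * w k y - w k x * u k y) := by
    intro x y
    rw [← huw x y, hP, Matrix.mul_apply, Finset.sum_comm]
    refine Finset.sum_congr rfl fun j _ => ?_
    rw [Matrix.mul_apply, Finset.sum_mul]
    refine Finset.sum_congr rfl fun i _ => ?_
    rw [Matrix.transpose_apply]; ring
  obtain ⟨L, F, h1, h2, h3, h4⟩ := arrange m r d P u w f g hfg hu hw hPe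
  exact finish m r d P hev hd L F h1 h2 h3 h4

/-- Characterization: `P` is skew-symmetric of grade `d`, with normal rank exactly `2r`,
degree exactly `d`, and no (finite or infinite) eigenvalues, if and only if
`P = L J₂ᵣ Lᵀ` for a minimal basis `L` with nonincreasing column degrees satisfying
`deg(Lᵢ) + deg(L₂ᵣ₋ᵢ₊₁) = d`. -/
theorem skew_symmetric_no_eigenvalues_iff_factorization (m r d : ℕ)
    (hd : 1 ≤ d) (h2 : 2 ≤ 2 * r) (hrm : 2 * r ≤ m - 1)
    (P : Matrix (Fin m) (Fin m) (Polynomial ℂ)) :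
    (Pᵀ = -P ∧ (∀ i j, (P i j).natDegree ≤ d) ∧
     normalRank P = 2 * r ∧
     (Matrix.of fun a b => (P a b).coeff d) ≠ (0 : Matrix (Fin m) (Fin m) ℂ) ∧
     (∀ α : ℂ, (P.map (Polynomial.eval α)).rank = 2 * r) ∧
     (Matrix.of fun a b => (P a b).coeff d).rank = 2 * r) ↔
    (∃ L : Matrix (Fin m) (Fin (2 * r)) (Polynomial ℂ),
      IsMinimalBasis L ∧
      (∀ i j : Fin (2 * r), i ≤ j → colDegree L j ≤ colDegree L i) ∧
      (∀ i : Fin (2 * r), colDegree L i + colDegree L i.rev = d) ∧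
      P = L * Jmat r * Lᵀ) := by
  constructor
  · rintro ⟨h1, h3, h4, _, h5, h6⟩
    exact forward m r d P h1 h3 h4 h5 h6
  · rintro ⟨L, h1, _, h3, rfl⟩
    exact backward m r d h2 L h1 h3
end
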